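/- Let m ≥ 1 be an integer and let u be a classical m-equivariant solution of CSS on I = (−1,0) such that ‖u(t,·)‖_{L²}² = 8π(m+1) for all t ∈ (−1,0) and ‖∂_r u(t,·)‖_{L²} → ∞ as t ↗ 0. Then for every R > 0 and every smooth φ : [0,∞) → [0,1] with φ = 1 on [0,1] and φ = 0 on [2,∞), the localized virial functional vanishes at the blowup time: lim_{t↗0} 2π·∫₀^∞ φ(r/R)·Im( conj(u(t,r))·r·∂_r u(t,r) )·r dr = 0. -/

import Mathlib

open MeasureTheory Set Filter

noncomputable section

/-- The Jackiw–Pi vortex `Q(r) = √8 (m+1) r^m / (1 + r^(2m+2))`. -/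
def Q (m : ℕ) (r : ℝ) : ℝ :=
  Real.sqrt 8 * (m + 1) * r ^ m / (1 + r ^ (2 * m + 2))

/-- `A_θ[u](r) = -(1/2) ∫₀^r |u(r')|² r' dr'`. -/
def Atheta (u : ℝ → ℂ) (r : ℝ) : ℝ :=
  -(1 / 2) * ∫ s in (0:ℝ)..r, ‖u s‖ ^ 2 * s

/-- Bilinear version `A_θ[f,g](r) = -(1/2) ∫₀^r Re(conj f g) r' dr'`. -/
def Atheta2 (f g : ℝ → ℂ) (r : ℝ) : ℝ :=
  -(1 / 2) * ∫ s in (0:ℝ)..r, ((starRingEnd ℂ) (f s) * g s).re * s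

/-- `A_t[u](r) = -∫_r^∞ (m + A_θ[u](r')) |u(r')|² / r' dr'`. -/
def At (m : ℕ) (u : ℝ → ℂ) (r : ℝ) : ℝ :=
  -∫ s in Set.Ioi r, ((m : ℝ) + Atheta u s) * ‖u s‖ ^ 2 / s

/-- Squared (2D radial) `L²` norm: `‖u‖² = 2π ∫₀^∞ |u(r)|² r dr`. -/
def L2sq (u : ℝ → ℂ) : ℝ :=
  2 * Real.pi * ∫ r in Set.Ioi (0:ℝ), ‖u r‖ ^ 2 * r

/-- Squared equivariant `Ḣ¹_m` norm. -/
def H1msq (m : ℕ) (u : ℝ → ℂ) : ℝ :=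
  2 * Real.pi * ∫ r in Set.Ioi (0:ℝ), (‖deriv u r‖ ^ 2 + (m : ℝ) ^ 2 * ‖u r‖ ^ 2 / r ^ 2) * r

/-- The energy functional. -/
def Energy (m : ℕ) (u : ℝ → ℂ) : ℝ :=
  2 * Real.pi * ∫ r in Set.Ioi (0:ℝ),
    ((1 / 2) * ‖deriv u r‖ ^ 2
      + (1 / 2) * (((m : ℝ) + Atheta u r) / r) ^ 2 * ‖u r‖ ^ 2
      - (1 / 4) * ‖u r‖ ^ 4) * r

/-- The Chern–Simons–Schrödinger equation at the point `(t, r)`: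
`i ∂_t u - A_t[u] u + ∂_r² u + (1/r) ∂_r u - ((m + A_θ[u])/r)² u + |u|² u = 0`. -/
def CSSeq (m : ℕ) (u : ℝ → ℝ → ℂ) (t r : ℝ) : Prop :=
  Complex.I * deriv (fun s => u s r) t
    - (At m (u t) r : ℂ) * u t r
    + deriv (deriv (u t)) r
    + (1 / (r : ℂ)) * deriv (u t) r
    - ((((m : ℝ) + Atheta (u t) r) / r : ℝ) : ℂ) ^ 2 * u t r
    + ((‖u t r‖ : ℝ) : ℂ) ^ 2 * u t r = 0

/-- A classical `m`-equivariant solution of CSS on the open interval `I`. -/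
structure IsCSS (m : ℕ) (I : Set ℝ) (u : ℝ → ℝ → ℂ) : Prop where
  smooth : ContDiffOn ℝ (⊤ : ℕ∞) (fun p : ℝ × ℝ => u p.1 p.2) (I ×ˢ Set.Ioi (0:ℝ))
  integrable : ∀ t ∈ I, IntegrableOn (fun r => ‖u t r‖ ^ 2 * r) (Set.Ioi (0:ℝ))
  equivariant : ∃ U : ℝ → ℝ × ℝ → ℂ,
    ContDiffOn ℝ (⊤ : ℕ∞) (fun p : ℝ × (ℝ × ℝ) => U p.1 p.2) (I ×ˢ (Set.univ : Set (ℝ × ℝ))) ∧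
    ∀ t ∈ I, ∀ x : ℝ × ℝ, x ≠ 0 →
      U t x = u t (Real.sqrt (x.1 ^ 2 + x.2 ^ 2)) *
        (((x.1 : ℂ) + (x.2 : ℂ) * Complex.I) / ((Real.sqrt (x.1 ^ 2 + x.2 ^ 2) : ℝ) : ℂ)) ^ m
  bounded : ∀ J : Set ℝ, J ⊆ I → IsCompact J → ∃ C : ℝ, ∀ t ∈ J,
    Real.sqrt (L2sq (u t)) + Real.sqrt (H1msq m (u t)) ≤ C
  eq : ∀ t ∈ I, ∀ r : ℝ, 0 < r → CSSeq m u t r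

/-- Tightness: uniformly small mass near spatial infinity. -/
def Tight (I : Set ℝ) (u : ℝ → ℝ → ℂ) : Prop :=
  ∀ η : ℝ, 0 < η → ∃ R : ℝ, ∀ t ∈ I,
    2 * Real.pi * ∫ r in Set.Ioi R, ‖u t r‖ ^ 2 * r < η

/-- The real inner product `(f,g)_r = Re (2π ∫₀^∞ f conj(g) r dr)`. -/
def iprod (f g : ℝ → ℂ) : ℝ :=
  2 * Real.pi * (∫ r in Set.Ioi (0:ℝ), f r * (starRingEnd ℂ) (g r) * (r : ℂ)).re

/-- `ΛQ = r Q' + Q`. -/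
def LamQ (m : ℕ) (r : ℝ) : ℝ := r * deriv (Q m) r + Q m r

/-- The linearized Bogomol'nyi operator `L_Q`. -/
def LQ (m : ℕ) (f : ℝ → ℂ) (r : ℝ) : ℂ :=
  deriv f r - ((((m : ℝ) + Atheta (fun s => (Q m s : ℂ)) r) / r : ℝ) : ℂ) * f r
    - ((2 * Atheta2 (fun s => (Q m s : ℂ)) f r / r : ℝ) : ℂ) * (Q m r : ℂ)

end

/-!
Since `u` has the mass of the Jackiw–Pi vortex, `w = m + A_θ` decreases from `m` to `-(m + 2)`, and
the energy is half the squared norm of the Bogomol'nyi variable `v = ∂_r u - (w / r) u`. The latter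
solves a linear Schrödinger equation `i ∂_t v + ∂_r² v + (1 / r) ∂_r v - ((m + 1)² / r²) v = V v`
with a real potential `V`, bounded on compact time intervals, so that `‖v‖` is bounded up to the
blowup time; this is proved in the variable `x = log r` by averaging in time and cutting off in
space.

The identity `r² |u|² / 2 + (1 + w)² - (1 + m)² = ∫₀^r s² Re (conj u v) ds` is then `O(r)`. If the
mass beyond some radius `ρ` exceeds a fixed `η > 0`, this forces `w ≥ 1/2` on an interval `(0, r₁)`
depending only on `η`, `ρ` and `‖v‖`. There `∂_r |u|² = 2 Re (conj u v) + 2 w |u|² / r` controls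
`∫ |u|² / r`, and hence the gradient. Blowup of the gradient therefore drives the mass beyond any
radius to zero, and with it the second moment over `r ≤ R`. Finally `Im (conj u r ∂_r u) =
r Im (conj u v)`, so by Cauchy–Schwarz the virial functional is bounded by the product of `‖v‖` and
the square root of that second moment.
-/

noncomputable section

namespace CSS

open scoped ENNReal NNReal Topology

/-! ### Integrals of continuous families -/

lemma hasDerivAt_intervalIntegral_of_continuousOn {E : Type*} [NormedAddCommGroup E]
    [NormedSpace ℝ E] {I : Set ℝ} {F F' : ℝ → ℝ → E} (hI : IsOpen I)
    (hF : ContinuousOn (Function.uncurry F) (I ×ˢ univ))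
    (hF' : ContinuousOn (Function.uncurry F') (I ×ˢ univ))
    (hderiv : ∀ x ∈ I, ∀ s, HasDerivAt (fun y => F y s) (F' x s) x) (a b : ℝ) {x : ℝ} (hx : x ∈ I) :
    HasDerivAt (fun y => ∫ s in a..b, F y s) (∫ s in a..b, F' x s) x := by
  obtain ⟨δ, hδ, hball⟩ := Metric.nhds_basis_closedBall.mem_iff.1 (hI.mem_nhds hx)
  have hcompact : IsCompact (Metric.closedBall x δ ×ˢ uIcc a b) :=
    (isCompact_closedBall x δ).prod isCompact_uIcc
  obtain ⟨C, hC⟩ := hcompact.exists_bound_of_continuousOn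
    (hF'.mono (prod_mono hball (subset_univ _)))
  have hsection {G : ℝ → ℝ → E} (hG : ContinuousOn (Function.uncurry G) (I ×ˢ univ)) {y : ℝ}
      (hy : y ∈ I) : Continuous (G y) :=
    hG.comp_continuous (f := fun s => (y, s)) (by fun_prop) fun s => ⟨hy, mem_univ s⟩
  refine (intervalIntegral.hasDerivAt_integral_of_dominated_loc_of_deriv_le
    (bound := fun _ => C) (Metric.closedBall_mem_nhds x hδ) ?_
    ((hsection hF hx).intervalIntegrable _ _) (hsection hF' hx).aestronglyMeasurable
    (Eventually.of_forall fun s hs y hy => hC (y, s) ⟨hy, uIoc_subset_uIcc hs⟩) (by simp)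
    (Eventually.of_forall fun s _ y hy => hderiv y (hball hy) s)).2
  filter_upwards [hI.mem_nhds hx] with y hy using (hsection hF hy).aestronglyMeasurable

lemma hasDerivAt_intervalIntegral_of_continuous {E : Type*} [NormedAddCommGroup E]
    [NormedSpace ℝ E] {F F' : ℝ → ℝ → E} (hF : Continuous (Function.uncurry F))
    (hF' : Continuous (Function.uncurry F'))
    (hderiv : ∀ x s, HasDerivAt (fun y => F y s) (F' x s) x) (a b x : ℝ) :
    HasDerivAt (fun y => ∫ s in a..b, F y s) (∫ s in a..b, F' x s) x :=
  hasDerivAt_intervalIntegral_of_continuousOn isOpen_univ hF.continuousOn hF'.continuousOn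
    (fun x _ => hderiv x) a b (mem_univ x)

lemma ofReal_intervalIntegral_eq_setLIntegral {f : ℝ → ℝ} (hf : Continuous f) (h0 : ∀ x, 0 ≤ f x)
    {a b : ℝ} (hab : a ≤ b) :
    ENNReal.ofReal (∫ x in a..b, f x) = ∫⁻ x in Ioc a b, ENNReal.ofReal (f x) := by
  rw [intervalIntegral.integral_of_le hab, ofReal_integral_eq_lintegral_ofReal
    (hf.intervalIntegrable a b).1 (Eventually.of_forall h0)]

/-! ### The symplectic form on `ℂ` -/

/-- The real bilinear form `(a, b) ↦ Im (conj a * b)` on `ℂ`, which measures the flux of mass. It is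
obtained by rotating the real inner product, so that its linearity and continuity come for free. -/
def imInner : ℂ →L[ℝ] ℂ →L[ℝ] ℝ :=
  (innerSL ℝ).comp (Complex.I • ContinuousLinearMap.id ℝ ℂ)

lemma imInner_eq_inner (a b : ℂ) : imInner a b = inner ℝ (Complex.I * a) b := rfl

lemma imInner_apply (a b : ℂ) : imInner a b = ((starRingEnd ℂ) a * b).im := by
  simp only [imInner_eq_inner, Complex.inner, map_mul, Complex.conj_I, Complex.mul_re,
    Complex.mul_im, Complex.neg_re, Complex.neg_im, Complex.I_re, Complex.I_im, Complex.conj_re,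
    Complex.conj_im]
  ring

lemma imInner_self (a : ℂ) : imInner a a = 0 := by
  rw [imInner_apply, Complex.mul_im, Complex.conj_re, Complex.conj_im]
  ring

lemma imInner_smul_self (a : ℂ) (c : ℝ) : imInner a (c • a) = 0 := by
  rw [map_smul, imInner_self, smul_zero]

lemma abs_imInner_le (a b : ℂ) : |imInner a b| ≤ ‖a‖ * ‖b‖ := by
  simpa [imInner_eq_inner] using abs_real_inner_le_norm (Complex.I * a) b

lemma inner_neg_I_mul (a b : ℂ) : inner ℝ a (-Complex.I * b) = imInner a b := by
  simp only [imInner_eq_inner, Complex.inner, map_mul, Complex.conj_I, Complex.mul_re,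
    Complex.mul_im, Complex.neg_re, Complex.neg_im, Complex.I_re, Complex.I_im, Complex.conj_re,
    Complex.conj_im]
  ring

/-! ### The flux through a cutoff -/

/-- The parabolic cutoff on `[-L, L]`; its derivative is `O(1 / L)`. -/
def cutoff (L x : ℝ) : ℝ := 1 - (x / L) ^ 2

lemma continuous_cutoff (L : ℝ) : Continuous (cutoff L) := by
  unfold cutoff
  fun_prop

lemma hasDerivAt_cutoff (L x : ℝ) : HasDerivAt (cutoff L) (-(2 * x / L ^ 2)) x := by
  refine ((((hasDerivAt_id x).div_const L).pow 2).const_sub 1).congr_deriv ?_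
  simp only [id, Nat.cast_ofNat, Nat.add_one_sub_one, pow_one]
  ring

lemma cutoff_self {L : ℝ} (hL : L ≠ 0) : cutoff L L = 0 := by
  simp [cutoff, hL]

lemma cutoff_neg_self {L : ℝ} (hL : L ≠ 0) : cutoff L (-L) = 0 := by
  simp [cutoff, hL]

lemma cutoff_sq_le_one {L x : ℝ} (hx : x ∈ Icc (-L) L) : cutoff L x ^ 2 ≤ 1 := by
  have hratio : (x / L) ^ 2 ≤ 1 := by
    rw [div_pow]
    exact div_le_one_of_le₀ (sq_le_sq' hx.1 hx.2) (sq_nonneg L)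
  unfold cutoff
  nlinarith [sq_nonneg (x / L)]

lemma deriv_cutoff_sq_le {L x : ℝ} (hx : x ∈ Icc (-L) L) :
    (-(2 * x / L ^ 2)) ^ 2 ≤ 4 / L ^ 2 := by
  have hsq : x ^ 2 ≤ L ^ 2 := sq_le_sq' hx.1 hx.2
  rcases eq_or_ne L 0 with rfl | hL
  · simp
  · rw [neg_sq, div_pow, div_le_div_iff₀ (by positivity) (by positivity)]
    nlinarith [mul_le_mul_of_nonneg_right hsq (sq_nonneg L)]

/-- The Bessel operator `-∂_r² - (1 / r) ∂_r + k² / r²` in the variable `x = log r`. -/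
def logBessel (k : ℝ) (z : ℝ → ℂ) (x : ℝ) : ℂ :=
  Real.exp (-(2 * x)) • (k ^ 2 • z x - deriv (deriv z) x)

section Flux

variable {z : ℝ → ℂ} {k L : ℝ}

lemma continuous_logBessel (hz : ContDiff ℝ 2 z) (k : ℝ) : Continuous (logBessel k z) := by
  have := hz.continuous
  have : Continuous (deriv (deriv z)) :=
    (((contDiff_succ_iff_deriv (n := 1)).1 hz).2.2).continuous_deriv le_rfl
  unfold logBessel
  fun_prop

lemma integral_sq_mul_bilin_logBessel (β : ℂ →L[ℝ] ℂ →L[ℝ] ℝ) (hz : ContDiff ℝ 2 z)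
    {χ χ' : ℝ → ℝ} (hχ : ∀ x, HasDerivAt χ (χ' x) x) (hχ' : Continuous χ') {a b : ℝ}
    (ha : χ a = 0) (hb : χ b = 0) :
    ∫ x in a..b, χ x ^ 2 * (β (z x) (logBessel k z x) * Real.exp (2 * x)) =
      ∫ x in a..b, (2 * (χ x * χ' x * β (z x) (deriv z x)) +
        χ x ^ 2 * (β (deriv z x) (deriv z x) + k ^ 2 * β (z x) (z x))) := by
  have hz₁ : ContDiff ℝ 1 (deriv z) := ((contDiff_succ_iff_deriv (n := 1)).1 hz).2.2
  have hχc : Continuous χ := continuous_iff_continuousAt.2 fun x => (hχ x).continuousAt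
  have := hz.continuous
  have := hz₁.continuous
  have := continuous_logBessel hz k
  have hflux (x : ℝ) : HasDerivAt (fun y => χ y ^ 2 * β (z y) (deriv z y))
      ((2 * (χ x * χ' x * β (z x) (deriv z x)) +
        χ x ^ 2 * (β (deriv z x) (deriv z x) + k ^ 2 * β (z x) (z x))) -
        χ x ^ 2 * (β (z x) (logBessel k z x) * Real.exp (2 * x))) x := by
    have hz' := (hz.differentiable (by norm_num) x).hasDerivAt
    have hz₁' := (hz₁.differentiable (by norm_num) x).hasDerivAt
    refine (((hχ x).pow 2).mul
      (β.hasDerivAt_of_bilinear (fun _ => hz') fun _ => hz₁')).congr_deriv ?_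
    have hexp : Real.exp (-(2 * x)) * Real.exp (2 * x) = 1 := by
      rw [← Real.exp_add]
      simp
    simp only [logBessel, map_smul, map_sub, smul_eq_mul, Pi.pow_apply, Nat.cast_ofNat,
      Nat.add_one_sub_one, pow_one]
    linear_combination (χ x ^ 2 * (k ^ 2 * β (z x) (z x) - β (z x) (deriv (deriv z) x))) * hexp
  have hftc := intervalIntegral.integral_eq_sub_of_hasDerivAt (a := a) (b := b)
    (fun x _ => hflux x) (Continuous.intervalIntegrable (by fun_prop) _ _)
  rw [intervalIntegral.integral_sub (Continuous.intervalIntegrable (by fun_prop) _ _)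
    (Continuous.intervalIntegrable (by fun_prop) _ _)] at hftc
  simp only [ha, hb] at hftc
  linarith

lemma two_mul_abs_bilin_le {β : ℂ →L[ℝ] ℂ →L[ℝ] ℝ} (hβ : ∀ a b, |β a b| ≤ ‖a‖ * ‖b‖)
    {c : ℝ} (hc : 0 < c) (p q : ℝ) (a b : ℂ) :
    2 * |p * q * β a b| ≤ c * (q ^ 2 * ‖a‖ ^ 2) + c⁻¹ * (p ^ 2 * ‖b‖ ^ 2) := by
  have hcs : |p * q * β a b| ≤ (|q| * ‖a‖) * (|p| * ‖b‖) := by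
    rw [abs_mul, abs_mul]
    calc |p| * |q| * |β a b| ≤ |p| * |q| * (‖a‖ * ‖b‖) := by gcongr; exact hβ a b
      _ = _ := by ring
  have hsq : 0 ≤ c⁻¹ * (c * (|q| * ‖a‖) - |p| * ‖b‖) ^ 2 := by positivity
  have hexpand : c⁻¹ * (c * (|q| * ‖a‖) - |p| * ‖b‖) ^ 2 =
      c * (q ^ 2 * ‖a‖ ^ 2) + c⁻¹ * (p ^ 2 * ‖b‖ ^ 2) - 2 * ((|q| * ‖a‖) * (|p| * ‖b‖)) := by
    rw [← sq_abs q, ← sq_abs p]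
    field_simp
    ring
  linarith

lemma integral_deriv_cutoff_sq_mul_norm_sq_le (hL : 1 ≤ L) (hz : Continuous z) {M K : ℝ}
    (hM : ∀ x ≤ 0, ‖z x‖ ≤ M) (hK : ∫ x in (-L)..L, ‖z x‖ ^ 2 * Real.exp (2 * x) ≤ K) :
    ∫ x in (-L)..L, (-(2 * x / L ^ 2)) ^ 2 * ‖z x‖ ^ 2 ≤ 8 * (M ^ 2 + K) / L := by
  have hK0 : 0 ≤ K :=
    (intervalIntegral.integral_nonneg (by linarith) fun x _ => by positivity).trans hK
  have hpointwise (x : ℝ) : ‖z x‖ ^ 2 ≤ M ^ 2 + ‖z x‖ ^ 2 * Real.exp (2 * x) := by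
    rcases le_total x 0 with hx | hx
    · have hle : ‖z x‖ ^ 2 ≤ M ^ 2 := by gcongr; exact hM x hx
      linarith [mul_nonneg (sq_nonneg ‖z x‖) (Real.exp_pos (2 * x)).le]
    · nlinarith [sq_nonneg ‖z x‖, sq_nonneg M, Real.one_le_exp (by linarith : 0 ≤ 2 * x)]
  calc ∫ x in (-L)..L, (-(2 * x / L ^ 2)) ^ 2 * ‖z x‖ ^ 2
      ≤ ∫ x in (-L)..L, (4 / L ^ 2) * (M ^ 2 + ‖z x‖ ^ 2 * Real.exp (2 * x)) := by
        refine intervalIntegral.integral_mono_on (by linarith)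
          (Continuous.intervalIntegrable (by fun_prop) _ _)
          (Continuous.intervalIntegrable (by fun_prop) _ _) fun x hx => ?_
        exact mul_le_mul (deriv_cutoff_sq_le hx) (hpointwise x) (by positivity) (by positivity)
    _ = 4 / L ^ 2 * (2 * L * M ^ 2 + ∫ x in (-L)..L, ‖z x‖ ^ 2 * Real.exp (2 * x)) := by
        rw [intervalIntegral.integral_const_mul, intervalIntegral.integral_add
          (Continuous.intervalIntegrable (by fun_prop) _ _)
          (Continuous.intervalIntegrable (by fun_prop) _ _), intervalIntegral.integral_const,
          smul_eq_mul]
        ring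
    _ ≤ 4 / L ^ 2 * (2 * L * M ^ 2 + K) := by gcongr
    _ ≤ 8 * (M ^ 2 + K) / L := by
        rw [div_mul_eq_mul_div, div_le_div_iff₀ (by positivity) (by positivity)]
        nlinarith [mul_nonneg (mul_nonneg hK0 (by linarith : 0 ≤ L)) (by linarith : 0 ≤ 2 * L - 1)]

lemma sq_mul_norm_sq_le_of_sq_le_one {p e : ℝ} (hp : p ^ 2 ≤ 1) (he : 0 ≤ e) (k q : ℝ)
    (a b c : ℂ) :
    p ^ 2 * ‖b‖ ^ 2 ≤ (‖a‖ ^ 2 * e + ‖c‖ ^ 2 * e + 4 * (q ^ 2 * ‖a‖ ^ 2)) +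
      2 * ((2 * (p * q * inner ℝ a b) + p ^ 2 * (‖b‖ ^ 2 + k ^ 2 * ‖a‖ ^ 2)) -
        p ^ 2 * (inner ℝ a c * e)) := by
  have hinner (x y : ℂ) : (innerSL ℝ : ℂ →L[ℝ] ℂ →L[ℝ] ℝ) x y = inner ℝ x y := rfl
  have hcross := two_mul_abs_bilin_le (β := innerSL ℝ) abs_real_inner_le_norm zero_lt_two p q a b
  have hsource := two_mul_abs_bilin_le (β := innerSL ℝ) abs_real_inner_le_norm zero_lt_one p p a c
  simp only [hinner] at hcross hsource
  have hbound : p ^ 2 * (‖a‖ ^ 2 + ‖c‖ ^ 2) ≤ ‖a‖ ^ 2 + ‖c‖ ^ 2 :=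
    mul_le_of_le_one_left (by positivity) hp
  have hsource' : 2 * (p ^ 2 * (inner ℝ a c * e)) ≤ (‖a‖ ^ 2 + ‖c‖ ^ 2) * e := by
    nlinarith [le_abs_self (p * p * inner ℝ a c)]
  have hpos : 0 ≤ p ^ 2 * (k ^ 2 * ‖a‖ ^ 2) := by positivity
  linarith [neg_abs_le (p * q * inner ℝ a b)]

/-- This is the real part of pairing `logBessel k z` with `cutoff L ^ 2 * z`. -/
lemma integral_cutoff_sq_mul_norm_deriv_sq_le (hL : 0 < L) (hz : ContDiff ℝ 2 z) {K B : ℝ}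
    (hK : ∫ x in (-L)..L, ‖z x‖ ^ 2 * Real.exp (2 * x) ≤ K)
    (hB : ∫ x in (-L)..L, ‖logBessel k z x‖ ^ 2 * Real.exp (2 * x) ≤ B) :
    ∫ x in (-L)..L, cutoff L x ^ 2 * ‖deriv z x‖ ^ 2 ≤
      K + B + 4 * ∫ x in (-L)..L, (-(2 * x / L ^ 2)) ^ 2 * ‖z x‖ ^ 2 := by
  have := hz.continuous
  have := hz.continuous_deriv (by norm_num)
  have := continuous_logBessel hz k
  have := continuous_cutoff L
  have hinner (a b : ℂ) : (innerSL ℝ : ℂ →L[ℝ] ℂ →L[ℝ] ℝ) a b = inner ℝ a b := rfl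
  have hparts := integral_sq_mul_bilin_logBessel (k := k) (innerSL ℝ) hz (hasDerivAt_cutoff L)
    (by fun_prop) (cutoff_neg_self hL.ne') (cutoff_self hL.ne')
  simp only [hinner, real_inner_self_eq_norm_sq] at hparts
  have hmono : ∫ x in (-L)..L, cutoff L x ^ 2 * ‖deriv z x‖ ^ 2 ≤ ∫ x in (-L)..L,
      ((‖z x‖ ^ 2 * Real.exp (2 * x) + ‖logBessel k z x‖ ^ 2 * Real.exp (2 * x) +
        4 * ((-(2 * x / L ^ 2)) ^ 2 * ‖z x‖ ^ 2)) +
      2 * ((2 * (cutoff L x * (-(2 * x / L ^ 2)) * inner ℝ (z x) (deriv z x)) +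
          cutoff L x ^ 2 * (‖deriv z x‖ ^ 2 + k ^ 2 * ‖z x‖ ^ 2)) -
        cutoff L x ^ 2 * (inner ℝ (z x) (logBessel k z x) * Real.exp (2 * x)))) := by
    refine intervalIntegral.integral_mono_on (by linarith)
      (Continuous.intervalIntegrable (by fun_prop) _ _)
      (Continuous.intervalIntegrable (by fun_prop) _ _) fun x hx => ?_
    exact sq_mul_norm_sq_le_of_sq_le_one (cutoff_sq_le_one hx) (Real.exp_pos _).le k _ _ _ _
  refine hmono.trans ?_
  repeat rw [intervalIntegral.integral_add (Continuous.intervalIntegrable (by fun_prop) _ _)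
    (Continuous.intervalIntegrable (by fun_prop) _ _)]
  rw [intervalIntegral.integral_const_mul, intervalIntegral.integral_const_mul,
    intervalIntegral.integral_sub (Continuous.intervalIntegrable (by fun_prop) _ _)
      (Continuous.intervalIntegrable (by fun_prop) _ _), hparts]
  linarith

lemma abs_integral_cutoff_sq_mul_imInner_logBessel_le (hL : 1 ≤ L) (hz : ContDiff ℝ 2 z)
    {M K B : ℝ} (hM : ∀ x ≤ 0, ‖z x‖ ≤ M)
    (hK : ∫ x in (-L)..L, ‖z x‖ ^ 2 * Real.exp (2 * x) ≤ K)
    (hB : ∫ x in (-L)..L, ‖logBessel k z x‖ ^ 2 * Real.exp (2 * x) ≤ B) :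
    |∫ x in (-L)..L, cutoff L x ^ 2 * (imInner (z x) (logBessel k z x) * Real.exp (2 * x))| ≤
      (K + B + 40 * (M ^ 2 + K)) / √L := by
  have hL0 : 0 < L := by linarith
  have := hz.continuous
  have := hz.continuous_deriv (by norm_num)
  have := continuous_cutoff L
  set D := ∫ x in (-L)..L, (-(2 * x / L ^ 2)) ^ 2 * ‖z x‖ ^ 2
  set S := ∫ x in (-L)..L, cutoff L x ^ 2 * ‖deriv z x‖ ^ 2
  have hS_le : S ≤ K + B + 4 * D := integral_cutoff_sq_mul_norm_deriv_sq_le hL0 hz hK hB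
  have hLD : L * D ≤ 8 * (M ^ 2 + K) := by
    rw [mul_comm, ← le_div_iff₀ hL0]
    exact integral_deriv_cutoff_sq_mul_norm_sq_le hL hz.continuous hM hK
  have hD0 : 0 ≤ D := intervalIntegral.integral_nonneg (by linarith) fun x _ => by positivity
  have hsqrt : 0 < √L := Real.sqrt_pos.2 hL0
  have hparts := integral_sq_mul_bilin_logBessel (k := k) imInner hz (hasDerivAt_cutoff L)
    (by fun_prop) (cutoff_neg_self hL0.ne') (cutoff_self hL0.ne')
  simp only [imInner_self, mul_zero, add_zero] at hparts
  rw [hparts, ← Real.norm_eq_abs]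
  calc ‖∫ x in (-L)..L, 2 * (cutoff L x * (-(2 * x / L ^ 2)) * imInner (z x) (deriv z x))‖
      ≤ ∫ x in (-L)..L, (√L * ((-(2 * x / L ^ 2)) ^ 2 * ‖z x‖ ^ 2) +
          (√L)⁻¹ * (cutoff L x ^ 2 * ‖deriv z x‖ ^ 2)) := by
        refine intervalIntegral.norm_integral_le_of_norm_le (by linarith)
          (Eventually.of_forall fun x _ => ?_) (Continuous.intervalIntegrable (by fun_prop) _ _)
        rw [norm_mul, Real.norm_two, Real.norm_eq_abs]
        exact two_mul_abs_bilin_le abs_imInner_le hsqrt _ _ _ _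
    _ = √L * D + (√L)⁻¹ * S := by
        rw [intervalIntegral.integral_add (Continuous.intervalIntegrable (by fun_prop) _ _)
          (Continuous.intervalIntegrable (by fun_prop) _ _),
          intervalIntegral.integral_const_mul, intervalIntegral.integral_const_mul]
    _ = (L * D + S) / √L := by
        field_simp
        rw [Real.sq_sqrt hL0.le, mul_comm]
    _ ≤ (K + B + 40 * (M ^ 2 + K)) / √L :=
        div_le_div_of_nonneg_right (by nlinarith) hsqrt.le

end Flux

/-! ### Mass in the logarithmic variable -/

/-- The density of `∫ |f|² r dr` in the variable `x = log r`. -/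
def massDensity (f : ℝ → ℂ) (x : ℝ) : ℝ≥0∞ := ENNReal.ofReal (‖f x‖ ^ 2 * Real.exp (2 * x))

/-- The mass `∫ |f|² r dr` of a radial profile in the variable `x = log r`. -/
def logMass (f : ℝ → ℂ) : ℝ≥0∞ := ∫⁻ x, massDensity f x

lemma continuous_massDensity {X : Type*} [TopologicalSpace X] {f : X → ℝ → ℂ}
    (hf : Continuous (Function.uncurry f)) :
    Continuous (Function.uncurry fun p => massDensity (f p)) := by
  have : Continuous fun p : X × ℝ => f p.1 p.2 := hf
  exact ENNReal.continuous_ofReal.comp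
    (by fun_prop : Continuous fun p : X × ℝ => ‖f p.1 p.2‖ ^ 2 * Real.exp (2 * p.2))

lemma measurable_massDensity {f : ℝ → ℂ} (hf : Continuous f) : Measurable (massDensity f) :=
  (ENNReal.continuous_ofReal.comp
    (by fun_prop : Continuous fun x => ‖f x‖ ^ 2 * Real.exp (2 * x))).measurable

lemma logMass_le_of_norm_le {f g : ℝ → ℂ} {c : ℝ≥0} (h : ∀ x, ‖f x‖ ≤ c * ‖g x‖) :
    logMass f ≤ c ^ 2 * logMass g := by
  rw [logMass, logMass, ← ENNReal.coe_pow, ← lintegral_const_mul' _ _ ENNReal.coe_ne_top]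
  refine lintegral_mono fun x => ?_
  rw [massDensity, massDensity, ← ENNReal.ofReal_coe_nnreal, ← ENNReal.ofReal_mul (by positivity),
    ← mul_assoc, NNReal.coe_pow, ← mul_pow]
  gcongr
  exact h x

lemma logMass_add_le {f : ℝ → ℂ} (hf : Continuous f) (g : ℝ → ℂ) :
    logMass (f + g) ≤ 2 * logMass f + 2 * logMass g := by
  rw [logMass, logMass, logMass, ← lintegral_const_mul' _ _ ENNReal.ofNat_ne_top,
    ← lintegral_const_mul' _ _ ENNReal.ofNat_ne_top,
    ← lintegral_add_left ((measurable_massDensity hf).const_mul 2)]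
  refine lintegral_mono fun x => ?_
  have hsq : ‖f x + g x‖ ^ 2 ≤ 2 * ‖f x‖ ^ 2 + 2 * ‖g x‖ ^ 2 := by
    nlinarith [pow_le_pow_left₀ (norm_nonneg _) (norm_add_le (f x) (g x)) 2,
      sq_nonneg (‖f x‖ - ‖g x‖)]
  simp only [massDensity, Pi.add_apply]
  rw [← ENNReal.ofReal_ofNat, ← ENNReal.ofReal_mul zero_le_two, ← ENNReal.ofReal_mul zero_le_two,
    ← ENNReal.ofReal_add (by positivity) (by positivity)]
  gcongr
  nlinarith [Real.exp_pos (2 * x)]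

lemma integral_norm_sq_mul_exp_le_of_logMass_le {f : ℝ → ℂ} (hf : Continuous f) {K : ℝ≥0}
    (hK : logMass f ≤ K) {L : ℝ} (hL : 0 ≤ L) :
    ∫ x in (-L)..L, ‖f x‖ ^ 2 * Real.exp (2 * x) ≤ K := by
  rw [← ENNReal.ofReal_le_ofReal_iff K.coe_nonneg, ENNReal.ofReal_coe_nnreal,
    ofReal_intervalIntegral_eq_setLIntegral (by fun_prop) (fun _ => by positivity) (by linarith)]
  exact (setLIntegral_le_lintegral _ _).trans hK

lemma logMass_le_liminf {f : ℝ → ℂ} {F : ℕ → ℝ → ℂ} (hF : ∀ n, Continuous (F n))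
    (hlim : ∀ x, Tendsto (fun n => F n x) atTop (𝓝 (f x))) :
    logMass f ≤ liminf (fun n => logMass (F n)) atTop := by
  calc logMass f = ∫⁻ x, liminf (fun n => massDensity (F n) x) atTop := by
        refine lintegral_congr fun x => (Tendsto.liminf_eq ?_).symm
        exact (ENNReal.continuous_ofReal.tendsto _).comp (((hlim x).norm.pow 2).mul_const _)
    _ ≤ _ := lintegral_liminf_le fun n => measurable_massDensity (hF n)

/-- The part of the mass seen by the cutoff at scale `L`. -/
def localMass (L : ℝ) (f : ℝ → ℂ) : ℝ :=
  ∫ x in (-L)..L, cutoff L x ^ 2 * (‖f x‖ ^ 2 * Real.exp (2 * x))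

lemma ofReal_localMass {L : ℝ} (hL : 0 ≤ L) {f : ℝ → ℂ} (hf : Continuous f) :
    ENNReal.ofReal (localMass L f) = ∫⁻ x in Ioc (-L) L,
      ENNReal.ofReal (cutoff L x ^ 2 * (‖f x‖ ^ 2 * Real.exp (2 * x))) := by
  have := continuous_cutoff L
  exact ofReal_intervalIntegral_eq_setLIntegral (by fun_prop) (fun _ => by positivity) (by linarith)

lemma ofReal_localMass_le {L : ℝ} (hL : 0 ≤ L) {f : ℝ → ℂ} (hf : Continuous f) :
    ENNReal.ofReal (localMass L f) ≤ logMass f := by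
  rw [ofReal_localMass hL hf]
  refine (setLIntegral_mono' measurableSet_Ioc fun x hx => ?_).trans
    (setLIntegral_le_lintegral (Ioc (-L) L) (massDensity f))
  exact ENNReal.ofReal_le_ofReal
    (mul_le_of_le_one_left (by positivity) (cutoff_sq_le_one ⟨hx.1.le, hx.2⟩))

lemma logMass_le_liminf_localMass {f : ℝ → ℂ} (hf : Continuous f) :
    logMass f ≤ liminf (fun n : ℕ => ENNReal.ofReal (localMass n f)) atTop := by
  let F (n : ℕ) : ℝ → ℝ≥0∞ := (Ioc (-(n : ℝ)) n).indicator fun x =>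
    ENNReal.ofReal (cutoff n x ^ 2 * (‖f x‖ ^ 2 * Real.exp (2 * x)))
  have hF_meas (n : ℕ) : Measurable (F n) := by
    have := continuous_cutoff n
    exact (ENNReal.continuous_ofReal.comp (by fun_prop)).measurable.indicator measurableSet_Ioc
  have hF_lim (x : ℝ) : Tendsto (fun n => F n x) atTop (𝓝 (massDensity f x)) := by
    have hcut : Tendsto (fun n : ℕ => cutoff n x) atTop (𝓝 1) := by
      simpa [cutoff] using
        ((tendsto_const_nhds.div_atTop tendsto_natCast_atTop_atTop).pow 2).const_sub (1 : ℝ)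
    have hprod := (ENNReal.continuous_ofReal.tendsto _).comp
      ((hcut.pow 2).mul_const (‖f x‖ ^ 2 * Real.exp (2 * x)))
    rw [one_pow, one_mul] at hprod
    refine hprod.congr' ?_
    filter_upwards [tendsto_natCast_atTop_atTop.eventually_gt_atTop |x|] with n hn
    have hmem : x ∈ Ioc (-(n : ℝ)) n := ⟨(abs_lt.1 hn).1, (abs_lt.1 hn).2.le⟩
    simp only [F, indicator_of_mem hmem, Function.comp_apply]
  calc logMass f = ∫⁻ x, liminf (fun n => F n x) atTop :=
        lintegral_congr fun x => (hF_lim x).liminf_eq.symm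
    _ ≤ liminf (fun n => ∫⁻ x, F n x) atTop := lintegral_liminf_le hF_meas
    _ = _ := by simp only [F, lintegral_indicator measurableSet_Ioc, ofReal_localMass
        (Nat.cast_nonneg _) hf]

/-! ### Steklov averages in time -/

/-- The Steklov average of `f` over the times `[t, t + ε]`, with the averaging variable rescaled to
`[0, 1]` so that `ε = 0` returns `f` itself. -/
def steklov (ε : ℝ) (f : ℝ → ℝ → ℂ) (t x : ℝ) : ℂ := ∫ s in (0 : ℝ)..1, f (t + ε * s) x

section Steklov

variable {f f' : ℝ → ℝ → ℂ} {ε : ℝ}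

lemma steklov_zero (f : ℝ → ℝ → ℂ) (t x : ℝ) : steklov 0 f t x = f t x := by
  simp [steklov]

lemma continuous_steklov_param (hf : Continuous (Function.uncurry f)) :
    Continuous fun p : ℝ × ℝ × ℝ => steklov p.1 f p.2.1 p.2.2 := by
  unfold steklov
  apply intervalIntegral.continuous_parametric_intervalIntegral_of_continuous'
  exact hf.comp (by fun_prop : Continuous fun q : (ℝ × ℝ × ℝ) × ℝ =>
    (q.1.2.1 + q.1.1 * q.2, q.1.2.2))

lemma continuous_steklov (hf : Continuous (Function.uncurry f)) (ε : ℝ) :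
    Continuous (Function.uncurry (steklov ε f)) :=
  (continuous_steklov_param hf).comp (by fun_prop : Continuous fun p : ℝ × ℝ => (ε, p))

lemma continuous_comp_affine (hf : Continuous (Function.uncurry f)) (ε t x : ℝ) :
    Continuous fun s => f (t + ε * s) x :=
  (hf.uncurry_right x).comp (by fun_prop)

lemma hasDerivAt_steklov_space (hf : Continuous (Function.uncurry f))
    (hf' : Continuous (Function.uncurry f')) (hderiv : ∀ t x, HasDerivAt (f t) (f' t x) x)
    (ε t x : ℝ) : HasDerivAt (steklov ε f t) (steklov ε f' t x) x :=
  have hshift : Continuous fun q : ℝ × ℝ => (t + ε * q.2, q.1) := by fun_prop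
  hasDerivAt_intervalIntegral_of_continuous (F := fun x s => f (t + ε * s) x)
    (F' := fun x s => f' (t + ε * s) x) (hf.comp hshift) (hf'.comp hshift)
    (fun _ _ => hderiv _ _) 0 1 x

lemma steklov_eq_inv_smul_integral (hε : ε ≠ 0) (f : ℝ → ℝ → ℂ) (t x : ℝ) :
    steklov ε f t x = ε⁻¹ • ∫ s in t..(t + ε), f s x := by
  rw [steklov, intervalIntegral.integral_comp_add_mul (fun s => f s x) hε t]
  simp

lemma hasDerivAt_steklov_time (hf : Continuous (Function.uncurry f)) (hε : ε ≠ 0) (t x : ℝ) :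
    HasDerivAt (fun τ => steklov ε f τ x) (ε⁻¹ • (f (t + ε) x - f t x)) t := by
  have hfx : Continuous fun τ => f τ x := hf.uncurry_right x
  have hprimitive (τ : ℝ) : HasDerivAt (fun τ => ∫ s in (0 : ℝ)..τ, f s x) (f τ x) τ :=
    intervalIntegral.integral_hasDerivAt_right (hfx.intervalIntegrable _ _)
      (hfx.stronglyMeasurableAtFilter _ _) hfx.continuousAt
  refine ((((hprimitive (t + ε)).comp_add_const t ε).sub (hprimitive t)).const_smul
    ε⁻¹).congr_of_eventuallyEq (Eventually.of_forall fun τ => ?_)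
  change steklov ε f τ x = ε⁻¹ • (_ - _)
  rw [steklov_eq_inv_smul_integral hε,
    intervalIntegral.integral_interval_sub_left (hfx.intervalIntegrable _ _)
      (hfx.intervalIntegrable _ _)]

lemma norm_steklov_le {M t x : ℝ} (hM : ∀ τ, ‖f τ x‖ ≤ M) : ‖steklov ε f t x‖ ≤ M := by
  simpa [steklov] using intervalIntegral.norm_integral_le_of_norm_le_const (a := 0) (b := 1)
    fun s _ => hM (t + ε * s)

lemma norm_sq_integral_zero_one_le {E : Type*} [NormedAddCommGroup E] [NormedSpace ℝ E]
    [CompleteSpace E] {h : ℝ → E} (hh : Continuous h) :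
    ‖∫ s in (0 : ℝ)..1, h s‖ ^ 2 ≤ ∫ s in (0 : ℝ)..1, ‖h s‖ ^ 2 := by
  have : IsProbabilityMeasure (volume.restrict (Ioc (0 : ℝ) 1)) := ⟨by simp⟩
  simp only [intervalIntegral.integral_of_le zero_le_one]
  exact (convexOn_univ_norm.pow (fun _ _ => norm_nonneg _) 2).map_integral_le
    (by fun_prop) isClosed_univ (by simp) (hh.intervalIntegrable 0 1).1
    ((by fun_prop : Continuous fun s => ‖h s‖ ^ 2).intervalIntegrable 0 1).1

lemma ofReal_integral_norm_sq_mul_exp (hf : Continuous (Function.uncurry f)) (ε t x : ℝ) :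
    ENNReal.ofReal ((∫ s in (0 : ℝ)..1, ‖f (t + ε * s) x‖ ^ 2) * Real.exp (2 * x)) =
      ∫⁻ s in Ioc (0 : ℝ) 1, massDensity (f (t + ε * s)) x := by
  have := continuous_comp_affine hf ε t x
  rw [← intervalIntegral.integral_mul_const, ofReal_intervalIntegral_eq_setLIntegral
    (by fun_prop) (fun _ => by positivity) zero_le_one]
  rfl

lemma lintegral_massDensity_swap (hf : Continuous (Function.uncurry f)) (ε t : ℝ) (S : Set ℝ) :
    ∫⁻ x in S, ∫⁻ s in Ioc (0 : ℝ) 1, massDensity (f (t + ε * s)) x =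
      ∫⁻ s in Ioc (0 : ℝ) 1, ∫⁻ x in S, massDensity (f (t + ε * s)) x :=
  lintegral_lintegral_swap ((continuous_massDensity hf).comp
    (by fun_prop : Continuous fun q : ℝ × ℝ => (t + ε * q.2, q.1))).measurable.aemeasurable

lemma logMass_steklov_le (hf : Continuous (Function.uncurry f)) {t : ℝ} {K : ℝ≥0∞}
    (hK : ∀ s ∈ Ioc (0 : ℝ) 1, logMass (f (t + ε * s)) ≤ K) : logMass (steklov ε f t) ≤ K := by
  calc logMass (steklov ε f t)
      ≤ ∫⁻ x, ∫⁻ s in Ioc (0 : ℝ) 1, massDensity (f (t + ε * s)) x := by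
        refine lintegral_mono fun x => ?_
        rw [← ofReal_integral_norm_sq_mul_exp hf, massDensity]
        gcongr
        exact norm_sq_integral_zero_one_le (continuous_comp_affine hf ε t x)
    _ = ∫⁻ s in Ioc (0 : ℝ) 1, logMass (f (t + ε * s)) := by
        simpa only [logMass, Measure.restrict_univ] using lintegral_massDensity_swap hf ε t univ
    _ ≤ ∫⁻ _ in Ioc (0 : ℝ) 1, K := setLIntegral_mono measurable_const hK
    _ = K := by simp

end Steklov

/-! ### The error of averaging a real potential -/

/-- The mass flux density produced by averaging `v` and `g` separately. It vanishes at `ε = 0` when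
`g` is a real multiple of `v`. -/
def steklovDefect (ε : ℝ) (v g : ℝ → ℝ → ℂ) (t x : ℝ) : ℝ :=
  |imInner (steklov ε v t x) (steklov ε g t x)| * Real.exp (2 * x)

section Defect

variable {v g : ℝ → ℝ → ℂ} {C : ℝ≥0} {K : ℝ≥0∞} {ε : ℝ}

lemma steklovDefect_nonneg (ε : ℝ) (v g : ℝ → ℝ → ℂ) (t x : ℝ) : 0 ≤ steklovDefect ε v g t x := by
  unfold steklovDefect
  positivity

lemma continuous_steklovDefect_comp {X : Type*} [TopologicalSpace X] {e t x : X → ℝ}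
    (hv : Continuous (Function.uncurry v)) (hg : Continuous (Function.uncurry g))
    (he : Continuous e) (ht : Continuous t) (hx : Continuous x) :
    Continuous fun p => steklovDefect (e p) v g (t p) (x p) := by
  have hp : Continuous fun p => (e p, t p, x p) := by fun_prop
  have : Continuous fun p => steklov (e p) v (t p) (x p) := (continuous_steklov_param hv).comp hp
  have : Continuous fun p => steklov (e p) g (t p) (x p) := (continuous_steklov_param hg).comp hp
  unfold steklovDefect
  fun_prop

lemma continuous_steklovDefect (hv : Continuous (Function.uncurry v))
    (hg : Continuous (Function.uncurry g)) (ε : ℝ) :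
    Continuous (Function.uncurry (steklovDefect ε v g)) :=
  continuous_steklovDefect_comp hv hg continuous_const continuous_fst continuous_snd

lemma norm_sq_steklov_le_of_norm_le (hv : Continuous (Function.uncurry v))
    (hg : Continuous (Function.uncurry g)) (hC : ∀ t x, ‖g t x‖ ≤ C * ‖v t x‖) (ε t x : ℝ) :
    ‖steklov ε g t x‖ ^ 2 ≤ C ^ 2 * ∫ s in (0 : ℝ)..1, ‖v (t + ε * s) x‖ ^ 2 := by
  have hg_sect := continuous_comp_affine hg ε t x
  have := continuous_comp_affine hv ε t x
  refine (norm_sq_integral_zero_one_le hg_sect).trans ?_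
  rw [← intervalIntegral.integral_const_mul]
  refine intervalIntegral.integral_mono_on zero_le_one
    ((by fun_prop : Continuous _).intervalIntegrable _ _)
    ((by fun_prop : Continuous _).intervalIntegrable _ _) fun s _ => ?_
  rw [← mul_pow]
  exact pow_le_pow_left₀ (norm_nonneg _) (hC _ _) 2

lemma ofReal_steklovDefect_le (hv : Continuous (Function.uncurry v))
    (hg : Continuous (Function.uncurry g)) (hC : ∀ t x, ‖g t x‖ ≤ C * ‖v t x‖) (ε t x : ℝ) :
    ENNReal.ofReal (steklovDefect ε v g t x) ≤
      C * ∫⁻ s in Ioc (0 : ℝ) 1, massDensity (v (t + ε * s)) x := by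
  rw [← ofReal_integral_norm_sq_mul_exp hv, ← ENNReal.ofReal_coe_nnreal,
    ← ENNReal.ofReal_mul C.coe_nonneg, ← mul_assoc, steklovDefect]
  gcongr
  set avg := ∫ s in (0 : ℝ)..1, ‖v (t + ε * s) x‖ ^ 2
  have hv_sq : ‖steklov ε v t x‖ ^ 2 ≤ avg :=
    norm_sq_integral_zero_one_le (continuous_comp_affine hv ε t x)
  have hg_sq : ‖steklov ε g t x‖ ^ 2 ≤ C ^ 2 * avg := norm_sq_steklov_le_of_norm_le hv hg hC ε t x
  have havg : 0 ≤ avg := (sq_nonneg _).trans hv_sq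
  refine (abs_imInner_le _ _).trans (abs_le_of_sq_le_sq' ?_ (by positivity)).2
  calc (‖steklov ε v t x‖ * ‖steklov ε g t x‖) ^ 2 ≤ avg * (C ^ 2 * avg) := by
        rw [mul_pow]
        gcongr
    _ = (C * avg) ^ 2 := by ring

lemma setLIntegral_Ioc_comp_add_le {c : ℝ} (hc₀ : 0 ≤ c) (hc₁ : c ≤ 1) (F : ℝ → ℝ≥0∞) (a b : ℝ) :
    ∫⁻ t in Ioc a b, F (t + c) ≤ ∫⁻ t in Ioc a (b + 1), F t := by
  have hshift := (measurePreserving_add_right volume c).setLIntegral_comp_preimage_emb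
    (measurableEmbedding_addRight c) F (Ioc (a + c) (b + c))
  rw [preimage_add_const_Ioc, add_sub_cancel_right, add_sub_cancel_right] at hshift
  rw [hshift]
  exact lintegral_mono_set (Ioc_subset_Ioc (by linarith) (by linarith))

lemma setLIntegral_steklovDefect_le (hv : Continuous (Function.uncurry v))
    (hg : Continuous (Function.uncurry g)) (hC : ∀ t x, ‖g t x‖ ≤ C * ‖v t x‖) (hε₀ : 0 ≤ ε)
    (hε₁ : ε ≤ 1) (a b : ℝ) (S : Set ℝ) :
    ∫⁻ t in Ioc a b, ∫⁻ x in S, ENNReal.ofReal (steklovDefect ε v g t x) ≤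
      C * ∫⁻ t in Ioc a (b + 1), ∫⁻ x in S, massDensity (v t) x := by
  have hmeas : Measurable fun t => ∫⁻ x in S, massDensity (v t) x :=
    (continuous_massDensity hv).measurable.lintegral_prod_right'
  calc ∫⁻ t in Ioc a b, ∫⁻ x in S, ENNReal.ofReal (steklovDefect ε v g t x)
      ≤ ∫⁻ t in Ioc a b, ∫⁻ x in S, C * ∫⁻ s in Ioc (0 : ℝ) 1, massDensity (v (t + ε * s)) x := by
        gcongr with t x
        exact ofReal_steklovDefect_le hv hg hC ε t x
    _ = C * ∫⁻ t in Ioc a b, ∫⁻ s in Ioc (0 : ℝ) 1, ∫⁻ x in S, massDensity (v (t + ε * s)) x := by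
        simp only [lintegral_const_mul' _ _ ENNReal.coe_ne_top, lintegral_massDensity_swap hv]
    _ = C * ∫⁻ s in Ioc (0 : ℝ) 1, ∫⁻ t in Ioc a b, ∫⁻ x in S, massDensity (v (t + ε * s)) x := by
        rw [lintegral_lintegral_swap]
        exact (hmeas.comp
          (by fun_prop : Measurable fun q : ℝ × ℝ => q.1 + ε * q.2)).aemeasurable
    _ ≤ C * ∫⁻ _ in Ioc (0 : ℝ) 1, ∫⁻ t in Ioc a (b + 1), ∫⁻ x in S, massDensity (v t) x := by
        refine mul_le_mul_right (setLIntegral_mono' measurableSet_Ioc fun s hs => ?_) _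
        exact setLIntegral_Ioc_comp_add_le (mul_nonneg hε₀ hs.1.le) (mul_le_one₀ hε₁ hs.1.le hs.2)
          (fun t => ∫⁻ x in S, massDensity (v t) x) a b
    _ = _ := by simp

lemma tendsto_setLIntegral_compl_Ioc_nat {F : ℝ → ℝ≥0∞} (hF : Measurable F)
    (hfin : ∫⁻ x, F x ≠ ⊤) :
    Tendsto (fun n : ℕ => ∫⁻ x in (Ioc (-(n : ℝ)) n)ᶜ, F x) atTop (𝓝 0) := by
  simp only [← lintegral_indicator measurableSet_Ioc.compl]
  rw [← lintegral_zero (μ := (volume : Measure ℝ))]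
  refine tendsto_lintegral_of_dominated_convergence F
    (fun n => hF.indicator measurableSet_Ioc.compl)
    (fun n => Eventually.of_forall fun x => indicator_le_self _ _ _) hfin
    (Eventually.of_forall fun x => tendsto_const_nhds.congr' ?_)
  filter_upwards [tendsto_natCast_atTop_atTop.eventually_gt_atTop |x|] with n hn
  have hmem : x ∈ Ioc (-(n : ℝ)) n := ⟨(abs_lt.1 hn).1, (abs_lt.1 hn).2.le⟩
  simp [hmem.1, hmem.2]

lemma tendsto_lintegral_tail_massDensity (hv : Continuous (Function.uncurry v)) (hK_top : K ≠ ⊤)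
    (hK : ∀ t, logMass (v t) ≤ K) (a b : ℝ) :
    Tendsto (fun n : ℕ => ∫⁻ t in Ioc a b, ∫⁻ x in (Ioc (-(n : ℝ)) n)ᶜ, massDensity (v t) x)
      atTop (𝓝 0) := by
  rw [← lintegral_zero (μ := volume.restrict (Ioc a b))]
  exact tendsto_lintegral_of_dominated_convergence (fun _ => K)
    (fun n => (continuous_massDensity hv).measurable.lintegral_prod_right')
    (fun n => Eventually.of_forall fun t => (setLIntegral_le_lintegral _ _).trans (hK t))
    (by simp [ENNReal.mul_eq_top, hK_top])
    (Eventually.of_forall fun t => tendsto_setLIntegral_compl_Ioc_nat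
      (measurable_massDensity (hv.uncurry_left t)) ((hK t).trans_lt hK_top.lt_top).ne)

lemma ofReal_integral_integral_steklovDefect (hv : Continuous (Function.uncurry v))
    (hg : Continuous (Function.uncurry g)) (ε : ℝ) {a b L : ℝ} (hab : a ≤ b) (hL : 0 ≤ L) :
    ENNReal.ofReal (∫ t in a..b, ∫ x in (-L)..L, steklovDefect ε v g t x) =
      ∫⁻ t in Ioc a b, ∫⁻ x in Ioc (-L) L, ENNReal.ofReal (steklovDefect ε v g t x) := by
  have hcont := continuous_steklovDefect hv hg ε
  rw [ofReal_intervalIntegral_eq_setLIntegral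
    (intervalIntegral.continuous_parametric_intervalIntegral_of_continuous' hcont _ _)
    (fun t => intervalIntegral.integral_nonneg (by linarith)
      fun x _ => steklovDefect_nonneg ε v g t x) hab]
  refine lintegral_congr fun t => ?_
  exact ofReal_intervalIntegral_eq_setLIntegral (hcont.uncurry_left t)
    (steklovDefect_nonneg ε v g t) (by linarith)

lemma tendsto_lintegral_steklovDefect_Ioc (hv : Continuous (Function.uncurry v))
    (hg : Continuous (Function.uncurry g)) (him : ∀ t x, imInner (v t x) (g t x) = 0) {a b L : ℝ}
    (hab : a ≤ b) (hL : 0 ≤ L) :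
    Tendsto (fun ε => ∫⁻ t in Ioc a b, ∫⁻ x in Ioc (-L) L,
      ENNReal.ofReal (steklovDefect ε v g t x)) (𝓝 0) (𝓝 0) := by
  simp only [← ofReal_integral_integral_steklovDefect hv hg _ hab hL]
  have hinner : Continuous fun p : ℝ × ℝ => ∫ x in (-L)..L, steklovDefect p.1 v g p.2 x := by
    apply intervalIntegral.continuous_parametric_intervalIntegral_of_continuous'
    exact continuous_steklovDefect_comp hv hg (continuous_fst.comp continuous_fst)
      (continuous_snd.comp continuous_fst) continuous_snd
  have houter : Continuous fun ε => ∫ t in a..b, ∫ x in (-L)..L, steklovDefect ε v g t x :=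
    intervalIntegral.continuous_parametric_intervalIntegral_of_continuous' hinner _ _
  have hlim := (ENNReal.continuous_ofReal.comp houter).tendsto 0
  have hzero (t x : ℝ) : steklovDefect 0 v g t x = 0 := by
    simp [steklovDefect, steklov_zero, him]
  simpa only [hzero, Function.comp_def, intervalIntegral.integral_zero,
    ENNReal.ofReal_zero] using hlim

lemma tendsto_lintegral_steklovDefect (hv : Continuous (Function.uncurry v))
    (hg : Continuous (Function.uncurry g)) (hC : ∀ t x, ‖g t x‖ ≤ C * ‖v t x‖)
    (him : ∀ t x, imInner (v t x) (g t x) = 0) (hK_top : K ≠ ⊤) (hK : ∀ t, logMass (v t) ≤ K)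
    {a b : ℝ} (hab : a ≤ b) :
    Tendsto (fun ε => ∫⁻ t in Ioc a b, ∫⁻ x, ENNReal.ofReal (steklovDefect ε v g t x))
      (𝓝[>] 0) (𝓝 0) := by
  refine ENNReal.tendsto_nhds_zero.2 fun η hη => ?_
  have hη_half : 0 < η / 2 := ENNReal.half_pos hη.ne'
  have htail := ENNReal.Tendsto.const_mul (a := (C : ℝ≥0∞))
    (tendsto_lintegral_tail_massDensity hv hK_top hK a (b + 1)) (Or.inr ENNReal.coe_ne_top)
  rw [mul_zero] at htail
  obtain ⟨n, hn⟩ := (ENNReal.tendsto_nhds_zero.1 htail _ hη_half).exists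
  have hcompact := ENNReal.tendsto_nhds_zero.1
    (tendsto_lintegral_steklovDefect_Ioc hv hg him hab n.cast_nonneg) _ hη_half
  filter_upwards [nhdsWithin_le_nhds hcompact, self_mem_nhdsWithin,
    nhdsWithin_le_nhds (Iic_mem_nhds zero_lt_one)] with ε hε_compact (hε_pos : 0 < ε) hε_one
  have hmeas : Measurable fun t => ∫⁻ x in Ioc (-(n : ℝ)) n,
      ENNReal.ofReal (steklovDefect ε v g t x) :=
    (ENNReal.continuous_ofReal.comp
      (continuous_steklovDefect hv hg ε)).measurable.lintegral_prod_right'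
  have hsplit (t : ℝ) := lintegral_add_compl (μ := volume)
    (fun x => ENNReal.ofReal (steklovDefect ε v g t x))
    (measurableSet_Ioc (a := -(n : ℝ)) (b := n))
  simp only [← hsplit]
  rw [lintegral_add_left hmeas, ← ENNReal.add_halves η]
  exact add_le_add hε_compact
    ((setLIntegral_steklovDefect_le hv hg hC hε_pos.le hε_one a b _).trans hn)

lemma abs_integral_cutoff_sq_mul_imInner_le_steklovDefect
    (hv : Continuous (Function.uncurry v)) (hg : Continuous (Function.uncurry g)) {L : ℝ}
    (hL : 0 ≤ L) (ε t : ℝ) :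
    |∫ x in (-L)..L, cutoff L x ^ 2 *
      (imInner (steklov ε v t x) (steklov ε g t x) * Real.exp (2 * x))| ≤
      ∫ x in (-L)..L, steklovDefect ε v g t x := by
  rw [← Real.norm_eq_abs]
  refine intervalIntegral.norm_integral_le_of_norm_le (by linarith)
    (Eventually.of_forall fun x hx => ?_)
    (((continuous_steklovDefect hv hg ε).uncurry_left t).intervalIntegrable _ _)
  rw [norm_mul, norm_mul, Real.norm_of_nonneg (Real.exp_pos _).le,
    Real.norm_of_nonneg (sq_nonneg _), Real.norm_eq_abs]
  exact mul_le_of_le_one_left (by positivity) (cutoff_sq_le_one ⟨hx.1.le, hx.2⟩)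

end Defect

/-! ### Mass conservation for Schrödinger flows with a bounded real potential -/

/-- A classical solution of `i ∂_t v = H_k v + V v` for times in `(s, T₁)`, where `H_k` is the
Bessel operator in the variable `x = log r` and `V` is real and bounded by `C`. The mass is bounded
by `K`, and `v` by `M` near the origin `x → -∞`. Continuity and the bounds are required for all
times, which is harmless because a flow on `[s, T₁]` can be held constant outside it. -/
structure IsLogSchrodinger (k s T₁ M : ℝ) (C K : ℝ≥0) (V : ℝ → ℝ → ℝ) (v : ℝ → ℝ → ℂ) : Prop where
  contDiff : ∀ t, ContDiff ℝ 2 (v t)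
  continuous : Continuous (Function.uncurry v)
  continuous_deriv : Continuous (Function.uncurry fun t => deriv (v t))
  continuous_deriv_deriv : Continuous (Function.uncurry fun t => deriv (deriv (v t)))
  continuous_potential_smul : Continuous (Function.uncurry fun t => V t • v t)
  hasDerivAt : ∀ t ∈ Ioo s T₁, ∀ x,
    HasDerivAt (fun τ => v τ x) (-Complex.I * (logBessel k (v t) x + V t x • v t x)) t
  abs_potential_le : ∀ t x, |V t x| ≤ C
  norm_le : ∀ t, ∀ x ≤ 0, ‖v t x‖ ≤ M
  logMass_le : ∀ t, logMass (v t) ≤ K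

namespace IsLogSchrodinger

variable {k s T T₁ M ε t : ℝ} {C K : ℝ≥0} {V : ℝ → ℝ → ℝ} {v : ℝ → ℝ → ℂ}

lemma norm_potential_smul_le (h : IsLogSchrodinger k s T₁ M C K V v) (t x : ℝ) :
    ‖(V t • v t) x‖ ≤ C * ‖v t x‖ := by
  rw [Pi.smul_apply', norm_smul]
  exact mul_le_mul_of_nonneg_right (h.abs_potential_le t x) (norm_nonneg _)

lemma continuous_logBessel_uncurry (h : IsLogSchrodinger k s T₁ M C K V v) :
    Continuous (Function.uncurry fun t => logBessel k (v t)) := by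
  have : Continuous fun p : ℝ × ℝ => v p.1 p.2 := h.continuous
  have : Continuous fun p : ℝ × ℝ => deriv (deriv (v p.1)) p.2 := h.continuous_deriv_deriv
  change Continuous fun p : ℝ × ℝ => logBessel k (v p.1) p.2
  unfold logBessel
  fun_prop

lemma hasDerivAt_space (h : IsLogSchrodinger k s T₁ M C K V v) (t x : ℝ) :
    HasDerivAt (v t) (deriv (v t) x) x :=
  ((h.contDiff t).differentiable two_ne_zero x).hasDerivAt

lemma hasDerivAt_deriv_space (h : IsLogSchrodinger k s T₁ M C K V v) (t x : ℝ) :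
    HasDerivAt (deriv (v t)) (deriv (deriv (v t)) x) x :=
  ((((contDiff_succ_iff_deriv (n := 1)).1 (h.contDiff t)).2.2).differentiable one_ne_zero
    x).hasDerivAt

lemma deriv_steklov (h : IsLogSchrodinger k s T₁ M C K V v) (ε t : ℝ) :
    deriv (steklov ε v t) = steklov ε (fun t => deriv (v t)) t :=
  funext fun x => (hasDerivAt_steklov_space h.continuous h.continuous_deriv h.hasDerivAt_space
    ε t x).deriv

lemma deriv_deriv_steklov (h : IsLogSchrodinger k s T₁ M C K V v) (ε t : ℝ) :
    deriv (deriv (steklov ε v t)) = steklov ε (fun t => deriv (deriv (v t))) t := by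
  rw [h.deriv_steklov]
  exact funext fun x => (hasDerivAt_steklov_space h.continuous_deriv h.continuous_deriv_deriv
    h.hasDerivAt_deriv_space ε t x).deriv

lemma contDiff_steklov (h : IsLogSchrodinger k s T₁ M C K V v) (ε t : ℝ) :
    ContDiff ℝ 2 (steklov ε v t) := by
  refine (contDiff_succ_iff_deriv (n := 1)).2 ⟨fun x => (hasDerivAt_steklov_space h.continuous
    h.continuous_deriv h.hasDerivAt_space ε t x).differentiableAt, by simp, ?_⟩
  refine contDiff_one_iff_deriv.2 ⟨?_, ?_⟩
  · rw [h.deriv_steklov]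
    exact fun x => (hasDerivAt_steklov_space h.continuous_deriv h.continuous_deriv_deriv
      h.hasDerivAt_deriv_space ε t x).differentiableAt
  · rw [h.deriv_deriv_steklov]
    exact (continuous_steklov h.continuous_deriv_deriv ε).uncurry_left t

lemma logBessel_steklov (h : IsLogSchrodinger k s T₁ M C K V v) (ε t x : ℝ) :
    logBessel k (steklov ε v t) x = steklov ε (fun t => logBessel k (v t)) t x := by
  have hv : Continuous fun σ => k ^ 2 • v (t + ε * σ) x :=
    (continuous_comp_affine h.continuous ε t x).const_smul (k ^ 2)
  have hv'' := continuous_comp_affine h.continuous_deriv_deriv ε t x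
  rw [logBessel, h.deriv_deriv_steklov]
  simp only [steklov, logBessel]
  rw [intervalIntegral.integral_smul, intervalIntegral.integral_sub
    (hv.intervalIntegrable _ _) (hv''.intervalIntegrable _ _), intervalIntegral.integral_smul]

lemma inv_smul_sub_eq (h : IsLogSchrodinger k s T₁ M C K V v) (hε : 0 < ε) (hs : s ≤ t)
    (hT : t + ε ≤ T₁) (x : ℝ) :
    ε⁻¹ • (v (t + ε) x - v t x) = -Complex.I *
      (logBessel k (steklov ε v t) x + steklov ε (fun t => V t • v t) t x) := by
  have hL := h.continuous_logBessel_uncurry.uncurry_right x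
  have hP := h.continuous_potential_smul.uncurry_right x
  have hrhs : Continuous fun τ => -Complex.I * (logBessel k (v τ) x + V τ x • v τ x) :=
    continuous_const.mul (hL.add hP)
  have hftc := intervalIntegral.integral_eq_sub_of_hasDerivAt_of_le (by linarith : t ≤ t + ε)
    (h.continuous.uncurry_right x).continuousOn
    (fun τ hτ => h.hasDerivAt τ ⟨hs.trans_lt hτ.1, hτ.2.trans_le hT⟩ x)
    (hrhs.intervalIntegrable _ _)
  rw [h.logBessel_steklov, steklov_eq_inv_smul_integral hε.ne',
    steklov_eq_inv_smul_integral hε.ne', ← smul_add, mul_smul_comm,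
    ← intervalIntegral.integral_add (hL.intervalIntegrable _ _) (hP.intervalIntegrable _ _),
    ← intervalIntegral.integral_const_mul, ← hftc]
  rfl

lemma logBessel_steklov_eq_sub (h : IsLogSchrodinger k s T₁ M C K V v) (hε : 0 < ε) (hs : s ≤ t)
    (hT : t + ε ≤ T₁) :
    logBessel k (steklov ε v t) = (fun x => Complex.I * ε⁻¹ • (v (t + ε) x - v t x)) +
      (-steklov ε (fun t => V t • v t) t) := by
  funext x
  rw [Pi.add_apply, Pi.neg_apply, h.inv_smul_sub_eq hε hs hT x, ← mul_assoc, mul_neg,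
    Complex.I_mul_I]
  ring

lemma logMass_steklov_potential_smul_le (h : IsLogSchrodinger k s T₁ M C K V v) (ε t : ℝ) :
    logMass (steklov ε (fun t => V t • v t) t) ≤ C ^ 2 * K :=
  logMass_steklov_le h.continuous_potential_smul fun _ _ =>
    (logMass_le_of_norm_le (h.norm_potential_smul_le _)).trans
      (mul_le_mul_right (h.logMass_le _) _)

lemma logMass_inv_smul_sub_le (h : IsLogSchrodinger k s T₁ M C K V v) (hε : 0 < ε) (t : ℝ) :
    logMass (fun x => Complex.I * ε⁻¹ • (v (t + ε) x - v t x)) ≤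
      (Real.toNNReal ε⁻¹) ^ 2 * (2 * K + 2 * K) := by
  have hneg : logMass (-v t) = logMass (v t) := by simp [logMass, massDensity]
  calc logMass (fun x => Complex.I * ε⁻¹ • (v (t + ε) x - v t x))
      ≤ (Real.toNNReal ε⁻¹) ^ 2 * logMass (v (t + ε) + (-v t)) := by
        refine logMass_le_of_norm_le fun x => le_of_eq ?_
        rw [norm_mul, Complex.norm_I, one_mul, norm_smul, Real.norm_of_nonneg (by positivity),
          Real.coe_toNNReal _ (by positivity), Pi.add_apply, Pi.neg_apply, sub_eq_add_neg]
    _ ≤ (Real.toNNReal ε⁻¹) ^ 2 * (2 * K + 2 * K) := by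
        refine mul_le_mul_right ((logMass_add_le (h.contDiff (t + ε)).continuous _).trans ?_) _
        rw [hneg]
        gcongr <;> exact h.logMass_le _

lemma exists_logMass_logBessel_steklov_le (h : IsLogSchrodinger k s T₁ M C K V v) (hε : 0 < ε)
    (hT : T + ε ≤ T₁) :
    ∃ B : ℝ≥0, ∀ t ∈ Icc s T, logMass (logBessel k (steklov ε v t)) ≤ B := by
  refine ⟨2 * ((Real.toNNReal ε⁻¹) ^ 2 * (2 * K + 2 * K)) + 2 * (C ^ 2 * K), fun t ht => ?_⟩
  have hcont : Continuous fun x => Complex.I * ε⁻¹ • (v (t + ε) x - v t x) := by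
    have := (h.contDiff (t + ε)).continuous
    have := (h.contDiff t).continuous
    fun_prop
  have hneg : logMass (-steklov ε (fun t => V t • v t) t) =
      logMass (steklov ε (fun t => V t • v t) t) := by simp [logMass, massDensity]
  rw [h.logBessel_steklov_eq_sub hε ht.1 (by linarith [ht.2])]
  refine (logMass_add_le hcont _).trans ?_
  rw [hneg]
  push_cast
  gcongr
  · exact h.logMass_inv_smul_sub_le hε t
  · exact h.logMass_steklov_potential_smul_le ε t

end IsLogSchrodinger

lemma hasDerivAt_localMass {z z' : ℝ → ℝ → ℂ} (hz : Continuous (Function.uncurry z))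
    (hz' : Continuous (Function.uncurry z'))
    (hderiv : ∀ t x, HasDerivAt (fun τ => z τ x) (z' t x) t) (L t : ℝ) :
    HasDerivAt (fun t => localMass L (z t)) (∫ x in (-L)..L,
      cutoff L x ^ 2 * (2 * inner ℝ (z t x) (z' t x) * Real.exp (2 * x))) t := by
  have := continuous_cutoff L
  have : Continuous fun p : ℝ × ℝ => z p.1 p.2 := hz
  have : Continuous fun p : ℝ × ℝ => z' p.1 p.2 := hz'
  refine hasDerivAt_intervalIntegral_of_continuous
    (F := fun t x => cutoff L x ^ 2 * (‖z t x‖ ^ 2 * Real.exp (2 * x)))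
    (F' := fun t x => cutoff L x ^ 2 * (2 * inner ℝ (z t x) (z' t x) * Real.exp (2 * x)))
    ?_ ?_ (fun t x => ((hderiv t x).norm_sq.mul_const _).const_mul _) (-L) L t
  · change Continuous fun p : ℝ × ℝ => cutoff L p.2 ^ 2 * (‖z p.1 p.2‖ ^ 2 * Real.exp (2 * p.2))
    fun_prop
  · change Continuous fun p : ℝ × ℝ =>
      cutoff L p.2 ^ 2 * (2 * inner ℝ (z p.1 p.2) (z' p.1 p.2) * Real.exp (2 * p.2))
    fun_prop

namespace IsLogSchrodinger

variable {k s T T₁ M ε t L A : ℝ} {C K : ℝ≥0} {V : ℝ → ℝ → ℝ} {v : ℝ → ℝ → ℂ}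

lemma exists_hasDerivAt_localMass_steklov (h : IsLogSchrodinger k s T₁ M C K V v) (hε : 0 < ε)
    (hT : T + ε ≤ T₁) (L : ℝ) :
    ∃ D : ℝ → ℝ, Continuous D ∧ (∀ t, HasDerivAt (fun t => localMass L (steklov ε v t)) (D t) t) ∧
      ∀ t ∈ Icc s T, D t =
        2 * (∫ x in (-L)..L, cutoff L x ^ 2 *
          (imInner (steklov ε v t x) (logBessel k (steklov ε v t) x) * Real.exp (2 * x))) +
        2 * ∫ x in (-L)..L, cutoff L x ^ 2 * (imInner (steklov ε v t x)
          (steklov ε (fun t => V t • v t) t x) * Real.exp (2 * x)) := by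
  have hcut := continuous_cutoff L
  have hz := continuous_steklov h.continuous ε
  have : Continuous fun p : ℝ × ℝ => steklov ε v p.1 p.2 := hz
  have : Continuous fun p : ℝ × ℝ => v p.1 p.2 := h.continuous
  have : Continuous fun p : ℝ × ℝ => v (p.1 + ε) p.2 :=
    h.continuous.comp (by fun_prop : Continuous fun p : ℝ × ℝ => (p.1 + ε, p.2))
  let z' (t x : ℝ) : ℂ := ε⁻¹ • (v (t + ε) x - v t x)
  have hz' : Continuous fun p : ℝ × ℝ => z' p.1 p.2 := by fun_prop
  refine ⟨_, ?_, hasDerivAt_localMass (z' := z') hz hz'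
    (hasDerivAt_steklov_time h.continuous hε.ne') L, fun t ht => ?_⟩
  · apply intervalIntegral.continuous_parametric_intervalIntegral_of_continuous'
    change Continuous fun p : ℝ × ℝ => cutoff L p.2 ^ 2 *
      (2 * inner ℝ (steklov ε v p.1 p.2) (z' p.1 p.2) * Real.exp (2 * p.2))
    fun_prop
  · have := hz.uncurry_left t
    have := continuous_logBessel (h.contDiff_steklov ε t) k
    have := (continuous_steklov h.continuous_potential_smul ε).uncurry_left t
    rw [← intervalIntegral.integral_const_mul, ← intervalIntegral.integral_const_mul,
      ← intervalIntegral.integral_add ((by fun_prop : Continuous _).intervalIntegrable _ _)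
        ((by fun_prop : Continuous _).intervalIntegrable _ _)]
    refine intervalIntegral.integral_congr fun x _ => ?_
    simp only [z', h.inv_smul_sub_eq hε ht.1 (by linarith [ht.2] : t + ε ≤ T₁) x,
      inner_neg_I_mul, map_add]
    ring

lemma exists_localMass_steklov_le (h : IsLogSchrodinger k s T₁ M C K V v) (hε : 0 < ε)
    (hsT : s ≤ T) (hT : T + ε ≤ T₁) :
    ∃ A : ℝ, ∀ L, 1 ≤ L → localMass L (steklov ε v T) ≤ localMass L (steklov ε v s) +
      ((T - s) * (A / √L) +
        2 * ∫ t in s..T, ∫ x in (-L)..L, steklovDefect ε v (fun t => V t • v t) t x) := by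
  obtain ⟨B, hB⟩ := h.exists_logMass_logBessel_steklov_le hε hT
  refine ⟨2 * (K + B + 40 * (M ^ 2 + K)), fun L hL => ?_⟩
  have hL₀ : 0 ≤ L := by linarith
  obtain ⟨D, hD_cont, hD, hD_eq⟩ := h.exists_hasDerivAt_localMass_steklov hε hT L
  have hE : Continuous fun t => ∫ x in (-L)..L, steklovDefect ε v (fun t => V t • v t) t x :=
    intervalIntegral.continuous_parametric_intervalIntegral_of_continuous'
      (continuous_steklovDefect h.continuous h.continuous_potential_smul ε) _ _
  have hD_le : ∀ t ∈ Icc s T, D t ≤ 2 * (K + B + 40 * (M ^ 2 + K)) / √L +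
      2 * ∫ x in (-L)..L, steklovDefect ε v (fun t => V t • v t) t x := fun t ht => by
    have hflux := abs_integral_cutoff_sq_mul_imInner_logBessel_le (k := k) hL
      (h.contDiff_steklov ε t) (fun x hx => norm_steklov_le fun τ => h.norm_le τ x hx)
      (integral_norm_sq_mul_exp_le_of_logMass_le (h.contDiff_steklov ε t).continuous
        (logMass_steklov_le h.continuous fun _ _ => h.logMass_le _) hL₀)
      (integral_norm_sq_mul_exp_le_of_logMass_le
        (continuous_logBessel (h.contDiff_steklov ε t) k) (hB t ht) hL₀)
    have hdefect := abs_integral_cutoff_sq_mul_imInner_le_steklovDefect h.continuous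
      h.continuous_potential_smul hL₀ ε t
    rw [hD_eq t ht, mul_div_assoc]
    linarith [(abs_le.1 hflux).2, (abs_le.1 hdefect).2]
  have hmono := intervalIntegral.integral_mono_on (μ := volume) hsT (hD_cont.intervalIntegrable _ _)
    ((by fun_prop : Continuous _).intervalIntegrable _ _) hD_le
  rw [intervalIntegral.integral_eq_sub_of_hasDerivAt (fun t _ => hD t)
      (hD_cont.intervalIntegrable _ _),
    intervalIntegral.integral_add (continuous_const.intervalIntegrable _ _)
      ((hE.const_mul 2).intervalIntegrable _ _), intervalIntegral.integral_const,
    intervalIntegral.integral_const_mul, smul_eq_mul] at hmono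
  linarith

lemma logMass_steklov_le_add (h : IsLogSchrodinger k s T₁ M C K V v) {K₁ : ℝ≥0∞} (hε : 0 < ε)
    (hsT : s ≤ T) (hT : T + ε ≤ T₁) (hK₁ : ∀ t ∈ Icc s (s + ε), logMass (v t) ≤ K₁) :
    logMass (steklov ε v T) ≤ K₁ + 2 * ∫⁻ t in Ioc s T, ∫⁻ x,
      ENNReal.ofReal (steklovDefect ε v (fun t => V t • v t) t x) := by
  obtain ⟨A, hA⟩ := h.exists_localMass_steklov_le hε hsT hT
  set defect := ∫⁻ t in Ioc s T, ∫⁻ x,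
    ENNReal.ofReal (steklovDefect ε v (fun t => V t • v t) t x)
  have hstart : logMass (steklov ε v s) ≤ K₁ := logMass_steklov_le h.continuous fun σ hσ =>
    hK₁ _ ⟨by nlinarith [hσ.1], by nlinarith [hσ.2]⟩
  have hlocal : ∀ᶠ n : ℕ in atTop, ENNReal.ofReal (localMass n (steklov ε v T)) ≤
      K₁ + (ENNReal.ofReal ((T - s) * (A / √n)) + 2 * defect) := by
    filter_upwards [eventually_ge_atTop 1] with n hn
    refine (ENNReal.ofReal_le_ofReal (hA n (by exact_mod_cast hn))).trans
      (ENNReal.ofReal_add_le.trans (add_le_add ?_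
        (ENNReal.ofReal_add_le.trans (add_le_add le_rfl ?_))))
    · exact (ofReal_localMass_le n.cast_nonneg (h.contDiff_steklov ε s).continuous).trans hstart
    · rw [ENNReal.ofReal_mul zero_le_two, ENNReal.ofReal_ofNat,
        ofReal_integral_integral_steklovDefect h.continuous h.continuous_potential_smul ε hsT
          n.cast_nonneg]
      exact mul_le_mul_right (lintegral_mono fun t => setLIntegral_le_lintegral _ _) _
  have hflux : Tendsto (fun n : ℕ => ENNReal.ofReal ((T - s) * (A / √n))) atTop (𝓝 0) := by
    have hdiv : Tendsto (fun n : ℕ => A / √(n : ℝ)) atTop (𝓝 0) := tendsto_const_nhds.div_atTop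
      (Real.tendsto_sqrt_atTop.comp tendsto_natCast_atTop_atTop)
    simpa using ENNReal.tendsto_ofReal (hdiv.const_mul (T - s))
  calc logMass (steklov ε v T)
      ≤ liminf (fun n : ℕ => ENNReal.ofReal (localMass n (steklov ε v T))) atTop :=
        logMass_le_liminf_localMass (h.contDiff_steklov ε T).continuous
    _ ≤ liminf (fun n : ℕ => K₁ + (ENNReal.ofReal ((T - s) * (A / √n)) + 2 * defect)) atTop :=
        liminf_le_liminf hlocal
    _ = K₁ + 2 * defect := by
        simpa using ((hflux.add_const (2 * defect)).const_add K₁).liminf_eq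

theorem logMass_le_of_Icc (h : IsLogSchrodinger k s T₁ M C K V v) {s₁ : ℝ} {K₁ : ℝ≥0∞}
    (hs₁ : s < s₁) (hK₁ : ∀ t ∈ Icc s s₁, logMass (v t) ≤ K₁) (hsT : s ≤ T) (hT : T < T₁) :
    logMass (v T) ≤ K₁ := by
  let ε (n : ℕ) : ℝ := 1 / ((n : ℝ) + 1)
  have hε₀ : Tendsto ε atTop (𝓝 0) := tendsto_one_div_add_atTop_nhds_zero_nat
  have hε_pos (n : ℕ) : 0 < ε n := by positivity
  have hdefect := (tendsto_lintegral_steklovDefect h.continuous h.continuous_potential_smul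
    h.norm_potential_smul_le (fun t x => imInner_smul_self (v t x) (V t x)) ENNReal.coe_ne_top
    h.logMass_le hsT).comp (tendsto_nhdsWithin_iff.2 ⟨hε₀, Eventually.of_forall hε_pos⟩)
  have hbound : ∀ᶠ n in atTop, logMass (steklov (ε n) v T) ≤ K₁ + 2 * ∫⁻ t in Ioc s T, ∫⁻ x,
      ENNReal.ofReal (steklovDefect (ε n) v (fun t => V t • v t) t x) := by
    filter_upwards [hε₀.eventually_lt_const (sub_pos.2 hs₁),
      hε₀.eventually_lt_const (sub_pos.2 hT)] with n hn₁ hnT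
    exact h.logMass_steklov_le_add (hε_pos n) hsT (by linarith)
      fun t ht => hK₁ t ⟨ht.1, by linarith [ht.2]⟩
  have hlim (x : ℝ) : Tendsto (fun n => steklov (ε n) v T x) atTop (𝓝 (v T x)) := by
    have hcont : Continuous fun e => steklov e v T x :=
      (continuous_steklov_param h.continuous).comp (by fun_prop : Continuous fun e => (e, T, x))
    simpa [steklov_zero, Function.comp_def] using (hcont.tendsto 0).comp hε₀
  calc logMass (v T) ≤ liminf (fun n => logMass (steklov (ε n) v T)) atTop :=
        logMass_le_liminf (fun n => (h.contDiff_steklov (ε n) T).continuous) hlim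
    _ ≤ liminf (fun n => K₁ + 2 * ∫⁻ t in Ioc s T, ∫⁻ x,
          ENNReal.ofReal (steklovDefect (ε n) v (fun t => V t • v t) t x)) atTop :=
        liminf_le_liminf hbound
    _ = K₁ := by
        simpa using ((ENNReal.Tendsto.const_mul hdefect (Or.inr ENNReal.ofNat_ne_top)).const_add
          K₁).liminf_eq

end IsLogSchrodinger

/-! ### Radial square-integrable profiles -/

/-- `g` is square integrable for the planar radial measure `r dr`, with `∫₀^∞ |g|² r dr ≤ K`. -/
structure RadialL2Le (g : ℝ → ℂ) (K : ℝ) : Prop where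
  integrableOn : IntegrableOn (fun r => ‖g r‖ ^ 2 * r) (Ioi 0)
  integral_le : ∫ r in Ioi 0, ‖g r‖ ^ 2 * r ≤ K

lemma ae_nonneg_norm_sq_mul (g : ℝ → ℂ) :
    0 ≤ᵐ[volume.restrict (Ioi 0)] fun r : ℝ => ‖g r‖ ^ 2 * r :=
  (ae_restrict_mem measurableSet_Ioi).mono fun _ hr => mul_nonneg (sq_nonneg _) (le_of_lt hr)

namespace RadialL2Le

variable {g : ℝ → ℂ} {K r : ℝ}

lemma integrableOn_Ioi (h : RadialL2Le g K) (hr : 0 ≤ r) :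
    IntegrableOn (fun s => ‖g s‖ ^ 2 * s) (Ioi r) :=
  h.integrableOn.mono_set (Ioi_subset_Ioi hr)

lemma intervalIntegrable (h : RadialL2Le g K) (hr : 0 ≤ r) :
    IntervalIntegrable (fun s => ‖g s‖ ^ 2 * s) volume 0 r :=
  (intervalIntegrable_iff_integrableOn_Ioc_of_le hr).2
    (h.integrableOn.mono_set Ioc_subset_Ioi_self)

lemma setIntegral_le (h : RadialL2Le g K) {s : Set ℝ} (hs : s ⊆ Ioi 0) :
    ∫ r in s, ‖g r‖ ^ 2 * r ≤ K :=
  (setIntegral_mono_set h.integrableOn (ae_nonneg_norm_sq_mul g) hs.eventuallyLE).trans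
    h.integral_le

lemma intervalIntegral_le (h : RadialL2Le g K) {a : ℝ} (ha : 0 ≤ a) (har : a ≤ r) :
    ∫ s in a..r, ‖g s‖ ^ 2 * s ≤ K := by
  rw [intervalIntegral.integral_of_le har]
  exact h.setIntegral_le fun _ hs => ha.trans_lt hs.1

lemma nonneg (h : RadialL2Le g K) : 0 ≤ K :=
  (integral_nonneg_of_ae (ae_nonneg_norm_sq_mul g)).trans h.integral_le

lemma lintegral_le (h : RadialL2Le g K) :
    ∫⁻ r in Ioi 0, ENNReal.ofReal (‖g r‖ ^ 2 * r) ≤ ENNReal.ofReal K := by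
  rw [← ofReal_integral_eq_lintegral_ofReal h.integrableOn (ae_nonneg_norm_sq_mul g)]
  exact ENNReal.ofReal_le_ofReal h.integral_le

lemma of_lintegral_le (hg : ContinuousOn g (Ioi 0)) (hK : 0 ≤ K)
    (h : ∫⁻ r in Ioi 0, ENNReal.ofReal (‖g r‖ ^ 2 * r) ≤ ENNReal.ofReal K) : RadialL2Le g K := by
  have hmeas : AEStronglyMeasurable (fun r => ‖g r‖ ^ 2 * r) (volume.restrict (Ioi 0)) :=
    ((hg.norm.pow 2).mul continuousOn_id).aestronglyMeasurable measurableSet_Ioi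
  refine ⟨(lintegral_ofReal_ne_top_iff_integrable hmeas (ae_nonneg_norm_sq_mul g)).1
    (h.trans_lt ENNReal.ofReal_lt_top).ne, ?_⟩
  rw [integral_eq_lintegral_of_nonneg_ae (ae_nonneg_norm_sq_mul g) hmeas]
  exact ENNReal.toReal_le_of_le_ofReal hK h

end RadialL2Le

/-! ### The angular coefficient and the Bogomol'nyi variable -/

/-- The coefficient `m + A_θ[f]` of the covariant angular derivative. -/
def angularCoeff (m : ℕ) (f : ℝ → ℂ) (r : ℝ) : ℝ := m + Atheta f r

/-- The Bogomol'nyi variable `f' - ((m + A_θ[f]) / r) f`, half of whose squared `L²` norm is the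
energy. -/
def bogomolny (m : ℕ) (f : ℝ → ℂ) (r : ℝ) : ℂ := deriv f r - (angularCoeff m f r / r) • f r

section AngularCoeff

variable (m : ℕ) {f : ℝ → ℂ} {r : ℝ}

lemma hasDerivAt_angularCoeff (hf : Continuous f) (r : ℝ) :
    HasDerivAt (angularCoeff m f) (-(1 / 2) * (‖f r‖ ^ 2 * r)) r := by
  have hinteg : Continuous fun s => ‖f s‖ ^ 2 * s := by fun_prop
  exact ((hinteg.integral_hasStrictDerivAt 0 r).hasDerivAt.const_mul (-(1 / 2))).const_add (m : ℝ)

lemma angularCoeff_zero (f : ℝ → ℂ) : angularCoeff m f 0 = m := by simp [angularCoeff, Atheta]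

lemma continuous_angularCoeff (hf : Continuous f) : Continuous (angularCoeff m f) :=
  continuous_iff_continuousAt.2 fun r => (hasDerivAt_angularCoeff m hf r).continuousAt

lemma antitoneOn_angularCoeff (hf : Continuous f) : AntitoneOn (angularCoeff m f) (Ici 0) := by
  refine antitoneOn_of_deriv_nonpos (convex_Ici 0) (continuous_angularCoeff m hf).continuousOn
    (fun r _ => (hasDerivAt_angularCoeff m hf r).differentiableAt.differentiableWithinAt)
    fun r hr => ?_
  rw [interior_Ici] at hr
  rw [(hasDerivAt_angularCoeff m hf r).deriv]
  linarith [mul_nonneg (sq_nonneg ‖f r‖) (le_of_lt hr)]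

lemma angularCoeff_le (hf : Continuous f) (hr : 0 ≤ r) : angularCoeff m f r ≤ m := by
  rw [← angularCoeff_zero m f]
  exact antitoneOn_angularCoeff m hf self_mem_Ici hr hr

lemma continuousOn_bogomolny (hf : ContDiff ℝ 1 f) : ContinuousOn (bogomolny m f) (Ioi 0) := by
  have hw := continuous_angularCoeff m hf.continuous
  have hf' := hf.continuous_deriv_one
  exact hf'.continuousOn.sub ((hw.continuousOn.div continuousOn_id fun r hr => ne_of_gt hr).smul
    hf.continuous.continuousOn)

lemma inner_deriv_eq (f : ℝ → ℂ) (r : ℝ) : inner ℝ (f r) (deriv f r) =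
    inner ℝ (f r) (bogomolny m f r) + angularCoeff m f r / r * ‖f r‖ ^ 2 := by
  rw [bogomolny, inner_sub_right, real_inner_smul_right, real_inner_self_eq_norm_sq]
  ring

lemma norm_add_sq_le_two_mul (a b : ℂ) : ‖a + b‖ ^ 2 ≤ 2 * ‖a‖ ^ 2 + 2 * ‖b‖ ^ 2 := by
  have := parallelogram_law_with_norm ℝ a b
  nlinarith [mul_self_nonneg ‖a - b‖]

lemma norm_deriv_sq_le (f : ℝ → ℂ) (r : ℝ) : ‖deriv f r‖ ^ 2 ≤
    2 * ‖bogomolny m f r‖ ^ 2 + 2 * ((angularCoeff m f r / r) ^ 2 * ‖f r‖ ^ 2) := by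
  have h := norm_add_sq_le_two_mul (bogomolny m f r) ((angularCoeff m f r / r) • f r)
  rwa [norm_smul, mul_pow, Real.norm_eq_abs, sq_abs, bogomolny, sub_add_cancel] at h

lemma norm_bogomolny_sq_le (f : ℝ → ℂ) (r : ℝ) : ‖bogomolny m f r‖ ^ 2 ≤
    2 * ‖deriv f r‖ ^ 2 + 2 * ((angularCoeff m f r / r) ^ 2 * ‖f r‖ ^ 2) := by
  have h := norm_add_sq_le_two_mul (deriv f r) (-((angularCoeff m f r / r) • f r))
  rwa [norm_neg, norm_smul, mul_pow, Real.norm_eq_abs, sq_abs, ← sub_eq_add_neg] at h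

theorem pohozaev_identity (hf : ContDiff ℝ 1 f) (r : ℝ) :
    1 / 2 * r ^ 2 * ‖f r‖ ^ 2 + (1 + angularCoeff m f r) ^ 2 - (1 + m) ^ 2 =
      ∫ s in (0 : ℝ)..r, s ^ 2 * inner ℝ (f s) (bogomolny m f s) := by
  have := hf.continuous
  have := hf.continuous_deriv_one
  have := continuous_angularCoeff m hf.continuous
  have hintegrand (s : ℝ) : s ^ 2 * inner ℝ (f s) (bogomolny m f s) =
      s ^ 2 * inner ℝ (f s) (deriv f s) - s * angularCoeff m f s * ‖f s‖ ^ 2 := by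
    rw [inner_deriv_eq m]
    rcases eq_or_ne s 0 with rfl | hs
    · simp
    · field_simp
      ring
  have hderiv (s : ℝ) : HasDerivAt
      (fun s => 1 / 2 * s ^ 2 * ‖f s‖ ^ 2 + (1 + angularCoeff m f s) ^ 2)
      (s ^ 2 * inner ℝ (f s) (deriv f s) - s * angularCoeff m f s * ‖f s‖ ^ 2) s := by
    refine (((((hasDerivAt_id s).pow 2).const_mul (1 / 2)).mul
      (hf.differentiable_one s).hasDerivAt.norm_sq).add
      (((hasDerivAt_angularCoeff m hf.continuous s).const_add 1).pow 2)).congr_deriv ?_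
    simp only [id, Pi.pow_apply, Nat.cast_ofNat, Nat.add_one_sub_one, pow_one]
    ring
  simp_rw [hintegrand]
  rw [intervalIntegral.integral_eq_sub_of_hasDerivAt (fun s _ => hderiv s)
    ((by fun_prop : Continuous _).intervalIntegrable _ _), angularCoeff_zero]
  ring

lemma abs_sq_mul_inner_le {a b : ℂ} {s : ℝ} (hs : 0 ≤ s) (hsr : s ≤ r) :
    |s ^ 2 * inner ℝ a b| ≤ r * ((‖a‖ ^ 2 * s + ‖b‖ ^ 2 * s) / 2) := by
  have hab : |inner ℝ a b| ≤ (‖a‖ ^ 2 + ‖b‖ ^ 2) / 2 := by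
    nlinarith [abs_real_inner_le_norm a b, sq_nonneg (‖a‖ - ‖b‖)]
  have := hs.trans hsr
  calc |s ^ 2 * inner ℝ a b| = s * (s * |inner ℝ a b|) := by
        rw [abs_mul, abs_of_nonneg (sq_nonneg s)]
        ring
    _ ≤ r * (s * ((‖a‖ ^ 2 + ‖b‖ ^ 2) / 2)) := by gcongr
    _ = r * ((‖a‖ ^ 2 * s + ‖b‖ ^ 2 * s) / 2) := by ring

theorem abs_pohozaev_le {K₀ K : ℝ} (hf : ContDiff ℝ 1 f) (hfK : RadialL2Le f K₀)
    (hvK : RadialL2Le (bogomolny m f) K) (hr : 0 ≤ r) :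
    |1 / 2 * r ^ 2 * ‖f r‖ ^ 2 + (1 + angularCoeff m f r) ^ 2 - (1 + m) ^ 2| ≤
      r * ((K₀ + K) / 2) := by
  have hf_int := hfK.intervalIntegrable hr
  have hv_int := hvK.intervalIntegrable hr
  rw [pohozaev_identity m hf, ← Real.norm_eq_abs]
  refine (intervalIntegral.norm_integral_le_of_norm_le hr (Eventually.of_forall fun s hs =>
    abs_sq_mul_inner_le (a := f s) (b := bogomolny m f s) hs.1.le hs.2)
    (((hf_int.add hv_int).div_const 2).const_mul r)).trans ?_
  rw [intervalIntegral.integral_const_mul, intervalIntegral.integral_div,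
    intervalIntegral.integral_add hf_int hv_int]
  gcongr
  exacts [hfK.intervalIntegral_le le_rfl hr, hvK.intervalIntegral_le le_rfl hr]

end AngularCoeff

/-! ### Concentration of profiles of critical mass -/

/-- A continuously differentiable profile with the mass `8π(m+1)` of the Jackiw–Pi vortex; in the
normalization `∫₀^∞ |f|² r dr` this is `4(m+1)`. -/
structure IsCriticalProfile (m : ℕ) (f : ℝ → ℂ) : Prop where
  contDiff : ContDiff ℝ 1 f
  integrableOn : IntegrableOn (fun r => ‖f r‖ ^ 2 * r) (Ioi 0)
  integral_eq : ∫ r in Ioi 0, ‖f r‖ ^ 2 * r = 4 * (m + 1)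

/-- The radius `ρ e^{-X}` inside which `m + A_θ ≥ 1/2`, when the mass beyond `ρ` exceeds `η`. Here
`X` is such that growth of `-A_θ` at rate `η / (4r) - (4(m+1) + K) / 2` on `[ρ e^{-X}, ρ]` would
exceed its total variation `2m + 2`. -/
def concentrationRadius (m : ℕ) (K η ρ : ℝ) : ℝ :=
  ρ * Real.exp (-((2 * m + 2 + (4 * (m + 1) + K) / 2 * ρ) * 4 / η))

namespace IsCriticalProfile

variable {m : ℕ} {f : ℝ → ℂ} {r r₁ K η ρ : ℝ}

lemma radialL2Le (h : IsCriticalProfile m f) : RadialL2Le f (4 * (m + 1)) :=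
  ⟨h.integrableOn, h.integral_eq.le⟩

lemma angularCoeff_eq (h : IsCriticalProfile m f) (hr : 0 ≤ r) :
    angularCoeff m f r = -(m + 2) + 1 / 2 * ∫ s in Ioi r, ‖f s‖ ^ 2 * s := by
  have hsplit := intervalIntegral.integral_interval_add_Ioi h.integrableOn
    (h.radialL2Le.integrableOn_Ioi hr)
  rw [h.integral_eq] at hsplit
  rw [angularCoeff, Atheta]
  linarith

lemma neg_le_angularCoeff (h : IsCriticalProfile m f) (hr : 0 ≤ r) :
    -((m : ℝ) + 2) ≤ angularCoeff m f r := by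
  rw [h.angularCoeff_eq hr]
  linarith [setIntegral_nonneg (μ := volume) measurableSet_Ioi fun s (hs : s ∈ Ioi r) =>
    mul_nonneg (sq_nonneg ‖f s‖) (hr.trans hs.le)]

lemma abs_angularCoeff_le (h : IsCriticalProfile m f) (hr : 0 ≤ r) :
    |angularCoeff m f r| ≤ m + 2 :=
  abs_le.2 ⟨h.neg_le_angularCoeff hr, by linarith [angularCoeff_le m h.contDiff.continuous hr]⟩

lemma abs_pohozaev_le (h : IsCriticalProfile m f) (hv : RadialL2Le (bogomolny m f) K)
    (hr : 0 ≤ r) :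
    |1 / 2 * r ^ 2 * ‖f r‖ ^ 2 + (1 + angularCoeff m f r) ^ 2 - (1 + m) ^ 2| ≤
      r * ((4 * (m + 1) + K) / 2) :=
  CSS.abs_pohozaev_le m h.contDiff h.radialL2Le hv hr

lemma norm_sq_le (h : IsCriticalProfile m f) (hv : RadialL2Le (bogomolny m f) K) (hr : 0 < r) :
    ‖f r‖ ^ 2 ≤ 2 * ((1 + m) ^ 2 + r * ((4 * (m + 1) + K) / 2)) / r ^ 2 := by
  rw [le_div_iff₀ (by positivity)]
  nlinarith [(abs_le.1 (h.abs_pohozaev_le hv hr.le)).2, sq_nonneg (1 + angularCoeff m f r)]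

lemma le_norm_sq_mul_of_angularCoeff_le (h : IsCriticalProfile m f) (hm : 1 ≤ m)
    (hv : RadialL2Le (bogomolny m f) K) (hρ : 0 < ρ) (hη : 0 ≤ η)
    (htail : η < ∫ s in Ioi ρ, ‖f s‖ ^ 2 * s) (hr : 0 < r) (hrρ : r ≤ ρ)
    (hw : angularCoeff m f r ≤ 1 / 2) :
    η / 4 * r⁻¹ - (4 * (m + 1) + K) / 2 ≤ 1 / 2 * (‖f r‖ ^ 2 * r) := by
  have hm' : (1 : ℝ) ≤ m := by exact_mod_cast hm
  have hw_mono : angularCoeff m f ρ ≤ angularCoeff m f r :=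
    antitoneOn_angularCoeff m h.contDiff.continuous hr.le hρ.le hrρ
  have hgap : η / 4 ≤ (m - angularCoeff m f r) * (m + 2 + angularCoeff m f r) := by
    rw [h.angularCoeff_eq hρ.le] at hw_mono
    nlinarith
  have hpoh := (abs_le.1 (h.abs_pohozaev_le hv hr.le)).1
  have hscaled : η / 4 - (4 * (m + 1) + K) / 2 * r ≤ 1 / 2 * r ^ 2 * ‖f r‖ ^ 2 := by nlinarith
  have hdiv : 1 / 2 * (‖f r‖ ^ 2 * r) - (η / 4 * r⁻¹ - (4 * (m + 1) + K) / 2) =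
      (1 / 2 * r ^ 2 * ‖f r‖ ^ 2 - (η / 4 - (4 * (m + 1) + K) / 2 * r)) / r := by
    field_simp
  rw [← sub_nonneg, hdiv]
  exact div_nonneg (sub_nonneg.2 hscaled) hr.le

lemma monotoneOn_of_angularCoeff_le (h : IsCriticalProfile m f) (hm : 1 ≤ m)
    (hv : RadialL2Le (bogomolny m f) K) (hρ : 0 < ρ) (hη : 0 ≤ η)
    (htail : η < ∫ s in Ioi ρ, ‖f s‖ ^ 2 * s) (hr₁ : 0 < r₁)
    (hw : angularCoeff m f r₁ ≤ 1 / 2) :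
    MonotoneOn (fun r => -angularCoeff m f r - η / 4 * Real.log r + (4 * (m + 1) + K) / 2 * r)
      (Icc r₁ ρ) := by
  have hderiv (r : ℝ) (hr : 0 < r) := (((hasDerivAt_angularCoeff m h.contDiff.continuous r).neg).sub
    ((Real.hasDerivAt_log hr.ne').const_mul (η / 4))).add
    ((hasDerivAt_id r).const_mul ((4 * (m + 1) + K) / 2))
  have hpos {r : ℝ} (hr : r ∈ Icc r₁ ρ) : 0 < r := hr₁.trans_le hr.1
  refine monotoneOn_of_deriv_nonneg (convex_Icc _ _)
    (fun r hr => (hderiv r (hpos hr)).continuousAt.continuousWithinAt)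
    (fun r hr => (hderiv r (hpos (interior_subset hr))).differentiableAt.differentiableWithinAt)
    fun r hr => ?_
  have hr' := interior_subset hr
  have hlow := h.le_norm_sq_mul_of_angularCoeff_le hm hv hρ hη htail (hpos hr') hr'.2
    ((antitoneOn_angularCoeff m h.contDiff.continuous hr₁.le (hpos hr').le hr'.1).trans hw)
  refine le_of_le_of_eq ?_ (hderiv r (hpos hr')).deriv.symm
  linarith

theorem half_le_angularCoeff (h : IsCriticalProfile m f) (hm : 1 ≤ m)
    (hv : RadialL2Le (bogomolny m f) K) (hρ : 0 < ρ) (hη : 0 < η)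
    (htail : η < ∫ s in Ioi ρ, ‖f s‖ ^ 2 * s) :
    1 / 2 ≤ angularCoeff m f (concentrationRadius m K η ρ) := by
  have hK := hv.nonneg
  set c : ℝ := (4 * (m + 1) + K) / 2 with hc
  set X : ℝ := (2 * m + 2 + c * ρ) * 4 / η with hX
  set r₁ := concentrationRadius m K η ρ with hr₁
  have hr₁_pos : 0 < r₁ := mul_pos hρ (Real.exp_pos _)
  have hr₁_le : r₁ ≤ ρ := mul_le_of_le_one_right hρ.le
    (Real.exp_le_one_iff.2 (neg_nonpos.2 (by positivity)))
  by_contra! hlt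
  have hmono := h.monotoneOn_of_angularCoeff_le hm hv hρ hη.le htail hr₁_pos hlt.le
    ⟨le_rfl, hr₁_le⟩ ⟨hr₁_le, le_rfl⟩ hr₁_le
  have hlog : Real.log r₁ = Real.log ρ - X := by
    rw [hr₁, concentrationRadius, Real.log_mul hρ.ne' (Real.exp_ne_zero _), Real.log_exp]
    ring
  have hX_mul : η / 4 * X = 2 * m + 2 + c * ρ := by
    rw [hX]
    field_simp
  have hm' : (1 : ℝ) ≤ m := by exact_mod_cast hm
  have hcr₁ : 0 ≤ c * r₁ := by positivity
  simp only [← hc, hlog] at hmono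
  linarith [h.neg_le_angularCoeff hρ.le]

/-- Where `m + A_θ ≥ 1/2` the logarithmic derivative of `|f|²` is at least `1/r`, up to the
Bogomol'nyi variable, so that the Hardy term is controlled by a boundary term. -/
lemma norm_deriv_sq_mul_le_of_half_le (h : IsCriticalProfile m f) (hr : 0 < r)
    (hw : 1 / 2 ≤ angularCoeff m f r) :
    ‖deriv f r‖ ^ 2 * r ≤ 2 * (‖bogomolny m f r‖ ^ 2 * r) +
      4 * m ^ 2 * (2 * inner ℝ (f r) (deriv f r) + 2 * (‖bogomolny m f r‖ ^ 2 * r)) := by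
  have hw_le := angularCoeff_le m h.contDiff.continuous hr.le
  have hinner := (abs_le.1 (abs_real_inner_le_norm (f r) (bogomolny m f r))).1
  have hderiv := norm_deriv_sq_le m f r
  rw [inner_deriv_eq m]
  set a := ‖f r‖
  set b := ‖bogomolny m f r‖
  set w := angularCoeff m f r
  have hhardy : a ^ 2 / r / 2 ≤
      2 * (inner ℝ (f r) (bogomolny m f r) + w / r * a ^ 2) + 2 * (b ^ 2 * r) := by
    have hsq : 0 ≤ (a - 2 * r * b) ^ 2 / (2 * r) := by positivity
    have hsq_eq : (a - 2 * r * b) ^ 2 / (2 * r) = a ^ 2 / r / 2 - 2 * a * b + 2 * (b ^ 2 * r) := by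
      field_simp
      ring
    have hcoeff : 0 ≤ (2 * w - 1) * (a ^ 2 / r) := mul_nonneg (by linarith) (by positivity)
    have hcoeff_eq : (2 * w - 1) * (a ^ 2 / r) = 2 * (w / r * a ^ 2) - a ^ 2 / r := by ring
    linarith
  calc ‖deriv f r‖ ^ 2 * r ≤ (2 * b ^ 2 + 2 * ((w / r) ^ 2 * a ^ 2)) * r := by gcongr
    _ = 2 * (b ^ 2 * r) + 4 * w ^ 2 * (a ^ 2 / r / 2) := by
        field_simp
        ring
    _ ≤ 2 * (b ^ 2 * r) + 4 * m ^ 2 * (a ^ 2 / r / 2) := by gcongr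
    _ ≤ _ := by gcongr

lemma intervalIntegral_norm_deriv_sq_le (h : IsCriticalProfile m f)
    (hv : RadialL2Le (bogomolny m f) K) (hr₁ : 0 < r₁) (hw : 1 / 2 ≤ angularCoeff m f r₁) :
    ∫ r in (0 : ℝ)..r₁, ‖deriv f r‖ ^ 2 * r ≤ 2 * K + 4 * m ^ 2 * (‖f r₁‖ ^ 2 + 2 * K) := by
  have := h.contDiff.continuous
  have hderiv_cont := h.contDiff.continuous_deriv_one
  have hv_int := (hv.intervalIntegrable hr₁.le).const_mul 2
  have hinner : IntervalIntegrable (fun r => 2 * inner ℝ (f r) (deriv f r)) volume 0 r₁ :=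
    (by fun_prop : Continuous _).intervalIntegrable _ _
  have hmono := intervalIntegral.integral_mono_on_of_le_Ioo (μ := volume) hr₁.le
    ((by fun_prop : Continuous fun r => ‖deriv f r‖ ^ 2 * r).intervalIntegrable _ _)
    (hv_int.add ((hinner.add hv_int).const_mul (4 * (m : ℝ) ^ 2))) fun r hr =>
      h.norm_deriv_sq_mul_le_of_half_le hr.1 (hw.trans
        (antitoneOn_angularCoeff m h.contDiff.continuous hr.1.le hr₁.le hr.2.le))
  have hftc := intervalIntegral.integral_eq_sub_of_hasDerivAt (a := 0) (b := r₁)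
    (fun r _ => (h.contDiff.differentiable_one r).hasDerivAt.norm_sq) hinner
  have hv_le := hv.intervalIntegral_le le_rfl hr₁.le
  refine hmono.trans ?_
  rw [intervalIntegral.integral_add hv_int ((hinner.add hv_int).const_mul _),
    intervalIntegral.integral_const_mul, intervalIntegral.integral_const_mul,
    intervalIntegral.integral_add hinner hv_int, hftc, intervalIntegral.integral_const_mul]
  gcongr
  exact sub_le_self _ (sq_nonneg _)

lemma setIntegral_norm_deriv_sq_le (h : IsCriticalProfile m f)
    (hv : RadialL2Le (bogomolny m f) K)
    (hderiv : IntegrableOn (fun r => ‖deriv f r‖ ^ 2 * r) (Ioi 0)) (hr₁ : 0 < r₁) :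
    ∫ r in Ioi r₁, ‖deriv f r‖ ^ 2 * r ≤
      2 * K + 2 * ((m + 2) ^ 2 / r₁ ^ 2) * (4 * (m + 1)) := by
  have hv_int := (hv.integrableOn_Ioi hr₁.le).const_mul 2
  have hf_int := (h.radialL2Le.integrableOn_Ioi hr₁.le).const_mul (2 * (((m : ℝ) + 2) ^ 2 / r₁ ^ 2))
  have hpoint (r : ℝ) (hr : r ∈ Ioi r₁) : ‖deriv f r‖ ^ 2 * r ≤
      2 * (‖bogomolny m f r‖ ^ 2 * r) + 2 * ((m + 2) ^ 2 / r₁ ^ 2) * (‖f r‖ ^ 2 * r) := by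
    have hr_pos : 0 < r := hr₁.trans hr
    have hw : (angularCoeff m f r / r) ^ 2 ≤ (m + 2) ^ 2 / r₁ ^ 2 := by
      rw [div_pow, ← sq_abs (angularCoeff m f r)]
      gcongr
      exacts [h.abs_angularCoeff_le hr_pos.le, le_of_lt hr]
    have hnorm := norm_deriv_sq_le m f r
    calc ‖deriv f r‖ ^ 2 * r
        ≤ (2 * ‖bogomolny m f r‖ ^ 2 + 2 * ((m + 2) ^ 2 / r₁ ^ 2 * ‖f r‖ ^ 2)) * r := by
          gcongr
          exact hnorm.trans (by gcongr)
      _ = _ := by ring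
  have hmono := setIntegral_mono_on (hderiv.mono_set (Ioi_subset_Ioi hr₁.le))
    (hv_int.add hf_int) measurableSet_Ioi hpoint
  rw [integral_add' hv_int hf_int, integral_const_mul, integral_const_mul] at hmono
  refine hmono.trans ?_
  gcongr
  exacts [hv.setIntegral_le (Ioi_subset_Ioi hr₁.le), h.radialL2Le.setIntegral_le
    (Ioi_subset_Ioi hr₁.le)]

theorem exists_integral_norm_deriv_sq_le (hm : 1 ≤ m) (K : ℝ) (hρ : 0 < ρ) (hη : 0 < η) :
    ∃ Λ : ℝ, ∀ f, IsCriticalProfile m f → RadialL2Le (bogomolny m f) K →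
      IntegrableOn (fun r => ‖deriv f r‖ ^ 2 * r) (Ioi 0) →
      η < ∫ r in Ioi ρ, ‖f r‖ ^ 2 * r → ∫ r in Ioi 0, ‖deriv f r‖ ^ 2 * r ≤ Λ := by
  set r₁ := concentrationRadius m K η ρ
  have hr₁ : 0 < r₁ := mul_pos hρ (Real.exp_pos _)
  refine ⟨(2 * K +
      4 * m ^ 2 * (2 * ((1 + m) ^ 2 + r₁ * ((4 * (m + 1) + K) / 2)) / r₁ ^ 2 + 2 * K)) +
    (2 * K + 2 * ((m + 2) ^ 2 / r₁ ^ 2) * (4 * (m + 1))), fun f h hv hderiv htail => ?_⟩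
  rw [← intervalIntegral.integral_interval_add_Ioi hderiv
    (hderiv.mono_set (Ioi_subset_Ioi hr₁.le))]
  refine add_le_add ((h.intervalIntegral_norm_deriv_sq_le hv hr₁
    (h.half_le_angularCoeff hm hv hρ hη htail)).trans ?_)
    (h.setIntegral_norm_deriv_sq_le hv hderiv hr₁)
  gcongr
  exact h.norm_sq_le hv hr₁

end IsCriticalProfile

/-! ### Potentials of profiles of critical mass -/

/-- A majorant of `|f|² / r`, integrable when `f` has finite mass, for `f` with `|f| ≤ M r` on
`[0, 1]`. -/
def divMajorant (M : ℝ) (f : ℝ → ℂ) (r : ℝ) : ℝ :=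
  (Ioc (0 : ℝ) 1).indicator (fun _ => M ^ 2) r + ‖f r‖ ^ 2 * r

section DivMajorant

variable {M r : ℝ} {f : ℝ → ℂ}

lemma integrable_indicator_Ioc_const (M : ℝ) :
    Integrable ((Ioc (0 : ℝ) 1).indicator fun _ => M ^ 2) :=
  (integrable_indicator_iff measurableSet_Ioc).2 (integrableOn_const measure_Ioc_lt_top.ne)

lemma integrableOn_divMajorant (M : ℝ) (hf : IntegrableOn (fun r => ‖f r‖ ^ 2 * r) (Ioi 0)) :
    IntegrableOn (divMajorant M f) (Ioi 0) :=
  (integrable_indicator_Ioc_const M).integrableOn.add hf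

lemma integral_divMajorant (M : ℝ) (hf : IntegrableOn (fun r => ‖f r‖ ^ 2 * r) (Ioi 0)) :
    ∫ r in Ioi 0, divMajorant M f r = M ^ 2 + ∫ r in Ioi 0, ‖f r‖ ^ 2 * r := by
  have hone : ∫ r in Ioi 0, (Ioc (0 : ℝ) 1).indicator (fun _ => M ^ 2) r = M ^ 2 := by
    rw [setIntegral_indicator measurableSet_Ioc, inter_eq_right.2 Ioc_subset_Ioi_self]
    simp
  rw [← hone]
  exact integral_add (integrable_indicator_Ioc_const M).integrableOn hf

lemma divMajorant_nonneg (M : ℝ) (f : ℝ → ℂ) (hr : 0 ≤ r) : 0 ≤ divMajorant M f r :=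
  add_nonneg (indicator_nonneg (fun _ _ => sq_nonneg M) _) (by positivity)

lemma norm_sq_div_le_divMajorant (h0 : ∀ r ∈ Icc (0 : ℝ) 1, ‖f r‖ ≤ M * r) (hr : 0 < r) :
    ‖f r‖ ^ 2 / r ≤ divMajorant M f r := by
  rw [divMajorant, div_le_iff₀ hr]
  rcases le_or_gt r 1 with hr1 | hr1
  · rw [indicator_of_mem (show r ∈ Ioc (0 : ℝ) 1 from ⟨hr, hr1⟩)]
    calc ‖f r‖ ^ 2 ≤ (M * r) ^ 2 := by gcongr; exact h0 r ⟨hr.le, hr1⟩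
      _ = M ^ 2 * r * r := by ring
      _ ≤ (M ^ 2 + ‖f r‖ ^ 2 * r) * r := by
        gcongr
        exact (mul_le_of_le_one_right (sq_nonneg M) hr1).trans
          (le_add_of_nonneg_right (by positivity))
  · rw [indicator_of_notMem fun h => hr1.not_ge h.2, zero_add, mul_assoc]
    exact le_mul_of_one_le_right (sq_nonneg _) (by nlinarith)

end DivMajorant

namespace IsCriticalProfile

variable {m : ℕ} {f : ℝ → ℂ} {r K M : ℝ}

lemma setIntegral_divMajorant_le (h : IsCriticalProfile m f) (hr : 0 ≤ r) :
    ∫ s in Ioi r, divMajorant M f s ≤ M ^ 2 + 4 * (m + 1) := by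
  rw [← h.integral_eq, ← integral_divMajorant M h.integrableOn]
  exact setIntegral_mono_set (integrableOn_divMajorant M h.integrableOn)
    ((ae_restrict_mem measurableSet_Ioi).mono fun s hs => divMajorant_nonneg M f (le_of_lt hs))
    (Ioi_subset_Ioi hr).eventuallyLE

lemma norm_angularCoeff_mul_div_le (h : IsCriticalProfile m f)
    (h0 : ∀ r ∈ Icc (0 : ℝ) 1, ‖f r‖ ≤ M * r) (hr : 0 < r) :
    ‖angularCoeff m f r * ‖f r‖ ^ 2 / r‖ ≤ (m + 2) * divMajorant M f r := by
  rw [mul_div_assoc, norm_mul, Real.norm_of_nonneg (by positivity : 0 ≤ ‖f r‖ ^ 2 / r)]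
  exact mul_le_mul (h.abs_angularCoeff_le hr.le) (norm_sq_div_le_divMajorant h0 hr)
    (by positivity) (by positivity)

lemma abs_At_le (h : IsCriticalProfile m f) (h0 : ∀ r ∈ Icc (0 : ℝ) 1, ‖f r‖ ≤ M * r)
    (hr : 0 ≤ r) : |At m f r| ≤ (m + 2) * (M ^ 2 + 4 * (m + 1)) := by
  rw [At, abs_neg]
  calc |∫ s in Ioi r, angularCoeff m f s * ‖f s‖ ^ 2 / s|
      ≤ ∫ s in Ioi r, (m + 2) * divMajorant M f s :=
        norm_integral_le_of_norm_le
          (((integrableOn_divMajorant M h.integrableOn).mono_set (Ioi_subset_Ioi hr)).const_mul _)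
          ((ae_restrict_mem measurableSet_Ioi).mono fun s hs =>
            h.norm_angularCoeff_mul_div_le h0 (hr.trans_lt hs))
    _ = (m + 2) * ∫ s in Ioi r, divMajorant M f s := integral_const_mul _ _
    _ ≤ (m + 2) * (M ^ 2 + 4 * (m + 1)) := by gcongr; exact h.setIntegral_divMajorant_le hr

lemma hasDerivAt_At (h : IsCriticalProfile m f) (h0 : ∀ r ∈ Icc (0 : ℝ) 1, ‖f r‖ ≤ M * r)
    (hr : 0 < r) : HasDerivAt (At m f) (angularCoeff m f r * ‖f r‖ ^ 2 / r) r := by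
  have hw := continuous_angularCoeff m h.contDiff.continuous
  have hf := h.contDiff.continuous
  set g := fun s => angularCoeff m f s * ‖f s‖ ^ 2 / s
  have hg : ContinuousOn g (Ioi 0) :=
    ContinuousOn.div (by fun_prop) continuousOn_id fun s hs => ne_of_gt hs
  have hinteg : IntegrableOn g (Ioi 0) :=
    ((integrableOn_divMajorant M h.integrableOn).const_mul _).mono'
      (hg.aestronglyMeasurable measurableSet_Ioi)
      ((ae_restrict_mem measurableSet_Ioi).mono fun s hs => h.norm_angularCoeff_mul_div_le h0 hs)
  have hderiv := intervalIntegral.integral_hasDerivAt_right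
    ((intervalIntegrable_iff_integrableOn_Ioc_of_le hr.le).2 (hinteg.mono_set Ioc_subset_Ioi_self))
    (hg.stronglyMeasurableAtFilter isOpen_Ioi r hr) (hg.continuousAt (Ioi_mem_nhds hr))
  refine (hderiv.sub_const (∫ s in Ioi 0, g s)).congr_of_eventuallyEq ?_
  filter_upwards [Ioi_mem_nhds hr] with x hx
  have hsplit := intervalIntegral.integral_interval_add_Ioi hinteg
    (hinteg.mono_set (Ioi_subset_Ioi (le_of_lt hx)))
  rw [show At m f x = -∫ s in Ioi x, g s from rfl, ← hsplit]
  ring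

lemma norm_bogomolny_sq_mul_le (h : IsCriticalProfile m f)
    (h0 : ∀ r ∈ Icc (0 : ℝ) 1, ‖f r‖ ≤ M * r) (hr : 0 < r) :
    ‖bogomolny m f r‖ ^ 2 * r ≤
      2 * (‖deriv f r‖ ^ 2 * r) + 2 * (m + 2) ^ 2 * divMajorant M f r := by
  have hw : angularCoeff m f r ^ 2 ≤ (m + 2) ^ 2 := by
    rw [← sq_abs]
    gcongr
    exact h.abs_angularCoeff_le hr.le
  calc ‖bogomolny m f r‖ ^ 2 * r
      ≤ (2 * ‖deriv f r‖ ^ 2 + 2 * ((angularCoeff m f r / r) ^ 2 * ‖f r‖ ^ 2)) * r := by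
        gcongr
        exact norm_bogomolny_sq_le m f r
    _ = 2 * (‖deriv f r‖ ^ 2 * r) + 2 * angularCoeff m f r ^ 2 * (‖f r‖ ^ 2 / r) := by field_simp
    _ ≤ 2 * (‖deriv f r‖ ^ 2 * r) + 2 * (m + 2) ^ 2 * divMajorant M f r := by
        gcongr
        exact norm_sq_div_le_divMajorant h0 hr

lemma radialL2Le_bogomolny (h : IsCriticalProfile m f)
    (h0 : ∀ r ∈ Icc (0 : ℝ) 1, ‖f r‖ ≤ M * r) (hK : RadialL2Le (deriv f) K) :
    RadialL2Le (bogomolny m f) (2 * K + 2 * (m + 2) ^ 2 * (M ^ 2 + 4 * (m + 1))) := by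
  have hmaj := (integrableOn_divMajorant M h.integrableOn).const_mul (2 * ((m : ℝ) + 2) ^ 2)
  have hdom := (hK.integrableOn.const_mul 2).add hmaj
  have hle : ∀ᵐ r ∂volume.restrict (Ioi 0), ‖bogomolny m f r‖ ^ 2 * r ≤
      2 * (‖deriv f r‖ ^ 2 * r) + 2 * (m + 2) ^ 2 * divMajorant M f r :=
    (ae_restrict_mem measurableSet_Ioi).mono fun r hr => h.norm_bogomolny_sq_mul_le h0 hr
  have hinteg : IntegrableOn (fun r => ‖bogomolny m f r‖ ^ 2 * r) (Ioi 0) := by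
    refine hdom.mono' ((((continuousOn_bogomolny m h.contDiff).norm.pow 2).mul
      continuousOn_id).aestronglyMeasurable measurableSet_Ioi) ?_
    filter_upwards [hle, ae_nonneg_norm_sq_mul (bogomolny m f)] with r hr hr0
    rwa [Real.norm_of_nonneg hr0]
  refine ⟨hinteg, (integral_mono_ae hinteg hdom hle).trans ?_⟩
  rw [integral_add' (hK.integrableOn.const_mul 2) hmaj, integral_const_mul, integral_const_mul]
  gcongr
  · exact hK.integral_le
  · exact h.setIntegral_divMajorant_le le_rfl

lemma norm_sq_le_of_deriv (h : IsCriticalProfile m f) (hM : 0 ≤ M)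
    (h0 : ∀ r ∈ Icc (0 : ℝ) 1, ‖f r‖ ≤ M * r) (hK : RadialL2Le (deriv f) K) (hr : 0 ≤ r) :
    ‖f r‖ ^ 2 ≤ M ^ 2 + (4 * (m + 1) + K) := by
  have hf := h.contDiff.continuous
  have hf' := h.contDiff.continuous_deriv_one
  have hnear (s : ℝ) (hs : s ∈ Icc (0 : ℝ) 1) : ‖f s‖ ^ 2 ≤ M ^ 2 := by
    gcongr
    exact (h0 s hs).trans (mul_le_of_le_one_right hM hs.2)
  rcases le_or_gt r 1 with hr1 | hr1
  · linarith [hnear r ⟨hr, hr1⟩, h.radialL2Le.nonneg, hK.nonneg]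
  have hderiv (s : ℝ) : HasDerivAt (fun x => ‖f x‖ ^ 2) (2 * inner ℝ (f s) (deriv f s)) s :=
    ((h.contDiff.differentiable (by norm_num)) s).hasDerivAt.norm_sq
  have hinner : Continuous fun s => 2 * inner ℝ (f s) (deriv f s) := by fun_prop
  have hgrowth : ‖f r‖ ^ 2 - ‖f 1‖ ^ 2 ≤ 4 * (m + 1) + K := by
    rw [← intervalIntegral.integral_eq_sub_of_hasDerivAt (fun s _ => hderiv s)
      (hinner.intervalIntegrable _ _)]
    calc ∫ s in (1 : ℝ)..r, 2 * inner ℝ (f s) (deriv f s)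
        ≤ ∫ s in (1 : ℝ)..r, (‖f s‖ ^ 2 * s + ‖deriv f s‖ ^ 2 * s) := by
          refine intervalIntegral.integral_mono_on (μ := volume) hr1.le
            (hinner.intervalIntegrable _ _) (Continuous.intervalIntegrable (by fun_prop) _ _)
            fun s hs => ?_
          nlinarith [real_inner_le_norm (f s) (deriv f s), sq_nonneg (‖f s‖ - ‖deriv f s‖),
            hs.1, sq_nonneg ‖f s‖, sq_nonneg ‖deriv f s‖]
      _ = (∫ s in (1 : ℝ)..r, ‖f s‖ ^ 2 * s) + ∫ s in (1 : ℝ)..r, ‖deriv f s‖ ^ 2 * s :=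
          intervalIntegral.integral_add (Continuous.intervalIntegrable (by fun_prop) _ _)
            (Continuous.intervalIntegrable (by fun_prop) _ _)
      _ ≤ 4 * (m + 1) + K := add_le_add (h.radialL2Le.intervalIntegral_le zero_le_one hr1.le)
          (hK.intervalIntegral_le zero_le_one hr1.le)
  linarith [hnear 1 ⟨zero_le_one, le_rfl⟩]

lemma sub_angularCoeff_le (h : IsCriticalProfile m f) (hM : 0 ≤ M)
    (h0 : ∀ r ∈ Icc (0 : ℝ) 1, ‖f r‖ ≤ M * r) (hr : 0 ≤ r) :
    m - angularCoeff m f r ≤ (M ^ 2 + (2 * m + 2)) * r ^ 2 := by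
  rcases le_or_gt r 1 with hr1 | hr1
  · have hmass : ∫ s in (0 : ℝ)..r, ‖f s‖ ^ 2 * s ≤ M ^ 2 * r * |r - 0| := by
      refine (Real.le_norm_self _).trans
        (intervalIntegral.norm_integral_le_of_norm_le_const fun s hs => ?_)
      rw [uIoc_of_le hr] at hs
      rw [Real.norm_of_nonneg (mul_nonneg (sq_nonneg _) hs.1.le)]
      have hs1 := hs.2.trans hr1
      gcongr
      · exact hs.1.le
      · exact (h0 s ⟨hs.1.le, hs1⟩).trans (mul_le_of_le_one_right hM hs1)
      · exact hs.2
    rw [sub_zero, abs_of_nonneg hr] at hmass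
    rw [angularCoeff, Atheta]
    nlinarith [sq_nonneg (M * r), mul_nonneg m.cast_nonneg (sq_nonneg r)]
  · have hone : 1 ≤ r ^ 2 := one_le_pow₀ hr1.le
    have := mul_le_mul_of_nonneg_left hone (by positivity : 0 ≤ M ^ 2 + (2 * m + 2))
    linarith [h.neg_le_angularCoeff hr, sq_nonneg M]

end IsCriticalProfile

/-- The real potential `V` in the equation
`i ∂_t v + ∂_r² v + (1/r) ∂_r v - ((m+1)²/r²) v = V v` of the Bogomol'nyi variable. -/
def bogomolnyPotential (m : ℕ) (f : ℝ → ℂ) (r : ℝ) : ℝ :=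
  ((1 + angularCoeff m f r) ^ 2 - (1 + m) ^ 2) / r ^ 2 + At m f r - ‖f r‖ ^ 2

namespace IsCriticalProfile

variable {m : ℕ} {f : ℝ → ℂ} {r K M : ℝ}

lemma abs_angularCoeff_sq_sub_div_le (h : IsCriticalProfile m f) (hM : 0 ≤ M)
    (h0 : ∀ r ∈ Icc (0 : ℝ) 1, ‖f r‖ ≤ M * r) (hr : 0 < r) :
    |((1 + angularCoeff m f r) ^ 2 - (1 + m) ^ 2) / r ^ 2| ≤
      (2 * m + 2) * (M ^ 2 + (2 * m + 2)) := by
  have hle := angularCoeff_le m h.contDiff.continuous hr.le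
  have hge := h.neg_le_angularCoeff hr.le
  have hfactor : ((1 + angularCoeff m f r) ^ 2 - (1 + m) ^ 2) / r ^ 2 =
      -((angularCoeff m f r + m + 2) * ((m - angularCoeff m f r) / r ^ 2)) := by ring
  have hdiv : (m - angularCoeff m f r) / r ^ 2 ≤ M ^ 2 + (2 * m + 2) :=
    (div_le_iff₀ (by positivity)).2 (h.sub_angularCoeff_le hM h0 hr.le)
  have hdiv0 : 0 ≤ (m - angularCoeff m f r) / r ^ 2 := div_nonneg (by linarith) (sq_nonneg r)
  rw [hfactor, abs_neg, abs_of_nonneg (mul_nonneg (by linarith) hdiv0)]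
  exact mul_le_mul (by linarith) hdiv hdiv0 (by positivity)

lemma abs_bogomolnyPotential_le (h : IsCriticalProfile m f) (hM : 0 ≤ M)
    (h0 : ∀ r ∈ Icc (0 : ℝ) 1, ‖f r‖ ≤ M * r) (hK : RadialL2Le (deriv f) K) (hr : 0 < r) :
    |bogomolnyPotential m f r| ≤ (2 * m + 2) * (M ^ 2 + (2 * m + 2)) +
      (m + 2) * (M ^ 2 + 4 * (m + 1)) + (M ^ 2 + (4 * (m + 1) + K)) := by
  have hangular := h.abs_angularCoeff_sq_sub_div_le hM h0 hr
  have helectric := h.abs_At_le h0 hr.le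
  have hdensity := h.norm_sq_le_of_deriv hM h0 hK hr.le
  refine (abs_sub _ _).trans
    (add_le_add ((abs_add_le _ _).trans (add_le_add hangular helectric)) ?_)
  rwa [abs_of_nonneg (sq_nonneg _)]

end IsCriticalProfile

/-! ### Smooth functions on a space-time strip -/

/-- Smoothness of `F`, as a function of time and space jointly, on the strip `I × ℝ`. -/
def SmoothOnStrip {E : Type*} [NormedAddCommGroup E] [NormedSpace ℝ E] (I : Set ℝ)
    (F : ℝ → ℝ → E) : Prop :=
  ContDiffOn ℝ (⊤ : ℕ∞) (Function.uncurry F) (I ×ˢ univ)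

/-- The partial derivative of `F` in its first variable. -/
def timeDeriv {E : Type*} [NormedAddCommGroup E] [NormedSpace ℝ E] (F : ℝ → ℝ → E) (t x : ℝ) : E :=
  deriv (fun τ => F τ x) t

namespace SmoothOnStrip

variable {E : Type*} [NormedAddCommGroup E] [NormedSpace ℝ E] {I : Set ℝ} {F : ℝ → ℝ → E}
  {t : ℝ}

lemma contDiffAt (hF : SmoothOnStrip I F) (hI : IsOpen I) (ht : t ∈ I) (x : ℝ) :
    ContDiffAt ℝ (⊤ : ℕ∞) (Function.uncurry F) (t, x) :=
  ContDiffOn.contDiffAt hF ((hI.prod isOpen_univ).mem_nhds ⟨ht, mem_univ x⟩)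

lemma contDiff (hF : SmoothOnStrip I F) (ht : t ∈ I) : ContDiff ℝ (⊤ : ℕ∞) (F t) :=
  contDiffOn_univ.1 <| ContDiffOn.comp (g := Function.uncurry F) (f := fun x => (t, x)) hF
    (by fun_prop) fun x _ => ⟨ht, mem_univ x⟩

lemma continuous_comp {X : Type*} [TopologicalSpace X] (hF : SmoothOnStrip I F) {a b : X → ℝ}
    (ha : Continuous a) (hb : Continuous b) (haI : ∀ p, a p ∈ I) :
    Continuous fun p => F (a p) (b p) :=
  ContDiffOn.continuousOn hF |>.comp_continuous (ha.prodMk hb) fun p => ⟨haI p, mem_univ _⟩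

lemma congr (hF : SmoothOnStrip I F) {G : ℝ → ℝ → E} (hG : ∀ t ∈ I, ∀ x, G t x = F t x) :
    SmoothOnStrip I G :=
  ContDiffOn.congr hF fun p hp => hG p.1 hp.1 p.2

lemma hasDerivAt_space (hF : SmoothOnStrip I F) (ht : t ∈ I) (x : ℝ) :
    HasDerivAt (F t) (deriv (F t) x) x :=
  ((hF.contDiff ht).differentiable (by simp) x).hasDerivAt

lemma hasFDerivAt (hF : SmoothOnStrip I F) (hI : IsOpen I) (ht : t ∈ I) (x : ℝ) :
    HasFDerivAt (Function.uncurry F) (fderiv ℝ (Function.uncurry F) (t, x)) (t, x) :=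
  ((hF.contDiffAt hI ht x).differentiableAt (by simp)).hasFDerivAt

lemma hasDerivAt_fderiv_fst (hF : SmoothOnStrip I F) (hI : IsOpen I) (ht : t ∈ I) (x : ℝ) :
    HasDerivAt (fun τ => F τ x) (fderiv ℝ (Function.uncurry F) (t, x) (1, 0)) t :=
  HasFDerivAt.comp_hasDerivAt (f := fun τ => (τ, x)) t (hF.hasFDerivAt hI ht x)
    ((hasDerivAt_id t).prodMk (hasDerivAt_const t x))

lemma timeDeriv_eq_fderiv (hF : SmoothOnStrip I F) (hI : IsOpen I) (ht : t ∈ I) (x : ℝ) :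
    timeDeriv F t x = fderiv ℝ (Function.uncurry F) (t, x) (1, 0) :=
  (hF.hasDerivAt_fderiv_fst hI ht x).deriv

lemma deriv_eq_fderiv (hF : SmoothOnStrip I F) (hI : IsOpen I) (ht : t ∈ I) (x : ℝ) :
    deriv (F t) x = fderiv ℝ (Function.uncurry F) (t, x) (0, 1) :=
  ((hF.hasFDerivAt hI ht x).comp_hasDerivAt x
    ((hasDerivAt_const x t).prodMk (hasDerivAt_id x))).deriv

lemma hasDerivAt_time (hF : SmoothOnStrip I F) (hI : IsOpen I) (ht : t ∈ I) (x : ℝ) :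
    HasDerivAt (fun τ => F τ x) (timeDeriv F t x) t :=
  hF.timeDeriv_eq_fderiv hI ht x ▸ hF.hasDerivAt_fderiv_fst hI ht x

lemma fderiv_apply (hF : SmoothOnStrip I F) (hI : IsOpen I) (e : ℝ × ℝ) :
    SmoothOnStrip I fun t x => fderiv ℝ (Function.uncurry F) (t, x) e :=
  (ContDiffOn.fderiv_of_isOpen hF (hI.prod isOpen_univ) (by simp)).clm_apply contDiffOn_const

lemma space_deriv (hF : SmoothOnStrip I F) (hI : IsOpen I) :
    SmoothOnStrip I fun t => deriv (F t) :=
  (hF.fderiv_apply hI (0, 1)).congr fun _ ht x => hF.deriv_eq_fderiv hI ht x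

lemma time_deriv (hF : SmoothOnStrip I F) (hI : IsOpen I) : SmoothOnStrip I (timeDeriv F) :=
  (hF.fderiv_apply hI (1, 0)).congr fun _ ht x => hF.timeDeriv_eq_fderiv hI ht x

lemma fderiv_fderiv_apply (hF : SmoothOnStrip I F) (hI : IsOpen I) (ht : t ∈ I) (x : ℝ)
    (e e' : ℝ × ℝ) :
    fderiv ℝ (fun p => fderiv ℝ (Function.uncurry F) p e) (t, x) e' =
      fderiv ℝ (fderiv ℝ (Function.uncurry F)) (t, x) e' e := by
  have hdiff : DifferentiableAt ℝ (fderiv ℝ (Function.uncurry F)) (t, x) :=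
    ((hF.contDiffAt hI ht x).fderiv_right (m := 1)
      (WithTop.coe_le_coe.2 le_top)).differentiableAt one_ne_zero
  simp [(hdiff.hasFDerivAt.clm_apply (hasFDerivAt_const e (t, x))).fderiv]

lemma deriv_timeDeriv (hF : SmoothOnStrip I F) (hI : IsOpen I) (ht : t ∈ I) (x : ℝ) :
    deriv (timeDeriv F t) x = timeDeriv (fun τ => deriv (F τ)) t x := by
  have htime : timeDeriv F t = fun y => fderiv ℝ (Function.uncurry F) (t, y) (1, 0) :=
    funext fun y => hF.timeDeriv_eq_fderiv hI ht y
  have hspace : (fun τ => deriv (F τ) x) =ᶠ[𝓝 t]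
      fun τ => fderiv ℝ (Function.uncurry F) (τ, x) (0, 1) := by
    filter_upwards [hI.mem_nhds ht] with τ hτ using hF.deriv_eq_fderiv hI hτ x
  have hsymm : IsSymmSndFDerivAt ℝ (Function.uncurry F) (t, x) :=
    (hF.contDiffAt hI ht x).isSymmSndFDerivAt
      (by simpa using WithTop.coe_le_coe.2 (le_top (a := (2 : ℕ∞))))
  calc deriv (timeDeriv F t) x
      = fderiv ℝ (fun p => fderiv ℝ (Function.uncurry F) p (1, 0)) (t, x) (0, 1) := by
        rw [htime, (hF.fderiv_apply hI (1, 0)).deriv_eq_fderiv hI ht]; rfl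
    _ = fderiv ℝ (fun p => fderiv ℝ (Function.uncurry F) p (0, 1)) (t, x) (1, 0) := by
        rw [hF.fderiv_fderiv_apply hI ht, hF.fderiv_fderiv_apply hI ht, hsymm.eq]
    _ = timeDeriv (fun τ => deriv (F τ)) t x := by
        rw [timeDeriv, hspace.deriv_eq]
        exact ((hF.fderiv_apply hI (0, 1)).timeDeriv_eq_fderiv hI ht x).symm

lemma of_hasDerivAt {F₁ F₂ : ℝ → ℝ → E} (hI : IsOpen I) (hF₁ : SmoothOnStrip I F₁)
    (hF₂ : SmoothOnStrip I F₂)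
    (htime : ∀ t ∈ I, ∀ x, HasDerivAt (fun τ => F τ x) (F₁ t x) t)
    (hspace : ∀ t ∈ I, ∀ x, HasDerivAt (F t) (F₂ t x) x) : SmoothOnStrip I F := by
  have hstrip : IsOpen (I ×ˢ (univ : Set ℝ)) := hI.prod isOpen_univ
  let F' (p : ℝ × ℝ) : ℝ × ℝ →L[ℝ] E :=
    (ContinuousLinearMap.fst ℝ ℝ ℝ).smulRight (F₁ p.1 p.2) +
      (ContinuousLinearMap.snd ℝ ℝ ℝ).smulRight (F₂ p.1 p.2)
  have hF'_smooth : ContDiffOn ℝ (⊤ : ℕ∞) F' (I ×ˢ univ) :=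
    (contDiffOn_const.smulRight hF₁).add (contDiffOn_const.smulRight hF₂)
  have hF' (p) (hp : p ∈ I ×ˢ univ) : HasFDerivAt (Function.uncurry F) (F' p) p := by
    have hmem := hstrip.mem_nhds hp
    have hpartial {G : ℝ → ℝ → E} (hG : SmoothOnStrip I G) :
        ContinuousAt (fun q : ℝ × ℝ => ContinuousLinearMap.toSpanSingleton ℝ (G q.1 q.2)) p :=
      (ContinuousLinearMap.toSpanSingletonCLE (𝕜 := ℝ) (E := E)).continuous.continuousAt.comp
        (ContDiffOn.continuousOn hG |>.continuousAt hmem)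
    have hstrict := hasStrictFDerivAt_uncurry_coprod
      (f₁ := fun t x => .toSpanSingleton ℝ (F₁ t x)) (f₂ := fun t x => .toSpanSingleton ℝ (F₂ t x))
      (by filter_upwards [hmem] with q hq using (htime q.1 hq.1 q.2).hasFDerivAt)
      (by filter_upwards [hmem] with q hq using (hspace q.1 hq.1 q.2).hasFDerivAt)
      (hpartial hF₁) (hpartial hF₂)
    exact hstrict.hasFDerivAt.congr_fderiv (by ext <;> simp [F', Function.HasUncurry.uncurry])
  exact (contDiffOn_infty_iff_fderiv_of_isOpen hstrip).2
    ⟨fun p hp => (hF' p hp).differentiableAt.differentiableWithinAt,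
      hF'_smooth.congr fun p hp => (hF' p hp).fderiv⟩

end SmoothOnStrip

/-! ### Solutions of critical mass -/

/-- A solution of the Chern–Simons–Schrödinger equation of critical mass on the time interval
`(t₀, t₁)`, given by radial profiles `F t` that are smooth up to the origin and beyond it. -/
structure IsCriticalFlow (m : ℕ) (t₀ t₁ : ℝ) (F : ℝ → ℝ → ℂ) : Prop where
  smooth : SmoothOnStrip (Ioo t₀ t₁) F
  apply_zero : ∀ t ∈ Ioo t₀ t₁, F t 0 = 0
  integrableOn : ∀ t ∈ Ioo t₀ t₁, IntegrableOn (fun r => ‖F t r‖ ^ 2 * r) (Ioi 0)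
  integral_eq : ∀ t ∈ Ioo t₀ t₁, ∫ r in Ioi 0, ‖F t r‖ ^ 2 * r = 4 * (m + 1)
  cssEq : ∀ t ∈ Ioo t₀ t₁, ∀ r, 0 < r → CSSeq m F t r
  exists_radialL2Le_deriv : ∀ a b, t₀ < a → b < t₁ →
    ∃ K, ∀ t ∈ Icc a b, RadialL2Le (deriv (F t)) K

lemma cssEq_iff {m : ℕ} {F : ℝ → ℝ → ℂ} {t r : ℝ} :
    CSSeq m F t r ↔ Complex.I * timeDeriv F t r - At m (F t) r • F t r + deriv (deriv (F t)) r +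
      r⁻¹ • deriv (F t) r - (angularCoeff m (F t) r / r) ^ 2 • F t r + ‖F t r‖ ^ 2 • F t r = 0 := by
  simp [CSSeq, timeDeriv, angularCoeff, Complex.real_smul]

lemma inner_eq_neg_imInner_of_cssEq {m : ℕ} {F : ℝ → ℝ → ℂ} {t r : ℝ} (h : CSSeq m F t r) :
    inner ℝ (F t r) (timeDeriv F t r) =
      -(imInner (F t r) (deriv (deriv (F t)) r) + r⁻¹ * imInner (F t r) (deriv (F t) r)) := by
  have hsolve : timeDeriv F t r = -Complex.I * (-deriv (deriv (F t)) r - r⁻¹ • deriv (F t) r +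
      (At m (F t) r + (angularCoeff m (F t) r / r) ^ 2 - ‖F t r‖ ^ 2) • F t r) := by
    rw [cssEq_iff] at h
    simp only [Complex.real_smul] at h ⊢
    push_cast at h ⊢
    linear_combination -Complex.I * h + timeDeriv F t r * Complex.I_mul_I
  rw [hsolve, inner_neg_I_mul, map_add, imInner_smul_self, map_sub, map_neg, map_smul, smul_eq_mul]
  ring

lemma norm_le_mul_of_norm_deriv_le {f : ℝ → ℂ} {M r r₁ : ℝ} (hf : Differentiable ℝ f)
    (hf0 : f 0 = 0) (hderiv : ∀ s ∈ Icc 0 r₁, ‖deriv f s‖ ≤ M) (hr : r ∈ Icc 0 r₁) :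
    ‖f r‖ ≤ M * r := by
  simpa [hf0, abs_of_nonneg hr.1] using
    (convex_Icc 0 r₁).norm_image_sub_le_of_norm_deriv_le (fun s _ => hf s) hderiv
      (left_mem_Icc.2 (hr.1.trans hr.2)) hr

namespace IsCriticalFlow

variable {m : ℕ} {t₀ t₁ a b t r : ℝ} {F : ℝ → ℝ → ℂ}

lemma isCriticalProfile (h : IsCriticalFlow m t₀ t₁ F) (ht : t ∈ Ioo t₀ t₁) :
    IsCriticalProfile m (F t) where
  contDiff := (h.smooth.contDiff ht).of_le (mod_cast le_top)
  integrableOn := h.integrableOn t ht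
  integral_eq := h.integral_eq t ht

lemma exists_norm_le_mul (h : IsCriticalFlow m t₀ t₁ F) (ha : t₀ < a) (hb : b < t₁) :
    ∃ M, 0 ≤ M ∧ ∀ t ∈ Icc a b, ∀ r ∈ Icc (0 : ℝ) 1,
      ‖deriv (F t) r‖ ≤ M ∧ ‖F t r‖ ≤ M * r := by
  have hsub : Icc a b ⊆ Ioo t₀ t₁ := Icc_subset_Ioo ha hb
  obtain ⟨M, hM⟩ := (isCompact_Icc.prod isCompact_Icc).exists_bound_of_continuousOn
    (ContDiffOn.continuousOn (h.smooth.space_deriv isOpen_Ioo) |>.mono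
      (prod_mono hsub (subset_univ (Icc (0 : ℝ) 1))))
  have hderiv (t) (ht : t ∈ Icc a b) (r) (hr : r ∈ Icc (0 : ℝ) 1) :
      ‖deriv (F t) r‖ ≤ max M 0 := (hM (t, r) ⟨ht, hr⟩).trans (le_max_left M 0)
  refine ⟨max M 0, le_max_right M 0, fun t ht r hr => ⟨hderiv t ht r hr, ?_⟩⟩
  exact norm_le_mul_of_norm_deriv_le
    (fun x => (h.smooth.hasDerivAt_space (hsub ht) x).differentiableAt)
    (h.apply_zero t (hsub ht)) (hderiv t ht) hr

lemma integral_inner_timeDeriv_eq (h : IsCriticalFlow m t₀ t₁ F) (ht : t ∈ Ioo t₀ t₁)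
    (hr : 0 ≤ r) :
    ∫ s in (0 : ℝ)..r, inner ℝ (F t s) (timeDeriv F t s) * s =
      -(r * imInner (F t r) (deriv (F t) r)) := by
  have hF := h.smooth
  have hFr := hF.space_deriv isOpen_Ioo
  have hderiv (s : ℝ) : HasDerivAt (fun s => s * imInner (F t s) (deriv (F t) s))
      (imInner (F t s) (deriv (F t) s) + s * imInner (F t s) (deriv (deriv (F t)) s)) s := by
    refine ((hasDerivAt_id s).mul ((imInner.hasFDerivAt.comp_hasDerivAt s
      (hF.hasDerivAt_space ht s)).clm_apply (hFr.hasDerivAt_space ht s))).congr_deriv ?_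
    simp only [imInner_self, zero_add, id, one_mul, Function.comp_apply]
  have hcont : Continuous fun s =>
      imInner (F t s) (deriv (F t) s) + s * imInner (F t s) (deriv (deriv (F t)) s) := by
    have := (hF.contDiff ht).continuous
    have := (hFr.contDiff ht).continuous
    have := ((hFr.space_deriv isOpen_Ioo).contDiff ht).continuous
    fun_prop
  have hftc := intervalIntegral.integral_eq_sub_of_hasDerivAt (a := 0) (b := r)
    (fun s _ => hderiv s) (hcont.intervalIntegrable _ _)
  rw [zero_mul, sub_zero] at hftc
  rw [← hftc, ← intervalIntegral.integral_neg]
  refine intervalIntegral.integral_congr_ae (Eventually.of_forall fun s hs => ?_)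
  rw [uIoc_of_le hr] at hs
  rw [inner_eq_neg_imInner_of_cssEq (h.cssEq t ht s hs.1)]
  have := hs.1.ne'
  field_simp
  ring

lemma hasDerivAt_angularCoeff_time (h : IsCriticalFlow m t₀ t₁ F) (ht : t ∈ Ioo t₀ t₁)
    (hr : 0 ≤ r) :
    HasDerivAt (fun τ => angularCoeff m (F τ) r) (r * imInner (F t r) (deriv (F t) r)) t := by
  have hF : ContinuousOn (fun p : ℝ × ℝ => F p.1 p.2) (Ioo t₀ t₁ ×ˢ univ) :=
    ContDiffOn.continuousOn h.smooth
  have hFt : ContinuousOn (fun p : ℝ × ℝ => timeDeriv F p.1 p.2) (Ioo t₀ t₁ ×ˢ univ) :=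
    ContDiffOn.continuousOn (h.smooth.time_deriv isOpen_Ioo)
  have hmass : HasDerivAt (fun τ => ∫ s in (0 : ℝ)..r, ‖F τ s‖ ^ 2 * s)
      (∫ s in (0 : ℝ)..r, 2 * (inner ℝ (F t s) (timeDeriv F t s) * s)) t := by
    refine hasDerivAt_intervalIntegral_of_continuousOn isOpen_Ioo
      (F := fun τ s => ‖F τ s‖ ^ 2 * s)
      (F' := fun τ s => 2 * (inner ℝ (F τ s) (timeDeriv F τ s) * s))
      (show ContinuousOn (fun p : ℝ × ℝ => ‖F p.1 p.2‖ ^ 2 * p.2) _ by fun_prop)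
      (show ContinuousOn (fun p : ℝ × ℝ => 2 * (inner ℝ (F p.1 p.2) (timeDeriv F p.1 p.2) * p.2)) _
        by fun_prop) (fun τ hτ s => ?_) 0 r ht
    exact ((h.smooth.hasDerivAt_time isOpen_Ioo hτ s).norm_sq.mul_const s).congr_deriv (by ring)
  refine ((hmass.const_mul (-(1 / 2))).const_add (m : ℝ)).congr_deriv ?_
  rw [intervalIntegral.integral_const_mul, h.integral_inner_timeDeriv_eq ht hr]
  ring

end IsCriticalFlow

/-! ### The equation of the Bogomol'nyi variable -/

section BogomolnyDerivatives

variable {m : ℕ} {f : ℝ → ℂ} {r : ℝ}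

lemma hasDerivAt_angularCoeff_div (m : ℕ) (hf : Continuous f) (hr : r ≠ 0) :
    HasDerivAt (fun s => angularCoeff m f s / s)
      (-(‖f r‖ ^ 2 / 2 + angularCoeff m f r / r ^ 2)) r := by
  refine ((hasDerivAt_angularCoeff m hf r).div (hasDerivAt_id r) hr).congr_deriv ?_
  simp only [id]
  field_simp
  ring

lemma hasDerivAt_bogomolny (m : ℕ) (hf : ContDiff ℝ 2 f) (hr : r ≠ 0) :
    HasDerivAt (bogomolny m f) (deriv (deriv f) r +
      (‖f r‖ ^ 2 / 2 + angularCoeff m f r / r ^ 2) • f r -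
      (angularCoeff m f r / r) • deriv f r) r := by
  have hf₀ := (hf.differentiable (by simp) r).hasDerivAt
  have hf' : ContDiff ℝ 1 (deriv f) := hf.deriv'
  have hf₁ := (hf'.differentiable (by simp) r).hasDerivAt
  refine (hf₁.sub ((hasDerivAt_angularCoeff_div m hf.continuous hr).smul hf₀)).congr_deriv ?_
  module

lemma hasDerivAt_deriv_bogomolny (m : ℕ) (hf : ContDiff ℝ 3 f) (hr : r ≠ 0) :
    HasDerivAt (deriv (bogomolny m f)) (deriv (deriv (deriv f)) r +
      (inner ℝ (f r) (deriv f r) - ‖f r‖ ^ 2 / (2 * r) - 2 * angularCoeff m f r / r ^ 3) • f r +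
      (‖f r‖ ^ 2 + 2 * angularCoeff m f r / r ^ 2) • deriv f r -
      (angularCoeff m f r / r) • deriv (deriv f) r) r := by
  have hf' : ContDiff ℝ 2 (deriv f) := hf.deriv'
  have hf₀ := (hf.differentiable (by simp) r).hasDerivAt
  have hf₁ := (hf'.differentiable (by simp) r).hasDerivAt
  have hf'' : ContDiff ℝ 1 (deriv (deriv f)) := hf'.deriv'
  have hf₂ := (hf''.differentiable (by simp) r).hasDerivAt
  have hquot := hasDerivAt_angularCoeff_div m hf.continuous hr
  have hcoeff : HasDerivAt (fun s => ‖f s‖ ^ 2 / 2 + angularCoeff m f s / s ^ 2)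
      (inner ℝ (f r) (deriv f r) - ‖f r‖ ^ 2 / (2 * r) - 2 * angularCoeff m f r / r ^ 3) r := by
    refine ((hf₀.norm_sq.div_const 2).add ((hasDerivAt_angularCoeff m hf.continuous r).div
      (hasDerivAt_pow 2 r) (pow_ne_zero 2 hr))).congr_deriv ?_
    field_simp
    ring
  have hsum := (hf₂.add (hcoeff.smul hf₀)).sub (hquot.smul hf₁)
  refine (hsum.congr_deriv ?_).congr_of_eventuallyEq ?_
  · module
  · filter_upwards [isOpen_ne.mem_nhds hr] with s hs
    exact (hasDerivAt_bogomolny m (hf.of_le (by norm_num)) hs).deriv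

end BogomolnyDerivatives

lemma mul_inner_add_I_mul_imInner (a b : ℂ) :
    a * (inner ℝ a b + Complex.I * imInner a b) = ‖a‖ ^ 2 * b := by
  rw [imInner_apply, Complex.inner, mul_comm Complex.I, mul_comm b, Complex.re_add_im, ← mul_assoc,
    Complex.mul_conj, Complex.normSq_eq_norm_sq, Complex.ofReal_pow]

namespace IsCriticalFlow

variable {m : ℕ} {t₀ t₁ t r : ℝ} {F : ℝ → ℝ → ℂ}

lemma timeDeriv_bogomolny (h : IsCriticalFlow m t₀ t₁ F) (ht : t ∈ Ioo t₀ t₁) (hr : 0 < r) :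
    timeDeriv (fun t => bogomolny m (F t)) t r = timeDeriv (fun t => deriv (F t)) t r -
      imInner (F t r) (deriv (F t) r) • F t r - (angularCoeff m (F t) r / r) • timeDeriv F t r := by
  have hF := h.smooth.hasDerivAt_time isOpen_Ioo ht r
  have hFr := (h.smooth.space_deriv isOpen_Ioo).hasDerivAt_time isOpen_Ioo ht r
  have hcoeff := (h.hasDerivAt_angularCoeff_time ht hr.le).div_const r
  rw [mul_div_cancel_left₀ _ hr.ne'] at hcoeff
  refine ((hFr.sub (hcoeff.smul hF)).congr_deriv ?_).deriv
  module

lemma deriv_cssEq (h : IsCriticalFlow m t₀ t₁ F) (ht : t ∈ Ioo t₀ t₁) (hr : 0 < r) :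
    Complex.I * timeDeriv (fun t => deriv (F t)) t r
      - ((angularCoeff m (F t) r * ‖F t r‖ ^ 2 / r) • F t r + At m (F t) r • deriv (F t) r)
      + deriv (deriv (deriv (F t))) r
      + (r⁻¹ • deriv (deriv (F t)) r - (r ^ 2)⁻¹ • deriv (F t) r)
      + ((2 * (angularCoeff m (F t) r / r) *
          (‖F t r‖ ^ 2 / 2 + angularCoeff m (F t) r / r ^ 2)) • F t r
        - (angularCoeff m (F t) r / r) ^ 2 • deriv (F t) r)
      + ((2 * inner ℝ (F t r) (deriv (F t) r)) • F t r + ‖F t r‖ ^ 2 • deriv (F t) r) = 0 := by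
  have hF := h.smooth
  have hFr := hF.space_deriv isOpen_Ioo
  have hf₀ := hF.hasDerivAt_space ht r
  have hf₁ := hFr.hasDerivAt_space ht r
  have hf₂ := (hFr.space_deriv isOpen_Ioo).hasDerivAt_space ht r
  have hft := (hF.time_deriv isOpen_Ioo).hasDerivAt_space ht r
  rw [hF.deriv_timeDeriv isOpen_Ioo ht] at hft
  obtain ⟨M, -, hM⟩ := h.exists_norm_le_mul ht.1 ht.2
  have hAt := (h.isCriticalProfile ht).hasDerivAt_At
    (fun s hs => (hM t (left_mem_Icc.2 le_rfl) s hs).2) hr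
  have hquot := (hasDerivAt_angularCoeff_div m (hF.contDiff ht).continuous hr.ne').pow 2
  have hderiv := ((((((hft.const_mul Complex.I).sub (hAt.smul hf₀)).add hf₂).add
    ((hasDerivAt_inv hr.ne').smul hf₁)).sub (hquot.smul hf₀)).add (hf₀.norm_sq.smul hf₀))
  have hzero := hderiv.unique ((hasDerivAt_const r (0 : ℂ)).congr_of_eventuallyEq (by
    filter_upwards [Ioi_mem_nhds hr] with s hs
    exact cssEq_iff.1 (h.cssEq t ht s hs)))
  rw [← hzero]
  simp only [Pi.pow_apply]
  module

lemma bogomolny_equation (h : IsCriticalFlow m t₀ t₁ F) (ht : t ∈ Ioo t₀ t₁) (hr : 0 < r) :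
    Complex.I * timeDeriv (fun t => bogomolny m (F t)) t r =
      (((m : ℝ) + 1) ^ 2 / r ^ 2 + bogomolnyPotential m (F t) r) • bogomolny m (F t) r
      - deriv (deriv (bogomolny m (F t))) r - r⁻¹ • deriv (bogomolny m (F t)) r := by
  have hcss := cssEq_iff.1 (h.cssEq t ht r hr)
  have hcss' := h.deriv_cssEq ht hr
  -- The term `Im (conj u ∂_r u) u` that `∂_t A_θ` brings in combines with `Re (conj u ∂_r u) u`.
  have hcombine := mul_inner_add_I_mul_imInner (F t r) (deriv (F t) r)
  have hsmooth := contDiff_infty.1 (h.smooth.contDiff ht)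
  rw [h.timeDeriv_bogomolny ht hr, (hasDerivAt_deriv_bogomolny m (hsmooth 3) hr.ne').deriv,
    (hasDerivAt_bogomolny m (hsmooth 2) hr.ne').deriv, bogomolny, bogomolnyPotential]
  simp only [Complex.real_smul] at hcss hcss' ⊢
  push_cast at hcss hcss' ⊢
  linear_combination hcss' - (angularCoeff m (F t) r / r) * hcss - hcombine

end IsCriticalFlow

/-! ### Boundedness of the energy up to the final time -/

lemma logMass_comp_exp (g : ℝ → ℂ) :
    logMass (fun x => g (Real.exp x)) = ∫⁻ r in Ioi 0, ENNReal.ofReal (‖g r‖ ^ 2 * r) := by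
  have hcov := lintegral_image_eq_lintegral_abs_deriv_mul MeasurableSet.univ
    (fun x _ => (Real.hasDerivAt_exp x).hasDerivWithinAt) Real.exp_injective.injOn
    fun r => ENNReal.ofReal (‖g r‖ ^ 2 * r)
  rw [image_univ, Real.range_exp, Measure.restrict_univ] at hcov
  rw [hcov, logMass]
  refine lintegral_congr fun x => ?_
  rw [massDensity, abs_of_pos (Real.exp_pos x), ← ENNReal.ofReal_mul (Real.exp_pos x).le, two_mul,
    Real.exp_add]
  congr 1
  ring

lemma logBessel_comp_exp {g : ℝ → ℂ} (hg : DifferentiableOn ℝ g (Ioi 0))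
    (hg' : DifferentiableOn ℝ (deriv g) (Ioi 0)) (k x : ℝ) :
    logBessel k (fun x => g (Real.exp x)) x = (k ^ 2 / Real.exp x ^ 2) • g (Real.exp x)
      - deriv (deriv g) (Real.exp x) - (Real.exp x)⁻¹ • deriv g (Real.exp x) := by
  have hchain {f : ℝ → ℂ} (hf : DifferentiableOn ℝ f (Ioi 0)) (y : ℝ) :
      HasDerivAt (fun x => f (Real.exp x)) (Real.exp y • deriv f (Real.exp y)) y :=
    (hf.differentiableAt (Ioi_mem_nhds (Real.exp_pos y))).hasDerivAt.scomp y (Real.hasDerivAt_exp y)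
  have hfirst : deriv (fun x => g (Real.exp x)) = fun y => Real.exp y • deriv g (Real.exp y) :=
    funext fun y => (hchain hg y).deriv
  have hsecond : deriv (fun y => Real.exp y • deriv g (Real.exp y)) x =
      Real.exp x • Real.exp x • deriv (deriv g) (Real.exp x) + Real.exp x • deriv g (Real.exp x) :=
    ((Real.hasDerivAt_exp x).smul (hchain hg' x)).deriv
  have hexp : Real.exp (-(2 * x)) = (Real.exp x)⁻¹ ^ 2 := by
    rw [← Real.exp_neg, ← Real.exp_nat_mul]
    congr 1
    push_cast
    ring
  rw [logBessel, hfirst, hsecond, hexp]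
  have := (Real.exp_pos x).ne'
  match_scalars <;> field_simp

lemma SmoothOnStrip.comp_space {E : Type*} [NormedAddCommGroup E] [NormedSpace ℝ E] {I : Set ℝ}
    {F : ℝ → ℝ → E} (hF : SmoothOnStrip I F) {g : ℝ → ℝ} (hg : ContDiff ℝ (⊤ : ℕ∞) g) :
    SmoothOnStrip I fun t x => F t (g x) :=
  ContDiffOn.comp (g := Function.uncurry F) (f := fun p : ℝ × ℝ => (p.1, g p.2)) hF
    (by fun_prop) fun p hp => ⟨hp.1, mem_univ _⟩

lemma SmoothOnStrip.logBessel {I : Set ℝ} {F : ℝ → ℝ → ℂ} (hF : SmoothOnStrip I F) (hI : IsOpen I)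
    (k : ℝ) : SmoothOnStrip I fun t => logBessel k (F t) := by
  have hexp : SmoothOnStrip I fun _ x => Real.exp (-(2 * x)) :=
    (Real.contDiff_exp.comp (contDiff_const.mul contDiff_snd).neg).contDiffOn
  have hconst : SmoothOnStrip I fun t x => k ^ 2 • F t x := ContDiffOn.const_smul (k ^ 2) hF
  exact ContDiffOn.smul hexp (ContDiffOn.sub hconst ((hF.space_deriv hI).space_deriv hI))

lemma IsCriticalProfile.norm_bogomolny_le {m : ℕ} {f : ℝ → ℂ} {r M : ℝ}
    (h : IsCriticalProfile m f) (hr : 0 < r) (hderiv : ‖deriv f r‖ ≤ M) (hf : ‖f r‖ ≤ M * r) :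
    ‖bogomolny m f r‖ ≤ M + (m + 2) * M := by
  refine (norm_sub_le _ _).trans (add_le_add hderiv ?_)
  rw [norm_smul, Real.norm_eq_abs, abs_div, abs_of_pos hr, div_mul_eq_mul_div, div_le_iff₀ hr,
    mul_assoc]
  exact mul_le_mul (h.abs_angularCoeff_le hr.le) hf (norm_nonneg _) (by positivity)

namespace IsCriticalFlow

variable {m : ℕ} {t₀ t₁ s b t : ℝ} {F : ℝ → ℝ → ℂ}

lemma smooth_angularCoeff_exp (h : IsCriticalFlow m t₀ t₁ F) :
    SmoothOnStrip (Ioo t₀ t₁) fun t x => angularCoeff m (F t) (Real.exp x) := by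
  have hexp : SmoothOnStrip (Ioo t₀ t₁) fun _ x => Real.exp x :=
    (Real.contDiff_exp.comp contDiff_snd).contDiffOn
  have hF := h.smooth.comp_space Real.contDiff_exp
  have hFr := (h.smooth.space_deriv isOpen_Ioo).comp_space Real.contDiff_exp
  have htime : SmoothOnStrip (Ioo t₀ t₁) fun t x =>
      Real.exp x * imInner (F t (Real.exp x)) (deriv (F t) (Real.exp x)) :=
    ContDiffOn.mul hexp ((imInner.contDiff.comp_contDiffOn hF).clm_apply hFr)
  have hspace : SmoothOnStrip (Ioo t₀ t₁) fun t x =>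
      -(1 / 2) * (‖F t (Real.exp x)‖ ^ 2 * Real.exp x) * Real.exp x :=
    (contDiffOn_const.mul ((ContDiffOn.norm_sq ℝ hF).mul hexp)).mul hexp
  refine .of_hasDerivAt isOpen_Ioo htime hspace
    (fun t ht x => h.hasDerivAt_angularCoeff_time ht (Real.exp_pos x).le) fun t ht x => ?_
  exact (hasDerivAt_angularCoeff m (h.smooth.contDiff ht).continuous _).comp x
    (Real.hasDerivAt_exp x)

lemma smooth_bogomolny_exp (h : IsCriticalFlow m t₀ t₁ F) :
    SmoothOnStrip (Ioo t₀ t₁) fun t x => bogomolny m (F t) (Real.exp x) := by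
  have hexp : SmoothOnStrip (Ioo t₀ t₁) fun _ x => Real.exp x :=
    (Real.contDiff_exp.comp contDiff_snd).contDiffOn
  exact ContDiffOn.sub ((h.smooth.space_deriv isOpen_Ioo).comp_space Real.contDiff_exp)
    ((ContDiffOn.div h.smooth_angularCoeff_exp hexp fun p _ => (Real.exp_pos p.2).ne').smul
      (h.smooth.comp_space Real.contDiff_exp))

lemma I_mul_timeDeriv_bogomolny_exp (h : IsCriticalFlow m t₀ t₁ F) (ht : t ∈ Ioo t₀ t₁) (x : ℝ) :
    Complex.I * timeDeriv (fun t x => bogomolny m (F t) (Real.exp x)) t x =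
      logBessel (m + 1) (fun x => bogomolny m (F t) (Real.exp x)) x +
        bogomolnyPotential m (F t) (Real.exp x) • bogomolny m (F t) (Real.exp x) := by
  have hsmooth := contDiff_infty.1 (h.smooth.contDiff ht)
  have hbessel := logBessel_comp_exp (g := bogomolny m (F t))
    (fun r hr => (hasDerivAt_bogomolny m (hsmooth 2)
      (ne_of_gt hr)).differentiableAt.differentiableWithinAt)
    (fun r hr => (hasDerivAt_deriv_bogomolny m (hsmooth 3)
      (ne_of_gt hr)).differentiableAt.differentiableWithinAt) (m + 1) x
  rw [hbessel]
  refine (h.bogomolny_equation ht (Real.exp_pos x)).trans ?_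
  module

lemma smooth_potential_smul_bogomolny_exp (h : IsCriticalFlow m t₀ t₁ F) :
    SmoothOnStrip (Ioo t₀ t₁) fun t x =>
      bogomolnyPotential m (F t) (Real.exp x) • bogomolny m (F t) (Real.exp x) := by
  have hv := h.smooth_bogomolny_exp
  have hvt : SmoothOnStrip (Ioo t₀ t₁) fun t x =>
      Complex.I * timeDeriv (fun t x => bogomolny m (F t) (Real.exp x)) t x :=
    contDiffOn_const.mul (hv.time_deriv isOpen_Ioo)
  have hdiff : SmoothOnStrip (Ioo t₀ t₁) fun t x =>
      Complex.I * timeDeriv (fun t x => bogomolny m (F t) (Real.exp x)) t x -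
        logBessel (m + 1) (fun x => bogomolny m (F t) (Real.exp x)) x :=
    ContDiffOn.sub hvt (hv.logBessel isOpen_Ioo (m + 1))
  refine hdiff.congr fun t ht x => eq_sub_of_add_eq' ?_
  exact (h.I_mul_timeDeriv_bogomolny_exp ht x).symm

lemma exists_bogomolny_bounds (h : IsCriticalFlow m t₀ t₁ F) (hs : t₀ < s) (hb : b < t₁) :
    ∃ (M : ℝ) (C K : ℝ≥0), ∀ t ∈ Icc s b,
      (∀ r, 0 < r → |bogomolnyPotential m (F t) r| ≤ C) ∧
      (∀ r, 0 < r → r ≤ 1 → ‖bogomolny m (F t) r‖ ≤ M) ∧ RadialL2Le (bogomolny m (F t)) K := by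
  obtain ⟨M, hM, horigin⟩ := h.exists_norm_le_mul hs hb
  obtain ⟨K, hK⟩ := h.exists_radialL2Le_deriv s b hs hb
  refine ⟨M + (m + 2) * M, Real.toNNReal ((2 * m + 2) * (M ^ 2 + (2 * m + 2)) +
      (m + 2) * (M ^ 2 + 4 * (m + 1)) + (M ^ 2 + (4 * (m + 1) + K))),
    Real.toNNReal (2 * K + 2 * (m + 2) ^ 2 * (M ^ 2 + 4 * (m + 1))), fun t ht => ?_⟩
  have hprofile := h.isCriticalProfile (Icc_subset_Ioo hs hb ht)
  have horigin' (r) (hr : r ∈ Icc (0 : ℝ) 1) := (horigin t ht r hr).2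
  have hL2 := hprofile.radialL2Le_bogomolny horigin' (hK t ht)
  exact ⟨fun r hr => (hprofile.abs_bogomolnyPotential_le hM horigin' (hK t ht) hr).trans
      (Real.le_coe_toNNReal _),
    fun r hr hr1 => hprofile.norm_bogomolny_le hr (horigin t ht r ⟨hr.le, hr1⟩).1
      (horigin' r ⟨hr.le, hr1⟩),
    hL2.integrableOn, hL2.integral_le.trans (Real.le_coe_toNNReal _)⟩

/-- The flow is held constant outside `[s, b]`, which makes the bounds global in time. -/
lemma exists_isLogSchrodinger (h : IsCriticalFlow m t₀ t₁ F) (hs : t₀ < s) (hsb : s ≤ b)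
    (hb : b < t₁) :
    ∃ M C K, IsLogSchrodinger (m + 1) s b M C K
      (fun t x => bogomolnyPotential m (F (projIcc s b hsb t)) (Real.exp x))
      (fun t x => bogomolny m (F (projIcc s b hsb t)) (Real.exp x)) := by
  obtain ⟨M, C, K, hbounds⟩ := h.exists_bogomolny_bounds hs hb
  have hclamp (t : ℝ) : (projIcc s b hsb t : ℝ) ∈ Ioo t₀ t₁ :=
    Icc_subset_Ioo hs hb (projIcc s b hsb t).2
  have hbounds' (t : ℝ) := hbounds _ (projIcc s b hsb t).2
  have hcont {G : ℝ → ℝ → ℂ} (hG : SmoothOnStrip (Ioo t₀ t₁) G) :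
      Continuous (Function.uncurry fun t => G (projIcc s b hsb t)) :=
    hG.continuous_comp (a := fun p : ℝ × ℝ => projIcc s b hsb p.1) (by fun_prop) continuous_snd
      fun p => hclamp p.1
  have hv := h.smooth_bogomolny_exp
  have hv₁ := hv.space_deriv isOpen_Ioo
  refine ⟨M, C, K,
    { contDiff := fun t => contDiff_infty.1 (hv.contDiff (hclamp t)) 2
      continuous := hcont hv
      continuous_deriv := hcont hv₁
      continuous_deriv_deriv := hcont (hv₁.space_deriv isOpen_Ioo)
      continuous_potential_smul := hcont h.smooth_potential_smul_bogomolny_exp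
      hasDerivAt := fun t ht x => ?_
      abs_potential_le := fun t x => (hbounds' t).1 _ (Real.exp_pos x)
      norm_le := fun t x hx => (hbounds' t).2.1 _ (Real.exp_pos x) (Real.exp_le_one_iff.2 hx)
      logMass_le := fun t => ?_ }⟩
  · have ht' : t ∈ Ioo t₀ t₁ := ⟨hs.trans ht.1, ht.2.trans hb⟩
    have hfreeze : ∀ᶠ τ in 𝓝 t, (projIcc s b hsb τ : ℝ) = τ := by
      filter_upwards [Icc_mem_nhds ht.1 ht.2] with τ hτ
      rw [projIcc_of_mem hsb hτ]
    rw [hfreeze.self_of_nhds, ← h.I_mul_timeDeriv_bogomolny_exp ht' x, ← mul_assoc, neg_mul,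
      Complex.I_mul_I, neg_neg, one_mul]
    refine (hv.hasDerivAt_time isOpen_Ioo ht' x).congr_of_eventuallyEq ?_
    filter_upwards [hfreeze] with τ hτ
    rw [hτ]
  · rw [logMass_comp_exp, ← ENNReal.ofReal_coe_nnreal]
    exact (hbounds' t).2.2.lintegral_le

lemma exists_radialL2Le_bogomolny (h : IsCriticalFlow m t₀ t₁ F) (hs : s ∈ Ioo t₀ t₁) :
    ∃ K, ∀ T ∈ Ico s t₁, RadialL2Le (bogomolny m (F T)) K := by
  obtain ⟨s₁, hs₁, hs₁t⟩ := exists_between hs.2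
  obtain ⟨_, _, K, hbounds⟩ := h.exists_bogomolny_bounds hs.1 hs₁t
  refine ⟨K, fun T hT => ?_⟩
  obtain ⟨b, hTb, hb⟩ := exists_between hT.2
  have hsb : s ≤ b := hT.1.trans hTb.le
  have hT' : T ∈ Ioo t₀ t₁ := ⟨hs.1.trans_le hT.1, hT.2⟩
  obtain ⟨M, C, K', hlog⟩ := h.exists_isLogSchrodinger hs.1 hsb hb
  have hearly (t) (ht : t ∈ Icc s s₁) :
      logMass (fun x => bogomolny m (F (projIcc s b hsb t)) (Real.exp x)) ≤ ENNReal.ofReal K := by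
    rw [logMass_comp_exp]
    refine (hbounds _ ⟨(projIcc s b hsb t).2.1, ?_⟩).2.2.lintegral_le
    rw [coe_projIcc]
    exact max_le hs₁.le ((min_le_right b t).trans ht.2)
  have hlate := hlog.logMass_le_of_Icc hs₁ hearly hT.1 hTb
  rw [projIcc_of_mem hsb ⟨hT.1, hTb.le⟩, logMass_comp_exp] at hlate
  exact .of_lintegral_le (continuousOn_bogomolny m (h.isCriticalProfile hT').contDiff) K.2 hlate

end IsCriticalFlow

/-! ### From classical solutions to critical flows -/

section Congr

variable {m : ℕ} {f g : ℝ → ℂ} {r : ℝ}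

lemma atheta_congr (h : EqOn f g (Ioi 0)) (hr : 0 ≤ r) : Atheta f r = Atheta g r := by
  unfold Atheta
  congr 1
  refine intervalIntegral.integral_congr_ae (Eventually.of_forall fun s hs => ?_)
  rw [uIoc_of_le hr] at hs
  rw [h hs.1]

lemma at_congr (h : EqOn f g (Ioi 0)) (hr : 0 ≤ r) : At m f r = At m g r := by
  unfold At
  congr 1
  refine setIntegral_congr_fun measurableSet_Ioi fun s hs => ?_
  have hs0 : 0 < s := hr.trans_lt hs
  simp only [h hs0, atheta_congr h hs0.le]

lemma cssEq_congr {I : Set ℝ} {u F : ℝ → ℝ → ℂ} {t : ℝ} (hI : IsOpen I)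
    (h : ∀ t ∈ I, EqOn (u t) (F t) (Ioi 0)) (ht : t ∈ I) (hr : 0 < r) :
    CSSeq m u t r ↔ CSSeq m F t r := by
  have hderiv := (h t ht).deriv isOpen_Ioi
  have htime : deriv (fun s => u s r) t = deriv (fun s => F s r) t :=
    EqOn.deriv (fun s hs => h s hs hr) hI ht
  rw [CSSeq, CSSeq, htime, hderiv.deriv isOpen_Ioi hr, hderiv hr, at_congr (h t ht) hr.le,
    atheta_congr (h t ht) hr.le, h t ht hr]

lemma setIntegral_norm_sq_mul_congr {s : Set ℝ} (hs : MeasurableSet s) (h : EqOn f g s) :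
    ∫ r in s, ‖f r‖ ^ 2 * r = ∫ r in s, ‖g r‖ ^ 2 * r :=
  setIntegral_congr_fun hs fun r hr => by simp only [h hr]

lemma integrableOn_norm_sq_mul_congr {s : Set ℝ} (hs : MeasurableSet s) (h : EqOn f g s) :
    IntegrableOn (fun r => ‖f r‖ ^ 2 * r) s ↔ IntegrableOn (fun r => ‖g r‖ ^ 2 * r) s :=
  integrableOn_congr_fun (fun r hr => by simp only [h hr]) hs

end Congr

/-- `U` agrees off the origin with the `m`-equivariant function `f(|x|) (x / |x|) ^ m` on the
plane. -/
def IsEquivariantExtension (m : ℕ) (f : ℝ → ℂ) (U : ℝ × ℝ → ℂ) : Prop :=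
  ∀ x : ℝ × ℝ, x ≠ 0 → U x = f (Real.sqrt (x.1 ^ 2 + x.2 ^ 2)) *
    (((x.1 : ℂ) + (x.2 : ℂ) * Complex.I) / ((Real.sqrt (x.1 ^ 2 + x.2 ^ 2) : ℝ) : ℂ)) ^ m

namespace IsEquivariantExtension

variable {m : ℕ} {f : ℝ → ℂ} {U : ℝ × ℝ → ℂ} {r : ℝ}

lemma apply_polar (h : IsEquivariantExtension m f U) (hr : 0 < r) (θ : ℝ) :
    U (r * Real.cos θ, r * Real.sin θ) = f r * Complex.exp (θ * Complex.I) ^ m := by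
  have hrad : (r * Real.cos θ) ^ 2 + (r * Real.sin θ) ^ 2 = r ^ 2 := by
    linear_combination r ^ 2 * Real.cos_sq_add_sin_sq θ
  have hne : ((r * Real.cos θ, r * Real.sin θ) : ℝ × ℝ) ≠ 0 := by
    intro h0
    obtain ⟨hcos, hsin⟩ := Prod.ext_iff.1 h0
    simp only [Prod.fst_zero, Prod.snd_zero] at hcos hsin
    rw [hcos, hsin] at hrad
    exact hr.ne' (by simpa using hrad.symm)
  have hrc : (r : ℂ) ≠ 0 := Complex.ofReal_ne_zero.2 hr.ne'
  rw [h _ hne, Complex.exp_mul_I]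
  simp only [hrad, Real.sqrt_sq hr.le]
  congr 2
  push_cast
  field_simp

lemma eqOn_axis (h : IsEquivariantExtension m f U) : EqOn f (fun r => U (r, 0)) (Ioi 0) :=
  fun r hr => by simpa using (h.apply_polar (r := r) hr 0).symm

/-- Rotating by `π / m` changes the sign of `U`, while both rays end at the origin. -/
lemma apply_zero (h : IsEquivariantExtension m f U) (hm : m ≠ 0) (hU : Continuous U) :
    U 0 = 0 := by
  have hray (θ : ℝ) :
      Tendsto (fun r : ℝ => U (r * Real.cos θ, r * Real.sin θ)) (𝓝[>] 0) (𝓝 (U 0)) := by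
    have hcont : Continuous fun r : ℝ => U (r * Real.cos θ, r * Real.sin θ) := by fun_prop
    refine (hcont.tendsto' 0 (U 0) ?_).mono_left nhdsWithin_le_nhds
    simp only [zero_mul, Prod.mk_zero_zero]
  have hsign : Complex.exp ((Real.pi / m : ℝ) * Complex.I) ^ m = -1 := by
    have : (m : ℂ) ≠ 0 := Nat.cast_ne_zero.2 hm
    rw [← Complex.exp_nat_mul, ← Complex.exp_pi_mul_I]
    congr 1
    push_cast
    field_simp
  have hopposite : Tendsto (fun r : ℝ => U (r * Real.cos 0, r * Real.sin 0)) (𝓝[>] 0)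
      (𝓝 (-U 0)) := by
    refine (hray (Real.pi / m)).neg.congr' ?_
    filter_upwards [self_mem_nhdsWithin] with r hr
    rw [h.apply_polar hr, h.apply_polar hr, hsign]
    simp
  exact self_eq_neg.1 (tendsto_nhds_unique (hray 0) hopposite)

end IsEquivariantExtension

section Gradient

variable {f : ℝ → ℂ}

lemma integrableOn_norm_sq_div (hf : ContDiff ℝ 1 f) (hf0 : f 0 = 0)
    (hinteg : IntegrableOn (fun r => ‖f r‖ ^ 2 * r) (Ioi 0)) :
    IntegrableOn (fun r => ‖f r‖ ^ 2 / r) (Ioi 0) := by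
  obtain ⟨M, hM⟩ := (isCompact_Icc (a := (0 : ℝ)) (b := 1)).exists_bound_of_continuousOn
    (hf.continuous_deriv le_rfl).continuousOn
  have hlin (r) (hr : r ∈ Icc (0 : ℝ) 1) : ‖f r‖ ≤ M * r :=
    norm_le_mul_of_norm_deriv_le (hf.differentiable one_ne_zero) hf0 hM hr
  refine Integrable.mono' (integrableOn_divMajorant M hinteg) ?_ ?_
  · exact ((hf.continuous.norm.pow 2).continuousOn.div continuousOn_id
      fun r hr => ne_of_gt hr).aestronglyMeasurable measurableSet_Ioi
  · filter_upwards [ae_restrict_mem measurableSet_Ioi] with r hr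
    rw [Real.norm_of_nonneg (div_nonneg (sq_nonneg _) (le_of_lt hr))]
    exact norm_sq_div_le_divMajorant hlin hr

lemma two_pi_mul_integral_norm_deriv_sq_le_h1msq (m : ℕ) (hf : ContDiff ℝ 1 f) (hf0 : f 0 = 0)
    (hinteg : IntegrableOn (fun r => ‖f r‖ ^ 2 * r) (Ioi 0))
    (hderiv : IntegrableOn (fun r => ‖deriv f r‖ ^ 2 * r) (Ioi 0)) :
    2 * Real.pi * ∫ r in Ioi 0, ‖deriv f r‖ ^ 2 * r ≤ H1msq m f := by
  have hsum : IntegrableOn (fun r => (‖deriv f r‖ ^ 2 + (m : ℝ) ^ 2 * ‖f r‖ ^ 2 / r ^ 2) * r)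
      (Ioi 0) := by
    refine (hderiv.add ((integrableOn_norm_sq_div hf hf0 hinteg).const_mul ((m : ℝ) ^ 2))).congr_fun
      (fun r hr => ?_) measurableSet_Ioi
    have : r ≠ 0 := ne_of_gt hr
    simp only [Pi.add_apply]
    field_simp
  refine mul_le_mul_of_nonneg_left ?_ Real.two_pi_pos.le
  refine setIntegral_mono_on hderiv hsum measurableSet_Ioi fun r (hr : 0 < r) => ?_
  gcongr
  exact le_add_of_nonneg_right (by positivity)

end Gradient

lemma h1msq_congr {m : ℕ} {f g : ℝ → ℂ} (h : EqOn f g (Ioi 0)) : H1msq m f = H1msq m g := by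
  unfold H1msq
  congr 1
  refine setIntegral_congr_fun measurableSet_Ioi fun r hr => ?_
  simp only [h hr, h.deriv isOpen_Ioi hr]

section OfIsCSS

variable {m : ℕ} {I : Set ℝ} {u : ℝ → ℝ → ℂ}

lemma exists_smoothOnStrip_of_isCSS (hm : m ≠ 0) (hu : IsCSS m I u) :
    ∃ F, SmoothOnStrip I F ∧ (∀ t ∈ I, F t 0 = 0) ∧ ∀ t ∈ I, EqOn (u t) (F t) (Ioi 0) := by
  obtain ⟨U, hU, hext⟩ := hu.equivariant
  have hslice (t) (ht : t ∈ I) : Continuous (U t) :=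
    hU.continuousOn.comp_continuous (f := fun x : ℝ × ℝ => (t, x)) (by fun_prop)
      fun x => ⟨ht, mem_univ x⟩
  refine ⟨fun t r => U t (r, 0), ?_, fun t ht => ?_, fun t ht => ?_⟩
  · exact hU.comp (f := fun p : ℝ × ℝ => (p.1, (p.2, 0))) (by fun_prop)
      fun p hp => ⟨hp.1, mem_univ _⟩
  · exact IsEquivariantExtension.apply_zero (hext t ht) hm (hslice t ht)
  · exact IsEquivariantExtension.eqOn_axis (hext t ht)

lemma exists_h1msq_le_of_isCSS (hu : IsCSS m I u) {a b : ℝ} (hab : Icc a b ⊆ I) :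
    ∃ C, ∀ t ∈ Icc a b, H1msq m (u t) ≤ C := by
  obtain ⟨C, hC⟩ := hu.bounded (Icc a b) hab isCompact_Icc
  refine ⟨C ^ 2, fun t ht => (Real.sqrt_le_iff.1 ?_).2⟩
  exact (le_add_of_nonneg_left (Real.sqrt_nonneg _)).trans (hC t ht)

lemma exists_isCriticalFlow_of_isCSS {t₀ t₁ : ℝ} (hm : m ≠ 0) (hu : IsCSS m I u)
    (hsub : Ioo t₀ t₁ ⊆ I) (hmass : ∀ t ∈ Ioo t₀ t₁, L2sq (u t) = 8 * Real.pi * (m + 1))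
    (hgrad : ∀ t ∈ Ioo t₀ t₁, IntegrableOn (fun r => ‖deriv (u t) r‖ ^ 2 * r) (Ioi 0)) :
    ∃ F, IsCriticalFlow m t₀ t₁ F ∧ ∀ t ∈ Ioo t₀ t₁, EqOn (u t) (F t) (Ioi 0) := by
  obtain ⟨F, hsmooth, hzero, heq⟩ := exists_smoothOnStrip_of_isCSS hm hu
  have hF : SmoothOnStrip (Ioo t₀ t₁) F := hsmooth.mono (prod_mono hsub Subset.rfl)
  have hintF (t) (ht : t ∈ Ioo t₀ t₁) : IntegrableOn (fun r => ‖F t r‖ ^ 2 * r) (Ioi 0) :=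
    (integrableOn_norm_sq_mul_congr measurableSet_Ioi (heq t (hsub ht))).1
      (hu.integrable t (hsub ht))
  have hgradF (t) (ht : t ∈ Ioo t₀ t₁) :
      IntegrableOn (fun r => ‖deriv (F t) r‖ ^ 2 * r) (Ioi 0) :=
    (integrableOn_norm_sq_mul_congr measurableSet_Ioi
      ((heq t (hsub ht)).deriv isOpen_Ioi)).1 (hgrad t ht)
  refine ⟨F, ⟨hF, fun t ht => hzero t (hsub ht), hintF, fun t ht => ?_, fun t ht r hr => ?_,
    fun a b ha hb => ?_⟩, fun t ht => heq t (hsub ht)⟩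
  · have hL2 := hmass t ht
    rw [L2sq, setIntegral_norm_sq_mul_congr measurableSet_Ioi (heq t (hsub ht))] at hL2
    exact mul_left_cancel₀ Real.two_pi_pos.ne' (hL2.trans (by ring))
  · exact (cssEq_congr isOpen_Ioo (fun t ht => heq t (hsub ht)) ht hr).1 (hu.eq t (hsub ht) r hr)
  · have hab : Icc a b ⊆ Ioo t₀ t₁ := Icc_subset_Ioo ha hb
    obtain ⟨C, hC⟩ := exists_h1msq_le_of_isCSS hu (hab.trans hsub)
    refine ⟨C / (2 * Real.pi), fun t ht => ⟨hgradF t (hab ht), ?_⟩⟩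
    rw [le_div_iff₀' Real.two_pi_pos]
    refine (two_pi_mul_integral_norm_deriv_sq_le_h1msq m
      ((hF.contDiff (hab ht)).of_le (mod_cast le_top)) (hzero t (hsub (hab ht)))
      (hintF t (hab ht)) (hgradF t (hab ht))).trans ?_
    rw [← h1msq_congr (heq t (hsub (hab ht)))]
    exact hC t ht

end OfIsCSS

/-! ### The localized virial functional -/

lemma lintegral_ofReal_sqrt_mul_sqrt_le {α : Type*} [MeasurableSpace α] {μ : Measure α}
    {f g : α → ℝ} (hf : AEMeasurable f μ) (hg : AEMeasurable g μ) :
    ∫⁻ a, ENNReal.ofReal (√(f a) * √(g a)) ∂μ ≤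
      (∫⁻ a, ENNReal.ofReal (f a) ∂μ) ^ (1 / 2 : ℝ) *
        (∫⁻ a, ENNReal.ofReal (g a) ∂μ) ^ (1 / 2 : ℝ) := by
  have hsq (x : ℝ) : ENNReal.ofReal √x ^ (2 : ℝ) = ENNReal.ofReal x := by
    rw [ENNReal.rpow_two, ← ENNReal.ofReal_pow (Real.sqrt_nonneg x), Real.sq_sqrt',
      ENNReal.ofReal_max, ENNReal.ofReal_zero, max_eq_left zero_le]
  simpa only [hsq, Pi.mul_apply, ENNReal.ofReal_mul (Real.sqrt_nonneg _)] using
    ENNReal.lintegral_mul_le_Lp_mul_Lq μ Real.HolderConjugate.two_two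
      hf.sqrt.ennreal_ofReal hg.sqrt.ennreal_ofReal

lemma lintegral_Ioc_sq_mul_le (g : ℝ → ℝ≥0∞) {ρ : ℝ} (hρ : 0 ≤ ρ) (R : ℝ) :
    ∫⁻ r in Ioc 0 R, ENNReal.ofReal (r ^ 2) * g r ≤
      ENNReal.ofReal (ρ ^ 2) * (∫⁻ r in Ioi 0, g r) +
        ENNReal.ofReal (R ^ 2) * ∫⁻ r in Ioi ρ, g r := by
  have hpiece {a b : ℝ} (ha : 0 ≤ a) : ∫⁻ r in Ioc a b, ENNReal.ofReal (r ^ 2) * g r ≤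
      ENNReal.ofReal (b ^ 2) * ∫⁻ r in Ioi a, g r := by
    rw [← lintegral_const_mul' _ _ ENNReal.ofReal_ne_top]
    refine (setLIntegral_mono' measurableSet_Ioc fun r hr => ?_).trans
      (lintegral_mono_set Ioc_subset_Ioi_self)
    have := ha.trans hr.1.le
    gcongr
    exact hr.2
  calc ∫⁻ r in Ioc 0 R, ENNReal.ofReal (r ^ 2) * g r
      ≤ ∫⁻ r in Ioc 0 ρ ∪ Ioc ρ R, ENNReal.ofReal (r ^ 2) * g r :=
        lintegral_mono_set Ioc_subset_Ioc_union_Ioc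
    _ ≤ (∫⁻ r in Ioc 0 ρ, ENNReal.ofReal (r ^ 2) * g r) +
          ∫⁻ r in Ioc ρ R, ENNReal.ofReal (r ^ 2) * g r := lintegral_union_le _ _ _
    _ ≤ _ := add_le_add (hpiece le_rfl) (hpiece hρ)

/-- The part of `∂_r f` parallel to `f` does not contribute to the imaginary part. -/
lemma im_conj_mul_deriv (m : ℕ) (f : ℝ → ℂ) (r : ℝ) :
    ((starRingEnd ℂ) (f r) * ((r : ℂ) * deriv f r)).im =
      r * imInner (f r) (bogomolny m f r) := by
  rw [bogomolny, map_sub, imInner_smul_self, sub_zero, imInner_apply, mul_left_comm,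
    Complex.im_ofReal_mul]

lemma lintegral_virial_le {m : ℕ} {f : ℝ → ℂ} {K : ℝ} (hf : ContDiff ℝ 1 f)
    (hv : RadialL2Le (bogomolny m f) K) (R : ℝ) :
    ∫⁻ r in Ioc 0 R, ‖((starRingEnd ℂ) (f r) * ((r : ℂ) * deriv f r)).im * r‖ₑ ≤
      (∫⁻ r in Ioc 0 R, ENNReal.ofReal (r ^ 2) * ENNReal.ofReal (‖f r‖ ^ 2 * r)) ^ (1 / 2 : ℝ) *
        ENNReal.ofReal K ^ (1 / 2 : ℝ) := by
  have hpoint (r) (hr : r ∈ Ioc 0 R) :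
      ‖((starRingEnd ℂ) (f r) * ((r : ℂ) * deriv f r)).im * r‖ₑ ≤
        ENNReal.ofReal (√(r ^ 2 * (‖f r‖ ^ 2 * r)) * √(‖bogomolny m f r‖ ^ 2 * r)) := by
    have hr0 : 0 < r := hr.1
    rw [im_conj_mul_deriv m, Real.enorm_eq_ofReal_abs, abs_mul, abs_mul, abs_of_pos hr0,
      ← Real.sqrt_mul (by positivity)]
    refine ENNReal.ofReal_le_ofReal (Real.le_sqrt_of_sq_le ?_)
    calc (r * |imInner (f r) (bogomolny m f r)| * r) ^ 2
        ≤ (r * (‖f r‖ * ‖bogomolny m f r‖) * r) ^ 2 := by gcongr; exact abs_imInner_le _ _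
      _ = r ^ 2 * (‖f r‖ ^ 2 * r) * (‖bogomolny m f r‖ ^ 2 * r) := by ring
  have hmeas : AEMeasurable (fun r => ‖bogomolny m f r‖ ^ 2 * r) (volume.restrict (Ioc 0 R)) :=
    (hv.integrableOn.mono_set Ioc_subset_Ioi_self).aemeasurable
  have := hf.continuous
  refine (setLIntegral_mono' measurableSet_Ioc hpoint).trans
    ((lintegral_ofReal_sqrt_mul_sqrt_le (by fun_prop) hmeas).trans ?_)
  simp only [fun r => ENNReal.ofReal_mul (q := ‖f r‖ ^ 2 * r) (sq_nonneg r)]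
  gcongr
  exact (lintegral_mono_set Ioc_subset_Ioi_self).trans hv.lintegral_le

namespace IsCriticalFlow

variable {m : ℕ} {t₀ t₁ : ℝ} {F : ℝ → ℝ → ℂ}

lemma tendsto_tailMass (h : IsCriticalFlow m t₀ t₁ F) (hm : 1 ≤ m) (ht : t₀ < t₁)
    (hblow : Tendsto (fun t => ∫ r in Ioi 0, ‖deriv (F t) r‖ ^ 2 * r) (𝓝[<] t₁) atTop)
    {ρ : ℝ} (hρ : 0 < ρ) :
    Tendsto (fun t => ∫ r in Ioi ρ, ‖F t r‖ ^ 2 * r) (𝓝[<] t₁) (𝓝 0) := by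
  obtain ⟨s, hs⟩ := exists_between ht
  obtain ⟨K, hK⟩ := h.exists_radialL2Le_bogomolny hs
  refine tendsto_order.2 ⟨fun a ha => Eventually.of_forall fun t => ha.trans_le
    (setIntegral_nonneg measurableSet_Ioi fun r hr => ?_), fun η hη => ?_⟩
  · exact mul_nonneg (sq_nonneg _) (hρ.trans hr).le
  obtain ⟨Λ, hΛ⟩ := IsCriticalProfile.exists_integral_norm_deriv_sq_le hm K hρ (half_pos hη)
  filter_upwards [hblow.eventually_gt_atTop Λ, Ioo_mem_nhdsLT hs.2] with t hgrad hst
  have htI : t ∈ Ioo t₀ t₁ := ⟨hs.1.trans hst.1, hst.2⟩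
  obtain ⟨K', hK'⟩ := h.exists_radialL2Le_deriv t t htI.1 htI.2
  refine lt_of_le_of_lt (not_lt.1 fun htail => hgrad.not_ge ?_) (half_lt_self hη)
  exact hΛ _ (h.isCriticalProfile htI) (hK t ⟨hst.1.le, hst.2⟩)
    (hK' t ⟨le_rfl, le_rfl⟩).integrableOn htail

lemma tendsto_secondMoment (h : IsCriticalFlow m t₀ t₁ F) (hm : 1 ≤ m) (ht : t₀ < t₁)
    (hblow : Tendsto (fun t => ∫ r in Ioi 0, ‖deriv (F t) r‖ ^ 2 * r) (𝓝[<] t₁) atTop) (R : ℝ) :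
    Tendsto (fun t => ∫⁻ r in Ioc 0 R, ENNReal.ofReal (r ^ 2) * ENNReal.ofReal (‖F t r‖ ^ 2 * r))
      (𝓝[<] t₁) (𝓝 0) := by
  refine ENNReal.tendsto_nhds_zero.2 fun ε hε => ?_
  have hε2 : 0 < ε / 2 := ENNReal.half_pos hε.ne'
  have hnear : Tendsto (fun ρ : ℝ => ENNReal.ofReal (ρ ^ 2) * ENNReal.ofReal (4 * (m + 1)))
      (𝓝[>] 0) (𝓝 0) := by
    have hcont : Continuous fun ρ : ℝ => ENNReal.ofReal (ρ ^ 2 * (4 * (m + 1))) :=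
      ENNReal.continuous_ofReal.comp (by fun_prop)
    simp only [← ENNReal.ofReal_mul (sq_nonneg _)]
    exact (hcont.tendsto' 0 0 (by simp)).mono_left nhdsWithin_le_nhds
  obtain ⟨ρ, hρε, hρ : 0 < ρ⟩ :=
    ((ENNReal.tendsto_nhds_zero.1 hnear _ hε2).and self_mem_nhdsWithin).exists
  have hfar : Tendsto (fun t => ENNReal.ofReal (R ^ 2) *
      ENNReal.ofReal (∫ r in Ioi ρ, ‖F t r‖ ^ 2 * r)) (𝓝[<] t₁) (𝓝 0) := by
    simp only [← ENNReal.ofReal_mul (sq_nonneg R)]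
    simpa using ENNReal.tendsto_ofReal ((h.tendsto_tailMass hm ht hblow hρ).const_mul (R ^ 2))
  filter_upwards [ENNReal.tendsto_nhds_zero.1 hfar _ hε2, Ioo_mem_nhdsLT ht] with t hfarε htI
  have hL2 : RadialL2Le (F t) (4 * (m + 1)) := ⟨h.integrableOn t htI, (h.integral_eq t htI).le⟩
  have htail : ENNReal.ofReal (∫ r in Ioi ρ, ‖F t r‖ ^ 2 * r) =
      ∫⁻ r in Ioi ρ, ENNReal.ofReal (‖F t r‖ ^ 2 * r) :=
    ofReal_integral_eq_lintegral_ofReal (hL2.integrableOn_Ioi hρ.le)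
      (ae_restrict_of_ae_restrict_of_subset (Ioi_subset_Ioi hρ.le) (ae_nonneg_norm_sq_mul (F t)))
  calc _ ≤ _ := lintegral_Ioc_sq_mul_le _ hρ.le R
    _ ≤ ε / 2 + ε / 2 := by
      gcongr
      · exact (mul_le_mul_right hL2.lintegral_le _).trans hρε
      · rwa [← htail]
    _ = ε := ENNReal.add_halves ε

theorem tendsto_virial (h : IsCriticalFlow m t₀ t₁ F) (hm : 1 ≤ m) (ht : t₀ < t₁)
    (hblow : Tendsto (fun t => ∫ r in Ioi 0, ‖deriv (F t) r‖ ^ 2 * r) (𝓝[<] t₁) atTop) (R : ℝ) :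
    Tendsto (fun t => ∫⁻ r in Ioc 0 R,
        ‖((starRingEnd ℂ) (F t r) * ((r : ℂ) * deriv (F t) r)).im * r‖ₑ) (𝓝[<] t₁) (𝓝 0) := by
  obtain ⟨s, hs⟩ := exists_between ht
  obtain ⟨K, hK⟩ := h.exists_radialL2Le_bogomolny hs
  have hsqrt := ENNReal.Tendsto.mul_const (b := ENNReal.ofReal K ^ (1 / 2 : ℝ))
    ((h.tendsto_secondMoment hm ht hblow R).ennrpow_const (1 / 2)) (.inr (by finiteness))
  rw [ENNReal.zero_rpow_of_pos one_half_pos, zero_mul] at hsqrt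
  refine tendsto_of_tendsto_of_tendsto_of_le_of_le' tendsto_const_nhds hsqrt
    (Eventually.of_forall fun _ => zero_le) ?_
  filter_upwards [Ioo_mem_nhdsLT hs.2] with t hst
  exact lintegral_virial_le (h.isCriticalProfile ⟨hs.1.trans hst.1, hst.2⟩).contDiff
    (hK t ⟨hst.1.le, hst.2⟩) R

end IsCriticalFlow

lemma enorm_setIntegral_cutoff_mul_le {φ g : ℝ → ℝ} {R : ℝ} (hR : 0 < R)
    (hφ : ∀ x, 0 ≤ x → |φ x| ≤ 1) (hφ_zero : ∀ x, 2 ≤ x → φ x = 0) :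
    ‖∫ r in Ioi 0, φ (r / R) * g r‖ₑ ≤ ∫⁻ r in Ioc 0 (2 * R), ‖g r‖ₑ := by
  refine (enorm_integral_le_lintegral_enorm _).trans ?_
  rw [← Ioc_union_Ioi_eq_Ioi (by positivity : 0 ≤ 2 * R)]
  refine (lintegral_union_le _ _ _).trans (le_of_eq_of_le ?_ (setLIntegral_mono' (f := fun r =>
    ‖φ (r / R) * g r‖ₑ) measurableSet_Ioc fun r hr => ?_))
  · rw [setLIntegral_congr_fun (g := 0) measurableSet_Ioi fun r hr => ?_]
    · simp
    · simp [hφ_zero (r / R) ((le_div_iff₀ hR).2 (le_of_lt hr))]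
  · rw [enorm_mul, Real.enorm_eq_ofReal_abs (φ _)]
    exact mul_le_of_le_one_left' (ENNReal.ofReal_le_one.2 (hφ _ (div_pos hr.1 hR).le))

lemma tendsto_setIntegral_cutoff_mul {ι : Type*} {l : Filter ι} {φ : ℝ → ℝ} {g : ι → ℝ → ℝ}
    {R : ℝ} (hR : 0 < R) (hφ : ∀ x, 0 ≤ x → |φ x| ≤ 1) (hφ_zero : ∀ x, 2 ≤ x → φ x = 0)
    (hg : Tendsto (fun t => ∫⁻ r in Ioc 0 (2 * R), ‖g t r‖ₑ) l (𝓝 0)) :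
    Tendsto (fun t => ∫ r in Ioi 0, φ (r / R) * g t r) l (𝓝 0) :=
  tendsto_zero_iff_enorm_tendsto_zero.2 <|
    tendsto_of_tendsto_of_tendsto_of_le_of_le tendsto_const_nhds hg (fun _ => zero_le)
      fun _ => enorm_setIntegral_cutoff_mul_le hR hφ hφ_zero

end CSS

end

open Topology

open CSS in
theorem stmt11_general (m : ℕ) (hm : 1 ≤ m) {a b : ℝ} (hab : a < b) (u : ℝ → ℝ → ℂ)
    (hu : IsCSS m (Ioo a b) u)
    (hmass : ∀ t ∈ Ioo a b, L2sq (u t) = 8 * Real.pi * (m + 1))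
    (hblow : Tendsto (fun t => √(2 * Real.pi * ∫ r in Ioi 0, ‖deriv (u t) r‖ ^ 2 * r))
      (𝓝[Ioo a b] b) atTop) (R : ℝ) :
    Tendsto (fun t => ∫⁻ r in Ioc 0 R,
        ‖((starRingEnd ℂ) (u t r) * ((r : ℂ) * deriv (u t) r)).im * r‖ₑ)
      (𝓝[Ioo a b] b) (𝓝 0) := by
  rw [nhdsWithin_Ioo_eq_nhdsLT hab] at hblow ⊢
  have hgrad : Tendsto (fun t => ∫ r in Ioi 0, ‖deriv (u t) r‖ ^ 2 * r) (𝓝[<] b) atTop := by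
    rwa [← tendsto_const_mul_atTop_of_pos Real.two_pi_pos, ← Real.comap_sqrt_atTop,
      tendsto_comap_iff]
  obtain ⟨c, ⟨hac, hcb⟩, hinteg⟩ := (mem_nhdsLT_iff_exists_mem_Ico_Ioo_subset hab).1
    (hgrad.eventually_ne_atTop 0)
  have hsub : Ioo c b ⊆ Ioo a b := Ioo_subset_Ioo_left hac
  obtain ⟨F, hF, heq⟩ := exists_isCriticalFlow_of_isCSS (Nat.one_le_iff_ne_zero.1 hm) hu hsub
    (fun t ht => hmass t (hsub ht)) fun t ht => .of_integral_ne_zero (hinteg ht)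
  have hnear : ∀ᶠ t in 𝓝[<] b, EqOn (u t) (F t) (Ioi 0) := by
    filter_upwards [Ioo_mem_nhdsLT hcb] using heq
  have hgradF : Tendsto (fun t => ∫ r in Ioi 0, ‖deriv (F t) r‖ ^ 2 * r)
      (𝓝[<] b) atTop := hgrad.congr' <| hnear.mono fun t ht =>
    setIntegral_norm_sq_mul_congr measurableSet_Ioi (ht.deriv isOpen_Ioi)
  refine (hF.tendsto_virial hm hcb hgradF R).congr' (hnear.mono fun t ht => ?_)
  refine setLIntegral_congr_fun measurableSet_Ioc fun r hr => ?_
  simp only [ht hr.1, ht.deriv isOpen_Ioi hr.1]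

/-- the localized virial functional vanishes at the blowup time. -/
theorem stmt11 (m : ℕ) (hm : 1 ≤ m) (u : ℝ → ℝ → ℂ)
    (hu : IsCSS m (Set.Ioo (-1 : ℝ) 0) u)
    (hmass : ∀ t ∈ Set.Ioo (-1 : ℝ) 0, L2sq (u t) = 8 * Real.pi * (m + 1))
    (hblow : Tendsto
      (fun t => Real.sqrt (2 * Real.pi * ∫ r in Set.Ioi (0:ℝ), ‖deriv (u t) r‖ ^ 2 * r))
      (nhdsWithin 0 (Set.Ioo (-1 : ℝ) 0)) atTop) :
    ∀ R : ℝ, 0 < R → ∀ φ : ℝ → ℝ, ContDiff ℝ (⊤ : ℕ∞) φ →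
      (∀ x : ℝ, 0 ≤ x → φ x ∈ Set.Icc (0:ℝ) 1) →
      (∀ x ∈ Set.Icc (0:ℝ) 1, φ x = 1) → (∀ x : ℝ, 2 ≤ x → φ x = 0) →
      Tendsto (fun t => 2 * Real.pi * ∫ r in Set.Ioi (0:ℝ),
          φ (r / R) * ((starRingEnd ℂ) (u t r) * ((r : ℂ) * deriv (u t) r)).im * r)
        (nhdsWithin 0 (Set.Ioo (-1 : ℝ) 0)) (nhds 0) := by
  intro R hR φ _ hφ _ hφ_zero
  have hφ_abs : ∀ x, 0 ≤ x → |φ x| ≤ 1 := fun x hx => by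
    rw [abs_of_nonneg (hφ x hx).1]; exact (hφ x hx).2
  simpa only [mul_assoc, mul_zero] using (CSS.tendsto_setIntegral_cutoff_mul hR hφ_abs hφ_zero
    (stmt11_general m hm (by norm_num) u hu hmass hblow (2 * R))).const_mul (2 * Real.pi)
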